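/- Let Γ = ℤ^6 ⋊ ℤ/12 where the generator of ℤ/12 acts on ℤ^6 by the matrix [[0,0,0,0,0,-1],[1,0,0,0,0,-1],[0,1,0,0,0,0],[0,0,1,0,0,1],[0,0,0,1,0,0],[0,0,0,0,1,-1]]. Then H^1(Γ,ℤ) = 0; H^2(Γ,ℤ) ≅ ℤ^3 ⊕ ℤ/12 ⊕ ℤ/3; H^3(Γ,ℤ) ≅ ℤ^2; H^4(Γ,ℤ) ≅ ℤ^3 ⊕ ℤ/12 ⊕ ℤ/6 ⊕ (ℤ/3)^3; H^5(Γ,ℤ) ≅ (ℤ/2)^2; H^6(Γ,ℤ) ≅ ℤ ⊕ ℤ/12 ⊕ (ℤ/6)^2 ⊕ (ℤ/3)^5; H^i(Γ,ℤ) ≅ (ℤ/2)^2 for all odd i ≥ 7; and H^i(Γ,ℤ) ≅ (ℤ/12)^2 ⊕ (ℤ/6)^2 ⊕ (ℤ/3)^5 for all even i ≥ 8. -/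

import Mathlib

open Matrix

namespace Crystal

/-- The lattice `ℤ^n`, written multiplicatively so that it can be a factor of a semidirect
product of groups. -/
abbrev Lat (n : ℕ) : Type := Multiplicative (Fin n → ℤ)

/-- The invertible integer matrix determined by `M` with `M ^ (m + 1) = 1`. -/
def matUnit {n : ℕ} (M : Matrix (Fin n) (Fin n) ℤ) (m : ℕ) (hm : M ^ (m + 1) = 1) :
    (Matrix (Fin n) (Fin n) ℤ)ˣ :=
  ⟨M, M ^ m, by rw [← pow_succ']; exact hm, by rw [← pow_succ]; exact hm⟩

/-- Linear automorphisms of `ℤ^n` as multiplicative automorphisms of the multiplicative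
version of `ℤ^n`. -/
def linToAut (n : ℕ) : ((Fin n → ℤ) ≃ₗ[ℤ] (Fin n → ℤ)) →* MulAut (Lat n) :=
  MonoidHom.mk' (fun e => AddEquiv.toMultiplicative e.toAddEquiv) (fun _ _ => rfl)

/-- An invertible integer matrix acts on the (multiplicative) lattice `ℤ^n` by (left)
matrix-vector multiplication. -/
def glToAut (n : ℕ) : (Matrix (Fin n) (Fin n) ℤ)ˣ →* MulAut (Lat n) :=
  (linToAut n).comp
    ((LinearMap.GeneralLinearGroup.generalLinearEquiv ℤ (Fin n → ℤ)).toMonoidHom.comp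
      (Matrix.GeneralLinearGroup.toLin).toMonoidHom)

/-- The homomorphism from `ℤ/m` (written multiplicatively) to a group `G` sending the
generator `1` to a chosen element `α` satisfying `α ^ m = 1`. -/
def zmodHom {G : Type*} [Group G] (m : ℕ) [NeZero m] (α : G) (hα : α ^ m = 1) :
    Multiplicative (ZMod m) →* G :=
  MonoidHom.mk' (fun g => α ^ (g.toAdd.val)) (by
    intro a b
    show α ^ (ZMod.val (a.toAdd + b.toAdd)) = α ^ (ZMod.val a.toAdd) * α ^ (ZMod.val b.toAdd)
    rw [ZMod.val_add, ← pow_eq_pow_mod _ hα, pow_add])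

/-- The action of `ℤ/q` on the lattice `ℤ^n` in which the generator `1` of `ℤ/q` acts by left
multiplication by the integer matrix `M`; `M` is required to satisfy `M ^ q = 1`. -/
def matAction {n : ℕ} (q : ℕ) [NeZero q] (M : Matrix (Fin n) (Fin n) ℤ)
    (hq : M ^ q = 1) : Multiplicative (ZMod q) →* MulAut (Lat n) :=
  zmodHom q (glToAut n (matUnit M (q - 1) (by
      rwa [Nat.sub_add_cancel (Nat.one_le_iff_ne_zero.2 (NeZero.ne q))])))
    (by
      rw [← map_pow]
      convert map_one (glToAut n)
      ext i j
      rw [Units.val_pow_eq_pow_val]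
      simp [matUnit, hq])

/-- The crystallographic group `ℤ^n ⋊ ℤ/q` in which the generator `1` of `ℤ/q` acts on the
lattice `ℤ^n` by left multiplication by the integer matrix `M` (with `M ^ q = 1`). -/
abbrev Crys {n : ℕ} (q : ℕ) [NeZero q] (M : Matrix (Fin n) (Fin n) ℤ) (hq : M ^ q = 1) : Type :=
  SemidirectProduct (Lat n) (Multiplicative (ZMod q)) (matAction q M hq)


open CategoryTheory groupCohomology

variable {k : Type} [CommRing k]

lemma comp_contractNth {G H : Type*} [Monoid G] [Monoid H] (f : G →* H) {n : ℕ}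
    (j : Fin (n + 1)) (g : Fin (n + 1) → G) (i : Fin n) :
    f (Fin.contractNth j (· * ·) g i) = Fin.contractNth j (· * ·) (fun l => f (g l)) i := by
  rcases lt_trichotomy (i : ℕ) j with h | h | h
  · rw [Fin.contractNth_apply_of_lt _ _ _ _ h, Fin.contractNth_apply_of_lt _ _ _ _ h]
  · rw [Fin.contractNth_apply_of_eq _ _ _ _ h, Fin.contractNth_apply_of_eq _ _ _ _ h,
      _root_.map_mul]
  · rw [Fin.contractNth_apply_of_gt _ _ _ _ h, Fin.contractNth_apply_of_gt _ _ _ _ h]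

/-- The map of inhomogeneous cochain complexes induced (contravariantly in the group,
covariantly in the coefficients) by a group homomorphism `f : H →* G` together with a
compatible linear map `τ : A → B` of coefficients. -/
def cochainsMap {G H : Type} [Group G] [Group H] (A : Rep k G) (B : Rep k H)
    (f : H →* G) (τ : A →ₗ[k] B)
    (hcomp : ∀ (h : H) (a : A), τ (A.ρ (f h) a) = B.ρ h (τ a)) :
    inhomogeneousCochains A ⟶ inhomogeneousCochains B where
  f n := ModuleCat.ofHom
    { toFun := fun F v => τ (F (fun i => f (v i)))
      map_add' := fun x y => by funext v; simp
      map_smul' := fun r x => by funext v; simp }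
  comm' i j hij := by
    have hij' : i + 1 = j := hij
    subst hij'
    rw [inhomogeneousCochains.d_def, inhomogeneousCochains.d_def]
    ext F v
    show (inhomogeneousCochains.d B i).hom (fun w => τ (F (fun l => f (w l)))) v
      = τ ((inhomogeneousCochains.d A i).hom F (fun l => f (v l)))
    simp only [inhomogeneousCochains.d_hom_apply, map_add, map_sum, _root_.map_smul]
    congr 1
    · exact (hcomp (v 0) _).symm
    · refine Finset.sum_congr rfl fun j' _ => ?_
      have hc : (fun l => f (j'.contractNth (· * ·) v l))
          = j'.contractNth (· * ·) (fun l => f (v l)) := by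
        funext l
        exact comp_contractNth f j' v l
      rw [hc]

lemma cochainsMap_eq_id {G : Type} [Group G] (A : Rep k G) (f : G →* G) (τ : A →ₗ[k] A)
    (hcomp : ∀ (h : G) (a : A), τ (A.ρ (f h) a) = A.ρ h (τ a))
    (hf : ∀ x, f x = x) (hτ : ∀ a, τ a = a) :
    cochainsMap A A f τ hcomp = 𝟙 _ := by
  apply HomologicalComplex.Hom.ext
  funext n
  ext F v
  show τ (F (fun i => f (v i))) = F v
  simp only [hf, hτ]

lemma cochainsMap_comp {G H K : Type} [Group G] [Group H] [Group K]
    (A : Rep k G) (B : Rep k H) (C : Rep k K)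
    (f₁ : H →* G) (τ₁ : A →ₗ[k] B) (h₁ : ∀ (h : H) (a : A), τ₁ (A.ρ (f₁ h) a) = B.ρ h (τ₁ a))
    (f₂ : K →* H) (τ₂ : B →ₗ[k] C) (h₂ : ∀ (h : K) (a : B), τ₂ (B.ρ (f₂ h) a) = C.ρ h (τ₂ a))
    (f₃ : K →* G) (τ₃ : A →ₗ[k] C) (h₃ : ∀ (h : K) (a : A), τ₃ (A.ρ (f₃ h) a) = C.ρ h (τ₃ a))
    (hf : ∀ x, f₁ (f₂ x) = f₃ x) (hτ : ∀ a, τ₂ (τ₁ a) = τ₃ a) :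
    cochainsMap A B f₁ τ₁ h₁ ≫ cochainsMap B C f₂ τ₂ h₂ = cochainsMap A C f₃ τ₃ h₃ := by
  apply HomologicalComplex.Hom.ext
  funext n
  ext F v
  show τ₂ (τ₁ (F (fun i => f₁ (f₂ (v i))))) = τ₃ (F (fun i => f₃ (v i)))
  simp only [hf]
  exact hτ _

/-- Given an action `φ` of a group `G` on a group `L` and a representation `ψ` of `G` on a
`k`-module `V`, this is `H^j(L, V)` (with `L` acting trivially on the coefficients `V`),
endowed with the `G`-action functorially induced by the action of `G` on `L` and on `V`:
`g` acts via the conjugation automorphism `φ g⁻¹` of `L` and via `ψ g` on `V`. -/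
noncomputable def cohRep {G L V : Type} [Group G] [Group L] [AddCommGroup V] [Module k V]
    (φ : G →* MulAut L) (ψ : Representation k G V) (j : ℕ) : Rep k G :=
  Rep.of (X := groupCohomology (Rep.trivial k L V) j)
    { toFun := fun g => ModuleCat.Hom.hom <| HomologicalComplex.homologyMap
        (cochainsMap (Rep.trivial k L V) (Rep.trivial k L V) (φ g⁻¹).toMonoidHom (ψ g)
          (fun _ _ => rfl)) j
      map_one' := by
        have h := cochainsMap_eq_id (Rep.trivial k L V) (φ 1⁻¹).toMonoidHom (ψ 1) (fun _ _ => rfl)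
          (fun x => by simp) (fun a => by simp)
        refine (congrArg (fun c => ModuleCat.Hom.hom (HomologicalComplex.homologyMap c j)) h).trans ?_
        exact congrArg ModuleCat.Hom.hom (HomologicalComplex.homologyMap_id _ j)
      map_mul' := fun g₁ g₂ => by
        have h := cochainsMap_comp (Rep.trivial k L V) (Rep.trivial k L V) (Rep.trivial k L V)
          (φ g₂⁻¹).toMonoidHom (ψ g₂) (fun _ _ => rfl)
          (φ g₁⁻¹).toMonoidHom (ψ g₁) (fun _ _ => rfl)
          (φ (g₁ * g₂)⁻¹).toMonoidHom (ψ (g₁ * g₂)) (fun _ _ => rfl)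
          (fun x => by simp [_root_.mul_inv_rev]) (fun a => by simp)
        rw [← h, HomologicalComplex.homologyMap_comp]
        rfl }


/-- `H^i(G, H^j(L, ℤ))`: the `i`-th cohomology of the cyclic group `ℤ/q` with coefficients in
the `j`-th cohomology of the lattice `ℤ^n` (with trivial `ℤ` coefficients), where the
`ℤ/q`-action on `H^j(ℤ^n, ℤ)` is the one functorially induced by the matrix action on the
lattice. -/
noncomputable abbrev cohOfCoh {n : ℕ} (q : ℕ) [NeZero q] (M : Matrix (Fin n) (Fin n) ℤ)
    (hq : M ^ q = 1) (i j : ℕ) : ModuleCat ℤ :=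
  groupCohomology
    (cohRep (matAction q M hq) (1 : Representation ℤ (Multiplicative (ZMod q)) ℤ) j) i

/-- `H^k(Γ, ℤ)` for `Γ = ℤ^n ⋊ ℤ/q`, with trivial coefficients `ℤ`. -/
noncomputable abbrev cohCrys {n : ℕ} (q : ℕ) [NeZero q] (M : Matrix (Fin n) (Fin n) ℤ)
    (hq : M ^ q = 1) (k : ℕ) : ModuleCat ℤ :=
  groupCohomology (Rep.trivial ℤ (Crys q M hq) ℤ) k

end Crystal

/-- The holonomy matrix. -/
def holM : Matrix (Fin 6) (Fin 6) ℤ := !![0, 0, 0, 0, 0, -1; 1, 0, 0, 0, 0, -1; 0, 1, 0, 0, 0, 0; 0, 0, 1, 0, 0, 1; 0, 0, 0, 1, 0, 0; 0, 0, 0, 0, 1, -1]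

lemma holM_pow : holM ^ 12 = 1 := by decide

/-- `H^k(ℤ^6 ⋊ ℤ/12, ℤ)`, where the generator of `ℤ/12` acts on `ℤ^6` by left
multiplication by the matrix `holM`. -/
noncomputable abbrev H (k : ℕ) : ModuleCat ℤ := Crystal.cohCrys 12 holM holM_pow k

/-- `H^i(ℤ/12, H^j(ℤ^6, ℤ))`, with the functorially induced action on coefficients. -/
noncomputable abbrev Hc (i j : ℕ) : ModuleCat ℤ := Crystal.cohOfCoh 12 holM holM_pow i j

namespace Z12

def sT : List (List ℕ) := [
  [9162596361],
  [9162596393],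
  [9162596425],
  [9162596457],
  [9162596489],
  [9162596521],
  [9162596553],
  [9162596585],
  [9162596425, 9162857495],
  [9162596457, 9162857529, 9162841337, 9162857719, 9162840311, 9162856697],
  [9162857561],
  [9162857591],
  [9162596551, 9162857625, 9162579193, 9162840311, 9166773495, 9167034617],
  [9162596583, 9162857655],
  [9162857687],
  [9162857721],
  [9162596873],
  [9162596905],
  [9162596937],
  [9162596969],
  [9162597001],
  [9162597033],
  [9162597065],
  [9162597097],
  [9162596937, 9162858007],
  [9162596969, 9162858041, 9162841849, 9162858231, 9162840823, 9162857209],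
  [9162858073],
  [9162858103],
  [9162597063, 9162858137, 9162579705, 9162840823, 9166774007, 9167035129],
  [9162597095, 9162858167],
  [9162858199],
  [9162858233],
  [8088855047, 8021745927, 8021745689, 8021745783, 8025923817],
  [8088855079, 8021745959, 8021745719, 8021745913, 8021728505, 8021729527, 8021744887],
  [8088855111, 8021745991, 8021745751],
  [8088855143, 8021746023, 8021745785],
  [8088855175, 8021746055, 8021745815, 8025923833, 8021745913, 8021728505, 8021729527, 8025922807],
  [8088855207, 8021746087, 8021745849],
  [8088855239, 8021746119, 8021745881],
  [8088855271, 8021746151, 8021745911],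
  [8088855111, 8021745991, 8021745751, 8089116185, 8022007065, 8026184951],
  [8088855143, 8021746023, 8021745785, 8089116215, 8022007095, 8089100023, 8089116409, 8021990903, 8022007289, 8089099001, 8021989881, 8089115383, 8022006263],
  [8089116247, 8022007127],
  [8089116281, 8022007161],
  [8088855241, 8021746121, 8021745879, 8089116311, 8022007191, 8088837879, 8021728759, 8089099001, 8021989881, 8093032185, 8025923065, 8093293303, 8026184183],
  [8088855273, 8021746153, 8021745913, 8089116345, 8022007225],
  [8089116377, 8022007257],
  [8089116407, 8022007287],
  [8021746441, 8021746199, 8089132281, 8089115895, 8089377017, 8026183927, 8021746297, 9095749881, 9099665657, 9095487735, 8022023415, 8026201337, 10241039607, 9104121081, 9099926775, 10244955383, 10240777465, 9099648249, 9099649271, 8026202359, 8022008057, 8025924327],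
  [8021746473, 8021746233, 8021746423, 8021729015, 8021730041, 8021745401],
  [8021746505, 8021746265],
  [8021746537, 8021746295],
  [8021746569, 8021746329, 8025924343, 8021746423, 8021729015, 8021730041, 8025923321],
  [8021746601, 8021746359],
  [8021746633, 8021746391],
  [8021746665, 8021746425],
  [8021746505, 8021746265, 8022007575, 8026185465],
  [8021746537, 8021746295, 8022007609, 8021991417, 8022007799, 8021990391, 8022006777],
  [8022007641],
  [8022007671],
  [8021746631, 8021746393, 8022007705, 8021729273, 8021990391, 8025923575, 8026184697],
  [8021746663, 8021746423, 8022007735],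
  [8022007767],
  [8022007801]]

def rT : List (List ℕ) := [
  [],
  [9162595415, 9162596441],
  [9162580135, 9162596521],
  [9162595542, 9166773367, 9162579161, 9162579065, 9162611929, 9166789753, 9162596570, 9166774393, 9162580183, 9162580087, 9162612951, 9166790775, 9162580153, 9162596535],
  [9162595415, 9162857561],
  [],
  [9162580202, 9162841274, 9162579175, 9162579127, 9162842343, 9163103415, 9162841321, 9162596582, 9162857654, 9162595561, 9162595513, 9162858729, 9163119801, 9162857703, 9162595447, 9162857593],
  [9162580214, 9162579193, 9162842361, 9162841335, 9162596602, 9162595575, 9162858743, 9162857721],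
  [9162580135, 9166774441],
  [9162595542, 9166773366, 9162579161, 9162579065, 9166789849, 9170967673, 9166773463, 9162596570, 9166774394, 9162580183, 9162580087, 9166790871, 9170968695, 9166774489, 9162580153, 9166774455],
  [],
  [9162595577, 9162596599],
  [9162595542, 9166773366, 9162579161, 9162579065, 9166789849, 9170967673, 9166773463, 9162857690, 9167035514, 9162841303, 9162841207, 9167051991, 9171229815, 9167035609, 9162580199, 9166774505],
  [9162580217, 9166774519],
  [9162595574, 9162579193, 9166789881, 9166773495, 9162857722, 9162841335, 9167052023, 9167035641],
  [],
  [9229688057, 9229950199, 9229704439, 9229966586, 9162580218, 9162842359, 9162596598, 9162858745, 9162579190, 9162841337, 9162595577, 9162857719, 9229949177, 9229965559, 9229705319, 9229982873, 9229967527, 9234160695, 9229966487, 9166774441, 9229965399, 9162597479, 9162596457, 9162612825, 9162858551, 9162596409, 9162597575, 9162596553, 9162858649],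
  [9162595671, 9229704313, 9162596569, 9229981911, 9234159735, 9229965529, 9166789849, 9170967673, 9166773463, 9162595543, 9166773367, 9162596697, 9229982937, 9234160761, 9229966551, 9166790871, 9170968695, 9166774489, 9166774393, 9229967545, 9166774455, 9162597497, 9162596471],
  [9162580391, 9162580153, 9229705450, 9229966521, 9166775527, 9167036599, 9166774505, 9229950185, 9230211257, 9229949159, 9229949111, 9229689063, 9229950135, 9162596777, 9162596535, 9229721831, 9166791913, 9167052985, 9166790887, 9229966567, 9230227639, 9229965545, 9229965497, 9229965431, 9162612857, 9162597609, 9162596583, 9162858681],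
  [9162595798, 9229704438, 9166773623, 9162579417, 9229688057, 9162579321, 9162580214, 9162579193, 9162612185, 9229720825, 9166790009, 9162596826, 9166774649, 9162580439, 9162580343, 9162581241, 9162613207, 9166791031, 9162580409, 9162596791, 9162597623, 9162596601],
  [9162595671, 9229704313, 9162596569, 9229981911, 9234159735, 9229965529, 9166789849, 9170967673, 9166773463, 9162595543, 9166773367, 9162857817, 9229966455, 9230244057, 9234421881, 9230227671, 9167051991, 9171229815, 9167035609, 9162857689, 9167035513, 9229982937, 9229967591, 9234160761, 9229966551, 9166774505, 9162858617, 9162596471],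
  [9229967609, 9166774519],
  [9162580458, 9162580218, 9162841530, 9162579431, 9162579191, 9162579383, 9229704442, 9166774519, 9229688055, 9162842599, 9162842359, 9163103671, 9162841577, 9162841337, 9162596838, 9162596599, 9162857910, 9162595817, 9162595769, 9229720823, 9166790905, 9162858985, 9162858745, 9163120057, 9162857959, 9162595703, 9162857849, 9229982969, 9229966583],
  [9162580470, 9162579449, 9162842617, 9162841591, 9162596858, 9162595831, 9162858999, 9162857977],
  [9162580391, 9162580153, 9229705450, 9229966521, 9166775527, 9167036599, 9166774505, 9229950185, 9230211257, 9229949159, 9229949111, 9229689063, 9229950135, 9166774697, 9166774455, 9233899751, 9170969833, 9171230905, 9170968807, 9234144487, 9234405559, 9234143465, 9234143417, 9233883369, 9234144441, 9229965529, 9162597609, 9162596583, 9162612951, 9162858681, 9162596535],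
  [9162595798, 9229704438, 9166773622, 9166774522, 9162579417, 9229688057, 9162579321, 9162580214, 9162579193, 9229965561, 9166790105, 9233898745, 9170967929, 9166773719, 9233882359, 9166773495, 9162596826, 9166774650, 9166775543, 9162580439, 9162580343, 9162581241, 9229966583, 9166791127, 9170968951, 9166774745, 9162580409, 9166774711, 9162597623, 9162596601],
  [9229965561, 9162612983],
  [9162595833, 9162596855],
  [9162595798, 9229704438, 9166773622, 9166774523, 9162579417, 9229688057, 9162579321, 9162580214, 9162579193, 9229965561, 9166790105, 9233898745, 9170967929, 9170968823, 9166773719, 9233882359, 9166773495, 9162857946, 9229966585, 9167035770, 9167036663, 9162841559, 9162841463, 9162842361, 9162841335, 9230227703, 9167052247, 9234160887, 9171230071, 9167035865, 9167035641, 9162580455, 9166774761, 9162858743, 9162596601],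
  [9162580473, 9166774775],
  [9162595830, 9162579449, 9166790137, 9166773751, 9162857978, 9162841591, 9167052279, 9167035897],
  [],
  [10240761078, 10241023225, 10240777467, 10241039607, 10240760057, 10241022199, 10240776439, 10241038585, 10240498937, 10240515319, 9162579191, 9162841337, 9162595577, 9162857718, 9162840311, 10236583159, 9162856697, 10236321017, 10236338375, 10240778345, 10241039417, 10240793687, 10240777319, 10240516199, 10240777271, 9162856537, 10240499879, 9162858665, 9162596457, 9162874007, 9162857625, 9167051833],
  [9162595927, 9162595447, 10236599511, 9162873049, 9167050873, 9162856663, 10240515287, 10244693111, 10240498905, 10240498809, 10236337369, 10240515193, 9162596953, 10236600537, 9162874071, 9167051895, 9162857689, 10240516313, 10244694137, 10240499927, 10240499831, 10240499897, 9162858679],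
  [9162580647, 10236322025, 9162596582, 9162857655, 10240762089, 10241023161, 10240761063, 10240499943, 10240761015, 9162841319, 9163102391, 9162840297, 9162840249, 9162580201, 9162841273, 9162597033, 9162612969, 10240778471, 10241039543, 10240777449, 10240516329, 10240777401, 9162857705, 9163118777, 9162856679, 9162856631, 10240793719, 9162856569],
  [9162596054, 9162595578, 9166773879, 9162579673, 9162579191, 9162579577, 10236583161, 9162612441, 9162611959, 9166790265, 10236321015, 9162597082, 9166774905, 9162580695, 9162580599, 10236584183, 9162613463, 9166791287, 9162580665, 10240499961, 9162597047, 10240516343],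
  [9162595927, 9162595447, 10236599510, 10240777335, 9162873049, 9167050873, 9162856663, 10240515287, 10244693111, 10240498905, 10240498809, 10236337369, 10240515193, 9162858073, 9162857593, 10236861657, 9163135191, 9167313015, 9163118809, 10240777433, 10244955257, 10240761047, 10240760951, 10240499943, 9162858729, 9162874071, 9162857689, 9167051895],
  [10240499961, 9162858743],
  [9162580714, 9162841786, 10236583158, 9162579687, 9162579639, 10236321017, 9162595574, 9162579193, 9162842855, 9163103927, 10236845305, 9162841833, 9162597094, 9162858166, 9162596073, 9162596025, 9162611961, 9162859241, 9163120313, 9162858215, 9162595959, 9162858105, 9162874103, 9162857721],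
  [9162580726, 9162579705, 9162842873, 9162841847, 9162597114, 9162596087, 9162859255, 9162858233],
  [9162580647, 10236322025, 9162596582, 9162857655, 10240762089, 10241023161, 10240761063, 10240499943, 10240761015, 9162841319, 9163102391, 9162840297, 9162840249, 9162580201, 9162841273, 9166774953, 9166790889, 10244956391, 10245217463, 10244955369, 10244694249, 10244955321, 9167035625, 9167296697, 9167034599, 9167034551, 9166774503, 9167035575, 10240778471, 10241039543, 10240793817, 10240777449, 10240777401, 9162856663],
  [9162596054, 9162595578, 9166773878, 9162579673, 9162579191, 9162579577, 10236583161, 9162856695, 10236321015, 9166790361, 9166789879, 9170968185, 9166773975, 9166773497, 9162597082, 9166774906, 9162580695, 9162580599, 10236584183, 9162857721, 9166791383, 9170969207, 9166775001, 9162580665, 10240499961, 9166774967, 10244694263, 10240778489, 10240777463],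
  [10240793849, 9162856695],
  [9162596089, 9162597111],
  [9162596054, 9162595578, 9166773878, 9162579673, 9162579191, 9162579577, 10236583162, 9162856695, 10236321015, 9166790361, 9166789879, 9170968185, 9166773975, 9166773497, 9162858202, 9162857719, 9167036026, 9162841815, 9162841719, 10236845303, 9163118841, 9167052503, 9167052025, 9171230327, 9167036121, 9162580711, 9166775017, 10241039609, 10240777463],
  [9162580729, 9166775031],
  [9162596086, 9162579705, 9166790393, 9166774007, 9162858234, 9162841847, 9167052535, 9167036153],
  [],
  [9229688569, 9229950711, 9229704951, 9229967098, 9162580730, 9162842871, 9162597110, 9162859257, 9162579702, 9162841849, 9162596089, 9162858231, 10240761338, 10241023479, 10240777717, 10241039865, 10240760311, 10241022457, 10240776697, 10241038839, 10240499191, 10240515577, 9162579449, 9162841591, 9162595831, 9162857978, 9229949689, 9162840569, 10236583417, 9229966071, 9162856951, 10236321271, 9229705831, 9229982839, 9229982953, 9229966567, 10308148345, 10307886199, 9230227575, 9229966457, 10307625191, 10307608809, 10303447273, 9229983385, 9229982905, 10303724759, 9229999321, 10308164823, 10308163801, 10307902681, 9230244057, 9229982934, 9229968039, 9229983975, 9230245047,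 10308149481, 10308410553, 10308148455, 10307887335, 10308148406, 9230228711, 9230489783, 9230227689, 9230227641, 9229967593, 9230228665, 9234161207, 10307902583, 9234177145, 10312342647, 10312341625, 10312080505, 9234421881, 9234160759, 9229966999, 9229966519, 10303708377, 10308148441, 10308147415, 10307886295, 9230227671, 9229966553, 10307869881, 9166774953, 10240516329, 9166790889, 9167051961, 10244956391, 10245217463, 10244955369, 10244955321, 9167035625, 9167296697, 9167034599, 9167034551, 9166774503, 9167035575, 9229965911, 10303969495, 10308147319, 10307885271, 10312063095, 10307868889, 10307868793, 10303707353, 10307885177, 9162597991, 10236601575, 9162875113, 9162858727, 10240778361, 9162857591, 10240517350, 10236339433, 9162596969, 9162873977, 10236600553, 9162874087, 9162857705, 10236338407, 9162613337, 10236616921, 10240794745, 9162890455, 9167068279, 9162874074, 10240532697, 10244710521, 10240516311, 10240516214, 10236354775, 10240532599, 9162859063, 10236600439, 10236862647, 9163136185, 9163119799, 10240778422, 10236600506, 9162596921, 10236338297, 9162874039, 9162857657, 9162596473, 10240516281, 10240499895, 10236338359, 9162598087, 9162597609, 10240779497, 9167053031, 10244695273, 9162597065, 9162596583, 10240778471,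 9167052009, 10240777433, 9162856663, 9162859161, 9162858681, 10236600535, 10241040569, 9167314103, 10244956345, 10236338633, 10240778599, 10241039671, 10240793945, 10240777577, 10240516457, 10240777529, 9162856791, 10240500137, 9162858919, 9162596711, 9162874265, 9162857879, 9167052087],
  [9162596183, 9229704825, 9162595705, 9162597081, 9162596599, 10236599769, 10303708409, 9229982423, 9162873303, 9234160247, 9167051127, 9229966041, 9162856921, 10308147447, 9166790361, 9166789879, 9170968185, 9166773975, 9166773497, 9162596055, 9162595577, 9166773879, 10240515545, 10307624185, 10244693369, 10244694263, 10240499159, 10307607799, 10240499063, 10240499962, 10307868921, 10236337623, 10303446263, 10240515447, 10240498935, 9162597209, 10236600791, 10303709431, 9229983449, 9162874329, 9234161273, 9167052153, 9229967063, 9162857943, 10308148474, 9166791383, 9170969207, 9166775001, 9166774905, 10240516567, 10244694391, 10240500185, 10240500089, 10240500983, 10307869943, 10240517369, 9229982967, 9229966585, 9229968057, 9229983993, 10308149495, 10307887353, 9230228729, 9230227703, 9229967607, 9166774967, 9162598009, 10236601593, 9162875127, 9162858745, 10236339447, 9162596983, 10236600567, 9162874105, 9162857719, 10236338425, 10240500151,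 9162858937],
  [9162580903, 9162580665, 10236322279, 10236322039, 9229705962, 9162596842, 9162596602, 9229967033, 9162857913, 10303708407, 9166776039, 9167037111, 10240778490, 9166775017, 9167052023, 10240762343, 10240762103, 10241023415, 10240761321, 10240761081, 10240500201, 10240499961, 10240761273, 10244955383, 9229950697, 9162841577, 9162841337, 9230211769, 9163102649, 10303953143, 9229949671, 9162840551, 9162840311, 9229949623, 9162840503, 10303691001, 9167034617, 9229689575, 9162580455, 9162580215, 9229950647, 9162841527, 10303692025, 9162597289, 9162597047, 10236338425, 9229722343, 9162613223, 9162612983, 9166792425, 9167053497, 10240794871, 9166791399, 9167068409, 10240778729, 10241039801, 10240777703, 10240516583, 10240516342, 10240777655, 10244971769, 9229967079, 9162857959, 9162857719, 9230228151, 9163119031, 9229966057, 9162856937, 9229966009, 9162856889, 9167050999, 9229999353, 10308164855, 10307902713, 9230244089, 9229982966, 10308148473, 10307886327, 9230227703, 9229966585, 9229965943, 9162613369, 10236616953, 9162890487, 9162874106, 10240532729, 10236354807, 9162598121, 9162597095, 9162859193, 10236600567, 10240793977, 9162856823],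
  [9162596310, 9229704950, 9162595830, 9166774135, 9162579929, 9229688569, 9162579449, 9162579833, 9162580726, 10236583415, 9162579705, 9162612697, 9229721337, 9162612217, 9166790521, 10236321273, 9162597338, 9166775161, 9162580951, 9162580855, 9162581753, 10236584441, 9162613719, 9166791543, 9162580921, 10240500215, 9162597303, 10240516601, 9162598135, 9162597113],
  [9162596183, 9229704825, 9162595705, 9162597081, 9162596599, 10236599770, 10303708410, 10240777593, 9229982423, 9162873303, 9234160247, 9167051127, 9167052025, 9229966041, 9162856921, 10308147447, 9166790361, 9166789879, 9170968185, 9166773975, 9166773497, 9162596055, 9162595577, 9166773879, 10240515545, 10307624185, 10244693369, 10244694263, 10240499159, 10307607799, 10240499063, 10240499962, 10307868921, 10236337623, 10303446263, 10240515447, 10240498935, 9162858329, 9229966967, 9162857847, 10236861911, 10303970551, 9230244569, 9163135449, 9234422393, 9167313273, 9230228183, 9163119063, 10308409593, 9167052503, 9171230327, 9167036121, 9162858201, 9162857718, 9167036025, 10240777687, 10307886327, 10244955511, 10240761305, 10240761209, 10240762103, 10308131063, 10240761081, 9229983449, 9229982967, 9229968103, 9230245113, 10308410615, 10308148474, 9230489849,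 9230227703, 9230228727, 9234161273, 9229967063, 9229966585, 9166775017, 9162859129, 10236862713, 9163136247, 9163119865, 10236600566, 9162596983, 9162874105, 10236338425, 10240500201, 9162858983, 9162874329, 9162857943, 9167052153],
  [9229968121, 9166775031, 10240500215, 9162859001],
  [9162580970, 9162580730, 9162842042, 10236583418, 9162579943, 9162579703, 9162579895, 10236321271, 9229704954, 9162595834, 9166775031, 9229688567, 9162579447, 9162843111, 9162842871, 9163104183, 10236845559, 9162842089, 9162841849, 9162597350, 9162597111, 9162858422, 9162596329, 9162596281, 9229721335, 9162612215, 9166791417, 9162859497, 9162859257, 9163120569, 9162858471, 9162596215, 9162858361, 9229983481, 9229967095, 9162874361, 9162857975],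
  [9162580982, 9162579961, 9162843129, 9162842103, 9162597370, 9162596343, 9162859511, 9162858489],
  [9162580903, 9162580665, 10236322279, 10236322039, 9229705962, 9162596842, 9162596602, 9229967033, 9162857913, 10303708407, 9166776039, 9167037111, 10240778490, 9166775017, 9167052023, 10240762343, 10240762103, 10241023415, 10240761321, 10240761081, 10308147449, 10240500201, 10240499961, 10240761273, 10244955382, 9229950697, 9162841577, 9162841337, 9230211769, 9163102649, 10303953143, 9229949671, 9162840551, 9162840311, 9229949623, 9162840503, 10303691001, 9167034618, 9229689575, 9162580455, 9162580215, 9229950647, 9162841527, 10303692025, 9166775209, 9166774967, 10240516343, 9233900263, 9166791143, 9166790903, 9170970345, 9171231417, 10244972791, 9170969319, 9171246329, 10244956649, 10244956409, 10245217721, 10244955623, 10244694503, 10244694263, 10244955575, 10249149689, 9234144999, 9167035879, 9167035639, 9234406071, 9167296951, 9234143977, 9167034857, 9234143929, 9167034809, 9171228919, 9233883881, 9166774761, 9166774521, 9234144953, 9167035833, 10307886326, 9229982967, 10308148473, 9230227703, 9229966585, 9234177273, 10312342775, 10312080633, 9234422009, 9234160887, 9229966041, 9162598121, 9162857719, 9162597095,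 9162874105, 9162613463, 10240794873, 9167068407, 10244710649, 10240532727, 9162859193, 10236600567, 9162597047, 10236338425, 10240778729, 10241039801, 10240794071, 10240777703, 10240777655, 9162856921],
  [9162596310, 9229704950, 9162595830, 9166774134, 9166775034, 9162579929, 9229688569, 9162579449, 9162579833, 9162580726, 10236583415, 9162579705, 9229966073, 9162856953, 10236321273, 9166790617, 9233899257, 9166790137, 9170968441, 9166774231, 9233882871, 9166773751, 9166774007, 9162597338, 9166775162, 9166776055, 9162580951, 9162580855, 9162581753, 10236584441, 9229967095, 9162857975, 9166791639, 9170969463, 9166775257, 9162580921, 10240500215, 9166775223, 10244694521, 9162598135, 9162597113, 10240778743, 10240777721],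
  [9229966073, 9162613495, 10240794103, 9162856953],
  [9162596345, 9162597367],
  [9162596310, 9229704950, 9162595830, 9166774134, 9166775035, 9162579929, 9229688569, 9162579449, 9162579833, 9162580726, 10236583414, 9162579705, 9229966073, 9162856953, 10236321273, 9166790617, 9233899257, 9166790137, 9170968441, 9170969335, 9166774231, 9233882871, 9166773751, 9166774007, 9162858458, 9229967097, 9162857977, 9167036282, 9167037175, 9162842071, 9162841975, 9162842873, 10236845561, 9162841847, 9230228215, 9163119095, 9167052759, 9234161399, 9167052279, 9171230583, 9167036377, 9167036153, 9162580967, 9166775273, 9162859255, 9162597113, 10241039863, 10240777721],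
  [9162580985, 9166775287],
  [9162596342, 9162579961, 9166790649, 9166774263, 9162858490, 9162842103, 9167052791, 9167036409],
  []]

def force {β : Type} (n : ℕ) (f : ℕ → β) : β := Nat.rec (f 0) (fun k _ => f (Nat.succ k)) n
def forceL {β : Type} (l : List ℕ) : (List ℕ → β) → β :=
  List.rec (fun k => k []) (fun x _ ih k => force x fun x' => ih fun xs' => k (x' :: xs')) l
def forceLL {β : Type} (l : List (List ℕ)) : (List (List ℕ) → β) → β :=
  List.rec (fun k => k []) (fun x _ ih k => forceL x fun x' => ih fun xs' => k (x' :: xs')) l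
def mergeAux (x : ℕ) (xs : List ℕ) (r : List ℕ → List ℕ) (l : List ℕ) : List ℕ :=
  List.rec (x :: xs) (fun y ys ih =>
    Bool.rec (Bool.rec (y :: ih) (x :: r (y :: ys)) (Nat.ble x y)) (r ys) (Nat.beq (Nat.xor x 1) y)) l
def merge (l : List ℕ) : List ℕ → List ℕ :=
  List.rec (fun ys => ys) (fun x xs ih => mergeAux x xs ih) l
def pairUp (l : List (List ℕ)) : List (List ℕ) :=
  (List.rec (motive := fun _ => List (List ℕ) × (List ℕ → List (List ℕ))) ([], fun a => [a])
    (fun x _ ih => (ih.2 x, fun a => merge a x :: ih.1)) l).1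
def mergeAll (n : ℕ) : List (List ℕ) → List ℕ :=
  Nat.rec (fun l => List.rec [] (fun x _ ih => merge x ih) l) (fun _ ih l => ih (pairUp l)) n
def shiftL (b s : ℕ) (l : List ℕ) : List ℕ :=
  List.rec [] (fun x _ ih => force (Nat.xor (Nat.add b x) s) fun y => y :: ih) l
def lk (T : List (List ℕ)) : ℕ → List ℕ :=
  List.rec (fun _ => []) (fun x _ ih n => Nat.rec x (fun m _ => ih m) n) T
def stepT (T : List (List ℕ)) (t : ℕ) : List ℕ :=
  force (Nat.sub t (Nat.mod t 128)) fun b => force (Nat.mod t 2) fun s =>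
    shiftL b s (lk T (Nat.mod (Nat.div t 2) 64))
def stepV (T : List (List ℕ)) (v : List ℕ) : List ℕ :=
  mergeAll 9 (List.rec [] (fun t _ ih => stepT T t :: ih) v)
/-- rows -/
structure Row where
  (q0 q1 q2 q3 q4 q5 : ℤ)
def Row.next (q : Row) : Row := ⟨q.q1, q.q2, q.q3, Int.sub q.q2 q.q0, q.q5, Int.sub (Int.sub q.q0 q.q4) q.q5⟩
def row0 : Row := ⟨1, 1048576, 1099511627776, 1152921504606846976, 1208925819614629174706176, 1267650600228229401496703205376⟩
def rowN : ℕ → Row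
  | 0 => row0
  | n+1 => (rowN n).next
def dg (n d : ℕ) : ℤ := Int.sub (Int.ofNat (Nat.mod (Nat.div n d) 16)) 8
def Row.dot (q : Row) (n : ℕ) : ℤ :=
  Int.add (Int.mul q.q0 (dg n 1024)) (Int.add (Int.mul q.q1 (dg n 16384)) (Int.add (Int.mul q.q2 (dg n 262144))
   (Int.add (Int.mul q.q3 (dg n 4194304)) (Int.add (Int.mul q.q4 (dg n 67108864)) (Int.mul q.q5 (dg n 1073741824))))))
def OFF : ℕ := 5316911983139663491615228241121378304
/-- m with sign bit 0 -/
def enc0 (o : ℕ) (q : Row) (n : ℕ) : ℕ :=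
  Nat.add (Nat.mul 128 (Int.toNat (Int.add (q.dot n) (Int.ofNat o)))) (Nat.mul 2 (Nat.mod (Nat.div n 16) 64))
def rep (k x : ℕ) : List ℕ := Nat.rec [] (fun _ ih => x :: ih) k
/-- sign expanded -/
def enc (o : ℕ) (q : Row) (n : ℕ) : List ℕ :=
  force (Nat.mod n 16) fun c => force (enc0 o q n) fun m =>
   Bool.rec (rep (Nat.sub 8 c) (Nat.add m 1)) (rep (Nat.sub c 8) m) (Nat.ble 8 c)
def tabRow (o : ℕ) (q : Row) (l : List ℕ) : List ℕ :=
  mergeAll 7 (List.rec [] (fun n _ ih => enc o q n :: ih) l)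
def tab (o : ℕ) (q : Row) (T : List (List ℕ)) : List (List ℕ) :=
  List.rec [] (fun l _ ih => tabRow o q l :: ih) T
def applyT (T : List (List ℕ)) (vs : List (List ℕ)) : List (List ℕ) := 
  List.rec [] (fun v _ ih => stepV T v :: ih) vs
def eqL (a : List ℕ) : List ℕ → Bool :=
  List.rec (fun b => List.rec true (fun _ _ _ => false) b)
    (fun x _ ih b => List.rec false (fun y ys _ => Bool.rec false (ih ys) (Nat.beq x y)) b) a
def eqLL (a : List (List ℕ)) : List (List ℕ) → Bool :=
  List.rec (fun b => List.rec true (fun _ _ _ => false) b)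
    (fun x _ ih b => List.rec false (fun y ys _ => Bool.rec false (ih ys) (eqL x y)) b) a
def startV (o : ℕ) (i : ℕ) : List ℕ := [Nat.add (Nat.mul 128 o) (Nat.mul 2 i)]

/-- parity of the number of ones among the lowest six bits -/
def par6 (i : ℕ) : ℕ :=
  Nat.mod (i % 2 + (i / 2 % 2 + (i / 4 % 2 + (i / 8 % 2 + (i / 16 % 2 + i / 32 % 2))))) 2
/-- sign of contraction with the `k`-th vector, shifted by 8 -/
def sgN (k i : ℕ) : ℕ := if i / 2 ^ k % 2 = 0 then 8 else if par6 (i % 2 ^ k) = 0 then 9 else 7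
/-- coded terms of the Koszul differential -/
def dcode (i : ℕ) : List ℕ := [0, 1, 2, 3, 4, 5].flatMap fun k =>
  [9162596352 + 1024 * 16 ^ k + 16 * (Nat.xor i (2 ^ k)) + sgN k i, 9162596352 + 16 * (Nat.xor i (2 ^ k)) + (16 - sgN k i)]
def bTaux : ℕ → List (List ℕ) → List (List ℕ)
  | _, [] => []
  | i, r :: rs => (dcode i ++ r) :: bTaux (i + 1) rs
def bT : List (List ℕ) := bTaux 0 rT
/-- the kernel computation for the commutation relation -/
def chkC (is : List ℕ) : Bool :=
  forceLL (tab OFF row0 sT) fun s0 => forceLL (tab OFF row0 bT) fun b0 => forceLL (tab OFF row0.next bT) fun b1 =>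
  is.all fun i => forceL (stepV s0 (stepV b1 (startV 0 i))) fun x => forceL (stepV b0 (stepV s0 (startV 0 i))) fun y => eqL x y
def loopS : ℕ → List (List ℕ) → (List (List ℕ) → Bool) → Bool
  | 0, vs, k => k vs
  | n+1, vs, k => forceLL (tab OFF (rowN n) sT) fun T => forceLL (applyT T vs) fun vs' => loopS n vs' k
def negL (v : List ℕ) : List ℕ := List.rec [] (fun x _ ih => Nat.xor x 1 :: ih) v
/-- the kernel computation for the power relation -/
def chkP (is : List ℕ) : Bool :=
  forceLL (is.map (startV 0)) fun vs => loopS 12 vs fun vs' =>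
  forceLL (tab (Nat.mul 6 OFF) row0 bT) fun b0 =>
  eqLL vs' (is.map fun i => merge (startV (Nat.mul 12 OFF) i) (negL (stepV b0 (stepV b0 (startV 0 i)))))

end Z12

namespace Z12

set_option maxRecDepth 100000 in
theorem chkC_true : chkC (List.range 64) = true := by decide +kernel
set_option maxRecDepth 100000 in
theorem chkP_true : chkP (List.range 64) = true := by decide +kernel

end Z12

namespace Z12

abbrev L6 := Fin 6 → ℤ
abbrev Item := Fin 64 × L6 × ℤ

/-- A sparse operator given by a table of terms. -/
noncomputable def opG {S S' : Type} (T : Fin 64 → List Item) (f : S → L6 → S') :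
    ((Fin 64 × S) →₀ ℤ) →ₗ[ℤ] ((Fin 64 × S') →₀ ℤ) :=
  Finsupp.linearCombination ℤ
    (fun p => ((T p.1).map fun it => Finsupp.single (it.1, f p.2 it.2.1) it.2.2).sum)

theorem opG_single {S S' : Type} (T : Fin 64 → List Item) (f : S → L6 → S') (I : Fin 64) (s : S) (c : ℤ) :
    opG T f (Finsupp.single (I, s) c) =
      c • ((T I).map fun it => Finsupp.single (it.1, f s it.2.1) it.2.2).sum := by
  simp [opG, Finsupp.linearCombination_single]

noncomputable def mp {S S' : Type} (φ : S → S') : ((Fin 64 × S) →₀ ℤ) →ₗ[ℤ] ((Fin 64 × S') →₀ ℤ) :=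
  Finsupp.lmapDomain ℤ ℤ (Prod.map id φ)

@[simp] theorem mp_single {S S' : Type} (φ : S → S') (I : Fin 64) (s : S) (c : ℤ) :
    mp φ (Finsupp.single (I, s) c) = Finsupp.single (I, φ s) c := by
  simp [mp, Finsupp.mapDomain_single]

theorem opG_mp {S S' R R' : Type} (T : Fin 64 → List Item) (f : S → L6 → S') (f' : R → L6 → R')
    (φ : S → R) (φ' : S' → R') (h : ∀ s u, φ' (f s u) = f' (φ s) u) (v : (Fin 64 × S) →₀ ℤ) :
    mp φ' (opG T f v) = opG T f' (mp φ v) := by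
  have : (mp φ').comp (opG T f) = (opG T f').comp (mp φ) := by
    refine Finsupp.lhom_ext fun p c => ?_
    obtain ⟨I, s⟩ := p
    simp only [LinearMap.comp_apply, mp_single, opG_single, map_smul, map_list_sum, List.map_map]
    congr 3
    funext it
    simp [h]
  exact LinearMap.congr_fun this v

/-! ### decoding -/

theorem forceEq {β : Type} (n : ℕ) (f : ℕ → β) : force n f = f n := by
  cases n <;> rfl
theorem forceLEq {β : Type} (l : List ℕ) (f : List ℕ → β) : forceL l f = f l := by
  induction l generalizing f with
  | nil => rfl
  | cons x xs ih =>
    change force x (fun x' => forceL xs fun xs' => f (x' :: xs')) = _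
    rw [forceEq, ih]
theorem forceLLEq {β : Type} (l : List (List ℕ)) (f : List (List ℕ) → β) : forceLL l f = f l := by
  induction l generalizing f with
  | nil => rfl
  | cons x xs ih =>
    change forceL x (fun x' => forceLL xs fun xs' => f (x' :: xs')) = _
    rw [forceLEq, ih]

def jOf (t : ℕ) : Fin 64 := ⟨t / 2 % 64, Nat.mod_lt _ (by norm_num)⟩
def sOf (t : ℕ) : ℤ := if t % 2 = 0 then 1 else -1
noncomputable def dt (o t : ℕ) : (Fin 64 × ℤ) →₀ ℤ :=
  Finsupp.single (jOf t, ((t / 128 : ℕ) : ℤ) - o) (sOf t)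
noncomputable def den (o : ℕ) (l : List ℕ) : (Fin 64 × ℤ) →₀ ℤ := (l.map (dt o)).sum

@[simp] theorem den_nil (o : ℕ) : den o [] = 0 := rfl
@[simp] theorem den_cons (o x : ℕ) (l : List ℕ) : den o (x :: l) = dt o x + den o l := by simp [den]

theorem xor_one_eq (x : ℕ) : x ^^^ 1 = if x % 2 = 0 then x + 1 else x - 1 := by
  have h1 : (x ^^^ 1) / 2 = x / 2 := by rw [Nat.xor_div_two]; simp
  have h2 : (x ^^^ 1) % 2 = (x + 1) % 2 := Nat.xor_mod_two_eq
  split_ifs <;> omega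

theorem dt_xor_one (o x : ℕ) : dt o (Nat.xor x 1) = - dt o x := by
  change dt o (x ^^^ 1) = _
  rw [xor_one_eq]
  have : jOf (if x % 2 = 0 then x + 1 else x - 1) = jOf x := by
    apply Fin.ext; simp only [jOf]; split_ifs <;> omega
  have h2 : (if x % 2 = 0 then x + 1 else x - 1) / 128 = x / 128 := by split_ifs <;> omega
  have h3 : sOf (if x % 2 = 0 then x + 1 else x - 1) = - sOf x := by
    unfold sOf
    by_cases h : x % 2 = 0
    · rw [if_pos h, if_pos h, if_neg (by omega)]
    · rw [if_neg h, if_neg h, if_pos (by omega)]; simp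
  unfold dt
  rw [this, h2, h3, Finsupp.single_neg]

theorem den_mergeAux (o x : ℕ) (xs : List ℕ) (r : List ℕ → List ℕ) (hr : ∀ l, den o (r l) = den o xs + den o l)
    (l : List ℕ) : den o (mergeAux x xs r l) = den o (x :: xs) + den o l := by
  induction l with
  | nil => simp [mergeAux]
  | cons y ys ih =>
    have e : mergeAux x xs r (y :: ys) =
      Bool.rec (Bool.rec (y :: mergeAux x xs r ys) (x :: r (y :: ys)) (Nat.ble x y)) (r ys)
        (Nat.beq (Nat.xor x 1) y) := rfl
    rw [e]
    cases hb : Nat.beq (Nat.xor x 1) y with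
    | true =>
      have : Nat.xor x 1 = y := Nat.eq_of_beq_eq_true hb
      simp only [hr, den_cons, ← this, dt_xor_one]
      abel
    | false =>
      cases Nat.ble x y with
      | true => simp only [hr, den_cons]; abel
      | false => simp only [ih, den_cons]; abel

theorem den_merge (o : ℕ) (a b : List ℕ) : den o (merge a b) = den o a + den o b := by
  induction a generalizing b with
  | nil => simp [merge]
  | cons x xs ih => exact den_mergeAux o x xs (merge xs) ih b

noncomputable def denS (o : ℕ) (l : List (List ℕ)) : (Fin 64 × ℤ) →₀ ℤ := (l.map (den o)).sum

theorem denS_pairUp (o : ℕ) (l : List (List ℕ)) : denS o (pairUp l) = denS o l := by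
  let g := fun l : List (List ℕ) => (List.rec (motive := fun _ => List (List ℕ) × (List ℕ → List (List ℕ)))
    ([], fun a => [a]) (fun x _ ih => (ih.2 x, fun a => merge a x :: ih.1)) l)
  have h : denS o (g l).1 = denS o l ∧ ∀ a, denS o ((g l).2 a) = den o a + denS o l := by
    induction l with
    | nil => simp [g, denS]
    | cons x xs ih =>
      have e : g (x :: xs) = ((g xs).2 x, fun a => merge a x :: (g xs).1) := rfl
      rw [e]
      refine ⟨?_, fun a => ?_⟩
      · simp only [ih.2]; simp [denS]
      · have := ih.1
        simp only [denS, List.map_cons, List.sum_cons, den_merge] at this ⊢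
        rw [this]; abel
  exact h.1

theorem den_mergeAll (o n : ℕ) (l : List (List ℕ)) : den o (mergeAll n l) = denS o l := by
  induction n generalizing l with
  | zero =>
    induction l with
    | nil => rfl
    | cons x xs ih =>
      change den o (merge x (mergeAll 0 xs)) = _
      rw [den_merge, ih]; simp [denS]
  | succ n ih =>
    change den o (mergeAll n (pairUp l)) = _
    rw [ih, denS_pairUp]

/-! ### table operators -/

noncomputable def shiftK (k : ℤ) : ((Fin 64 × ℤ) →₀ ℤ) →ₗ[ℤ] ((Fin 64 × ℤ) →₀ ℤ) := mp (fun x => k + x)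

noncomputable def opT (o : ℕ) (T : List (List ℕ)) : ((Fin 64 × ℤ) →₀ ℤ) →ₗ[ℤ] ((Fin 64 × ℤ) →₀ ℤ) :=
  Finsupp.linearCombination ℤ (fun p => shiftK p.2 (den o (lk T p.1)))

theorem xor_bit (y s : ℕ) (hs : s < 2) : Nat.xor y s = if s = 0 then y else Nat.xor y 1 := by
  interval_cases s
  · exact Nat.xor_zero y
  · rfl

theorem dt_shift (o1 o2 t m : ℕ) :
    dt (o1 + o2) (Nat.xor (Nat.add (Nat.sub t (Nat.mod t 128)) m) (Nat.mod t 2)) =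
      sOf t • shiftK (((t / 128 : ℕ) : ℤ) - o1) (dt o2 m) := by
  have hbase : dt (o1 + o2) (Nat.add (Nat.sub t (Nat.mod t 128)) m) =
      shiftK (((t / 128 : ℕ) : ℤ) - o1) (dt o2 m) := by
    change dt (o1 + o2) (t - t % 128 + m) = _
    have h1 : jOf (t - t % 128 + m) = jOf m := by
      apply Fin.ext; simp only [jOf]; omega
    have h2 : (t - t % 128 + m) / 128 = t / 128 + m / 128 := by omega
    have h3 : sOf (t - t % 128 + m) = sOf m := by
      unfold sOf
      have : (t - t % 128 + m) % 2 = m % 2 := by omega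
      rw [this]
    unfold dt
    rw [h1, h2, h3, shiftK, mp_single]
    congr 2
    push_cast; ring
  rw [xor_bit _ (Nat.mod t 2) (Nat.mod_lt t (by norm_num : 2 > 0)), sOf]
  change dt (o1 + o2) (if t % 2 = 0 then _ else _) = _
  split_ifs with h
  · rw [hbase, one_smul]
  · rw [dt_xor_one, hbase, neg_smul, one_smul]

theorem stepT_eq (T : List (List ℕ)) (t : ℕ) : stepT T t =
    shiftL (Nat.sub t (Nat.mod t 128)) (Nat.mod t 2) (lk T (jOf t)) := by
  unfold stepT
  rw [forceEq, forceEq]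
  rfl

theorem den_shiftL (o1 o2 t : ℕ) (l : List ℕ) :
    den (o1 + o2) (shiftL (Nat.sub t (Nat.mod t 128)) (Nat.mod t 2) l) =
      sOf t • shiftK (((t / 128 : ℕ) : ℤ) - o1) (den o2 l) := by
  induction l with
  | nil => simp [shiftL]
  | cons x xs ih =>
    have e : ∀ b s, shiftL b s (x :: xs) = force (Nat.xor (Nat.add b x) s) (fun y => y :: shiftL b s xs) := fun _ _ => rfl
    rw [e, forceEq, den_cons, den_cons, ih, dt_shift, map_add, smul_add]

theorem den_stepT (o1 o2 : ℕ) (T : List (List ℕ)) (t : ℕ) :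
    den (o1 + o2) (stepT T t) = opT o2 T (dt o1 t) := by
  rw [stepT_eq, den_shiftL, opT, dt, Finsupp.linearCombination_single]

theorem den_stepV (o1 o2 : ℕ) (T : List (List ℕ)) (v : List ℕ) :
    den (o1 + o2) (stepV T v) = opT o2 T (den o1 v) := by
  rw [stepV, den_mergeAll]
  induction v with
  | nil => simp [denS]
  | cons t v ih =>
    rw [den_cons, map_add, ← ih, ← den_stepT]
    rfl

/-! ### semantic items -/

def dItem (n : ℕ) : Item :=
  (⟨n / 16 % 64, Nat.mod_lt _ (by norm_num)⟩,
   ![dg n 1024, dg n 16384, dg n 262144, dg n 4194304, dg n 67108864, dg n 1073741824],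
   ((n % 16 : ℕ) : ℤ) - 8)

def items (T : List (List ℕ)) (I : Fin 64) : List Item := (lk T I).map dItem

def kap (q : Row) (u : L6) : ℤ :=
  q.q0 * u 0 + (q.q1 * u 1 + (q.q2 * u 2 + (q.q3 * u 3 + (q.q4 * u 4 + q.q5 * u 5))))

theorem dot_eq (q : Row) (n : ℕ) : q.dot n = kap q (dItem n).2.1 := rfl

theorem kap_add (q : Row) (u v : L6) : kap q (u + v) = kap q u + kap q v := by
  simp only [kap, Pi.add_apply]; ring

def xa (u : L6) : L6 := ![-u 3 + u 5, u 0, u 1 + u 3, u 2, -u 5, u 4 - u 5]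

theorem xa_add (u v : L6) : xa (u + v) = xa u + xa v := by
  funext i; fin_cases i <;> simp [xa] <;> ring

theorem kap_next (q : Row) (u : L6) : kap q.next u = kap q (xa u) := by
  have : ∀ a b : ℤ, Int.sub a b = a - b := fun _ _ => rfl
  simp [kap, Row.next, xa, this]; ring

def rowOK (q : Row) : Prop :=
  |q.q0| ≤ 2 ^ 112 ∧ |q.q1| ≤ 2 ^ 112 ∧ |q.q2| ≤ 2 ^ 112 ∧ |q.q3| ≤ 2 ^ 112 ∧ |q.q4| ≤ 2 ^ 112 ∧ |q.q5| ≤ 2 ^ 112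

theorem dg_bd (n d : ℕ) : |dg n d| ≤ 8 := by
  have : dg n d = ((n / d % 16 : ℕ) : ℤ) - 8 := rfl
  rw [this, abs_le]
  omega

theorem dot_bd (q : Row) (hq : rowOK q) (o : ℕ) (ho : OFF ≤ o) (n : ℕ) : 0 ≤ kap q (dItem n).2.1 + o := by
  have key : ∀ a b : ℤ, |a| ≤ 2 ^ 112 → |b| ≤ 8 → -(2 ^ 115) ≤ a * b := by
    intro a b ha hb
    have : |a * b| ≤ 2 ^ 112 * 8 := by
      rw [abs_mul]; exact mul_le_mul ha hb (abs_nonneg _) (by norm_num)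
    have := (abs_le.1 this).1
    norm_num at this ⊢; exact this
  obtain ⟨h0, h1, h2, h3, h4, h5⟩ := hq
  have k0 := key _ _ h0 (dg_bd n 1024)
  have k1 := key _ _ h1 (dg_bd n 16384)
  have k2 := key _ _ h2 (dg_bd n 262144)
  have k3 := key _ _ h3 (dg_bd n 4194304)
  have k4 := key _ _ h4 (dg_bd n 67108864)
  have k5 := key _ _ h5 (dg_bd n 1073741824)
  have e : kap q (dItem n).2.1 = q.q0 * dg n 1024 + (q.q1 * dg n 16384 + (q.q2 * dg n 262144 +
    (q.q3 * dg n 4194304 + (q.q4 * dg n 67108864 + q.q5 * dg n 1073741824)))) := rfl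
  have ho' : ((OFF : ℕ) : ℤ) ≤ o := by exact_mod_cast ho
  have hO : ((OFF : ℕ) : ℤ) = 2 ^ 122 := by norm_num [OFF]
  rw [e]
  rw [hO] at ho'
  norm_num at *
  linarith

noncomputable def itS (q : Row) (it : Item) : (Fin 64 × ℤ) →₀ ℤ := Finsupp.single (it.1, kap q it.2.1) it.2.2

theorem den_rep (o k x : ℕ) : den o (rep k x) = (k : ℤ) • dt o x := by
  induction k with
  | zero => simp [rep]
  | succ k ih =>
    have : rep (k + 1) x = x :: rep k x := rfl
    rw [this, den_cons, ih]; push_cast; rw [add_smul, one_smul, add_comm]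

theorem den_enc (o : ℕ) (q : Row) (hq : rowOK q) (ho : OFF ≤ o) (n : ℕ) :
    den o (enc o q n) = itS q (dItem n) := by
  have hb := dot_bd q hq o ho n
  obtain ⟨w, hw⟩ := Int.eq_ofNat_of_zero_le hb
  have hm : enc0 o q n = 128 * w + 2 * (n / 16 % 64) := by
    have : enc0 o q n = 128 * (kap q (dItem n).2.1 + o).toNat + 2 * (n / 16 % 64) := rfl
    rw [this, hw]; simp
  have hd0 : dt o (128 * w + 2 * (n / 16 % 64)) = Finsupp.single ((dItem n).1, kap q (dItem n).2.1) 1 := by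
    unfold dt
    have h1 : jOf (128 * w + 2 * (n / 16 % 64)) = (dItem n).1 := by
      apply Fin.ext; simp only [jOf, dItem]; omega
    have h2 : (((128 * w + 2 * (n / 16 % 64)) / 128 : ℕ) : ℤ) - o = kap q (dItem n).2.1 := by
      have : (128 * w + 2 * (n / 16 % 64)) / 128 = w := by omega
      rw [this]; have : (w : ℤ) = Int.ofNat w := rfl
      omega
    have h3 : sOf (128 * w + 2 * (n / 16 % 64)) = 1 := by
      unfold sOf; rw [if_pos]; omega
    rw [h1, h2, h3]
  have hd1 : dt o (128 * w + 2 * (n / 16 % 64) + 1) = - Finsupp.single ((dItem n).1, kap q (dItem n).2.1) 1 := by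
    rw [← hd0, ← dt_xor_one]
    congr 1
    change _ = (128 * w + 2 * (n / 16 % 64)) ^^^ 1
    rw [xor_one_eq, if_pos (by omega)]
  unfold enc
  rw [forceEq, forceEq, hm]
  have hc : (dItem n).2.2 = ((n % 16 : ℕ) : ℤ) - 8 := rfl
  unfold itS
  rw [hc]
  change den o (Bool.rec (rep (8 - n % 16) (128 * w + 2 * (n / 16 % 64) + 1)) (rep (n % 16 - 8) (128 * w + 2 * (n / 16 % 64)))
    (Nat.ble 8 (n % 16))) = _
  cases hbl : Nat.ble 8 (n % 16) with
  | true =>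
    have h8 : 8 ≤ n % 16 := Nat.le_of_ble_eq_true hbl
    simp only [den_rep, hd0, Finsupp.smul_single, smul_eq_mul, mul_one]
    congr 1; omega
  | false =>
    have h8 : ¬ 8 ≤ n % 16 := Nat.not_le_of_not_ble_eq_true (by simp [hbl])
    simp only [den_rep, hd1, smul_neg, Finsupp.smul_single, smul_eq_mul, mul_one]
    rw [← Finsupp.single_neg]
    congr 1; omega

theorem den_tabRow (o : ℕ) (q : Row) (hq : rowOK q) (ho : OFF ≤ o) (l : List ℕ) :
    den o (tabRow o q l) = ((l.map dItem).map (itS q)).sum := by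
  unfold tabRow
  rw [den_mergeAll]
  induction l with
  | nil => simp [denS]
  | cons n l ih =>
    simp only [List.map_cons, List.sum_cons]
    rw [← ih, ← den_enc o q hq ho]
    rfl

theorem lk_tab (o : ℕ) (q : Row) (T : List (List ℕ)) (i : ℕ) (h : i < T.length) :
    lk (tab o q T) i = tabRow o q (lk T i) := by
  induction T generalizing i with
  | nil => simp at h
  | cons x xs ih =>
    cases i with
    | zero => rfl
    | succ i => exact ih i (by simpa using h)

theorem opT_tab (o : ℕ) (q : Row) (hq : rowOK q) (ho : OFF ≤ o) (T : List (List ℕ)) (hT : T.length = 64) :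
    opT o (tab o q T) = opG (items T) (fun (k : ℤ) u => k + kap q u) := by
  refine Finsupp.lhom_ext fun p c => ?_
  obtain ⟨I, k⟩ := p
  rw [opG_single, opT, Finsupp.linearCombination_single]
  simp only
  rw [lk_tab o q T I (by rw [hT]; exact I.2), den_tabRow o q hq ho, map_list_sum, List.map_map]
  congr 3
  funext it
  simp [itS, shiftK]

end Z12

namespace Z12

theorem eqL_sound (a : List ℕ) : ∀ b, eqL a b = true → a = b := by
  induction a with
  | nil => intro b h; cases b with
    | nil => rfl
    | cons y ys => exact absurd h (by simp [eqL])
  | cons x xs ih =>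
    intro b h
    cases b with
    | nil => exact absurd h (by simp [eqL])
    | cons y ys =>
      have e : eqL (x :: xs) (y :: ys) = Bool.rec false (eqL xs ys) (Nat.beq x y) := rfl
      rw [e] at h
      cases hb : Nat.beq x y with
      | false => rw [hb] at h; exact absurd h (by simp)
      | true => rw [hb] at h; rw [Nat.eq_of_beq_eq_true hb, ih ys h]

theorem eqLL_sound (a : List (List ℕ)) : ∀ b, eqLL a b = true → a = b := by
  induction a with
  | nil => intro b h; cases b with
    | nil => rfl
    | cons y ys => exact absurd h (by simp [eqLL])
  | cons x xs ih =>
    intro b h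
    cases b with
    | nil => exact absurd h (by simp [eqLL])
    | cons y ys =>
      have e : eqLL (x :: xs) (y :: ys) = Bool.rec false (eqLL xs ys) (eqL x y) := rfl
      rw [e] at h
      cases hb : eqL x y with
      | false => rw [hb] at h; exact absurd h (by simp)
      | true => rw [hb] at h; rw [eqL_sound _ _ hb, ih ys h]

theorem chkC_spec (i : ℕ) (hi : i < 64) :
    stepV (tab OFF row0 sT) (stepV (tab OFF row0.next bT) (startV 0 i)) =
    stepV (tab OFF row0 bT) (stepV (tab OFF row0 sT) (startV 0 i)) := by
  have h := chkC_true
  unfold chkC at h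
  simp only [forceLLEq, forceLEq] at h
  exact eqL_sound _ _ (List.all_eq_true.1 h i (List.mem_range.2 hi))

def loopV : ℕ → List ℕ → List ℕ
  | 0, v => v
  | n+1, v => loopV n (stepV (tab OFF (rowN n) sT) v)

theorem applyT_eq (T : List (List ℕ)) (vs : List (List ℕ)) : applyT T vs = vs.map (stepV T) := by
  induction vs with
  | nil => rfl
  | cons x xs ih => rw [List.map_cons, ← ih]; rfl

theorem loopS_eq (n : ℕ) (vs : List (List ℕ)) (k : List (List ℕ) → Bool) :
    loopS n vs k = k (vs.map (loopV n)) := by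
  induction n generalizing vs with
  | zero => 
    have : loopV 0 = id := rfl
    simp [loopS, this]
  | succ n ih =>
    have : loopS (n+1) vs k = forceLL (tab OFF (rowN n) sT) fun T => forceLL (applyT T vs) fun vs' => loopS n vs' k := rfl
    rw [this, forceLLEq, forceLLEq, ih, applyT_eq, List.map_map]
    rfl

theorem chkP_spec (i : ℕ) (hi : i < 64) :
    loopV 12 (startV 0 i) = merge (startV (Nat.mul 12 OFF) i)
      (negL (stepV (tab (Nat.mul 6 OFF) row0 bT) (stepV (tab (Nat.mul 6 OFF) row0 bT) (startV 0 i)))) := by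
  have h := chkP_true
  unfold chkP at h
  simp only [forceLLEq, loopS_eq] at h
  have := eqLL_sound _ _ h
  rw [List.map_map] at this
  have h2 := List.map_inj_left.1 this i (List.mem_range.2 hi)
  rw [Function.comp_apply] at h2
  rw [h2]

set_option maxRecDepth 100000 in
theorem sT_len : sT.length = 64 := by decide +kernel
set_option maxRecDepth 100000 in
theorem bT_len : bT.length = 64 := by decide +kernel

instance (q : Row) : Decidable (rowOK q) := by unfold rowOK; infer_instance
theorem rowN_ok : ∀ a, a < 13 → rowOK (rowN a) := by
  have : ∀ a : Fin 13, rowOK (rowN a) := by decide +kernel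
  exact fun a ha => this ⟨a, ha⟩

noncomputable def sW : ((Fin 64 × L6) →₀ ℤ) →ₗ[ℤ] ((Fin 64 × L6) →₀ ℤ) :=
  opG (items sT) (fun v u => xa v + u)
noncomputable def bW : ((Fin 64 × L6) →₀ ℤ) →ₗ[ℤ] ((Fin 64 × L6) →₀ ℤ) :=
  opG (items bT) (fun v u => v + u)
noncomputable def sK (a : ℕ) : ((Fin 64 × ℤ) →₀ ℤ) →ₗ[ℤ] ((Fin 64 × ℤ) →₀ ℤ) :=
  opG (items sT) (fun k u => k + kap (rowN a) u)
noncomputable def bK (a : ℕ) : ((Fin 64 × ℤ) →₀ ℤ) →ₗ[ℤ] ((Fin 64 × ℤ) →₀ ℤ) :=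
  opG (items bT) (fun k u => k + kap (rowN a) u)
noncomputable def Ph (a : ℕ) : ((Fin 64 × L6) →₀ ℤ) →ₗ[ℤ] ((Fin 64 × ℤ) →₀ ℤ) := mp (kap (rowN a))

theorem Ph_s (a : ℕ) (v) : Ph a (sW v) = sK a (Ph (a+1) v) :=
  opG_mp _ _ _ _ _ (fun _ _ => by
    rw [kap_add, ← kap_next]; rfl) v
theorem Ph_b (a : ℕ) (v) : Ph a (bW v) = bK a (Ph a v) :=
  opG_mp _ _ _ _ _ (fun _ _ => kap_add _ _ _) v

theorem den_startV (o i : ℕ) (hi : i < 64) : den o (startV o i) = Finsupp.single (⟨i, hi⟩, 0) 1 := by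
  change den o [128 * o + 2 * i] = _
  rw [den_cons, den_nil, add_zero, dt]
  have h1 : jOf (128 * o + 2 * i) = ⟨i, hi⟩ := by
    apply Fin.ext; simp only [jOf]; omega
  have h2 : (((128 * o + 2 * i) / 128 : ℕ) : ℤ) - o = 0 := by
    have : (128 * o + 2 * i) / 128 = o := by omega
    rw [this]; simp
  have h3 : sOf (128 * o + 2 * i) = 1 := by
    unfold sOf; rw [if_pos]; omega
  rw [h1, h2, h3]

theorem kap_zero (q : Row) : kap q 0 = 0 := by simp [kap]

theorem Ph_start (a : ℕ) (i : Fin 64) : Ph a (Finsupp.single (i, 0) 1) = den 0 (startV 0 i) := by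
  rw [den_startV 0 i i.2, Ph, mp_single, kap_zero]

theorem den_negL (o : ℕ) (l : List ℕ) : den o (negL l) = - den o l := by
  induction l with
  | nil => simp [negL]
  | cons x xs ih =>
    have : negL (x :: xs) = Nat.xor x 1 :: negL xs := rfl
    rw [this, den_cons, den_cons, ih, dt_xor_one]; abel

theorem den_stepS (o a : ℕ) (ha : a < 13) (v : List ℕ) :
    den (o + OFF) (stepV (tab OFF (rowN a) sT) v) = sK a (den o v) := by
  rw [den_stepV, opT_tab _ _ (rowN_ok a ha) le_rfl _ sT_len]; rfl
theorem den_stepB (o o' a : ℕ) (ho : OFF ≤ o') (ha : a < 13) (v : List ℕ) :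
    den (o + o') (stepV (tab o' (rowN a) bT) v) = bK a (den o v) := by
  rw [den_stepV, opT_tab _ _ (rowN_ok a ha) ho _ bT_len]; rfl

theorem Ph_comm (i : Fin 64) : Ph 0 (sW (bW (Finsupp.single (i, 0) 1))) = Ph 0 (bW (sW (Finsupp.single (i, 0) 1))) := by
  rw [Ph_s, Ph_b, Ph_b, Ph_s, Ph_start]
  rw [← den_stepB 0 OFF (0+1) le_rfl (by norm_num), ← den_stepS _ 0 (by norm_num)]
  rw [← den_stepS 0 0 (by norm_num), ← den_stepB _ OFF 0 le_rfl (by norm_num)]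
  exact congrArg _ (chkC_spec i i.2)

noncomputable def sKs : ℕ → ((Fin 64 × ℤ) →₀ ℤ) → ((Fin 64 × ℤ) →₀ ℤ)
  | 0, v => v
  | n+1, v => sKs n (sK n v)

theorem Ph_sn (n : ℕ) (v) : Ph 0 ((sW ^ n) v) = sKs n (Ph n v) := by
  induction n generalizing v with
  | zero => rfl
  | succ n ih => rw [pow_succ, Module.End.mul_apply, ih, Ph_s]; rfl

theorem den_loopV (n : ℕ) (hn : n < 13) (o : ℕ) (v : List ℕ) : den (o + n * OFF) (loopV n v) = sKs n (den o v) := by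
  induction n generalizing o v with
  | zero => simp [loopV, sKs]
  | succ n ih =>
    have e : o + (n + 1) * OFF = (o + OFF) + n * OFF := by ring
    rw [e]
    change den _ (loopV n _) = sKs n (sK n _)
    rw [ih (by omega), den_stepS _ _ (by omega)]

theorem Ph_pow (i : Fin 64) : Ph 0 ((sW ^ 12) (Finsupp.single (i, 0) 1)) =
    Ph 0 (Finsupp.single (i, 0) 1 - bW (bW (Finsupp.single (i, 0) 1))) := by
  rw [Ph_sn, Ph_start, ← den_loopV 12 (by norm_num), chkP_spec i i.2, den_merge, den_negL]
  rw [map_sub, Ph_b, Ph_b, Ph_start, sub_eq_add_neg]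
  have h6 : OFF ≤ Nat.mul 6 OFF := by change OFF ≤ 6 * OFF; omega
  rw [← den_stepB 0 _ 0 h6 (by norm_num), ← den_stepB _ _ 0 h6 (by norm_num)]
  have e1 : 0 + 12 * OFF = Nat.mul 12 OFF := by rw [zero_add]; rfl
  have e2 : 0 + Nat.mul 6 OFF + Nat.mul 6 OFF = Nat.mul 12 OFF := by
    change 0 + 6 * OFF + 6 * OFF = 12 * OFF; ring
  rw [e1, e2, den_startV _ _ i.2, den_startV _ _ i.2]
  rfl

/-! boxes -/
def box (r : ℤ) : Submodule ℤ ((Fin 64 × L6) →₀ ℤ) := Finsupp.supported ℤ ℤ {p | ∀ i, |p.2 i| ≤ r}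

theorem opG_box (T : List (List ℕ)) (f : L6 → L6 → L6) (r r' : ℤ)
    (h : ∀ v u : L6, (∀ i, |v i| ≤ r) → (∀ i, |u i| ≤ 8) → ∀ i, |f v u i| ≤ r') (v) (hv : v ∈ box r) :
    opG (items T) f v ∈ box r' := by
  rw [opG, Finsupp.linearCombination_apply]
  refine Submodule.sum_mem _ fun p hp => Submodule.smul_mem _ _ (list_sum_mem fun x hx => ?_)
  rw [List.mem_map] at hx
  obtain ⟨it, hit, rfl⟩ := hx
  refine Finsupp.single_mem_supported _ _ ?_
  refine h _ _ ((Finsupp.mem_supported ℤ v).1 hv hp) ?_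
  obtain ⟨n, _, rfl⟩ := List.mem_map.1 hit
  intro i
  fin_cases i <;> exact dg_bd _ _

theorem bW_box (r : ℤ) (v) (hv : v ∈ box r) : bW v ∈ box (r + 8) :=
  opG_box _ _ r _ (fun _ _ hv hu i => (abs_add_le _ _).trans (add_le_add (hv i) (hu i))) v hv

theorem sW_box (r : ℤ) (v) (hv : v ∈ box r) : sW v ∈ box (2 * r + 8) := by
  refine opG_box _ _ r _ (fun v u hv hu i => (abs_add_le _ _).trans (add_le_add ?_ (hu i))) v hv
  have h : ∀ i, -r ≤ v i ∧ v i ≤ r := fun i => abs_le.1 (hv i)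
  have h0 := h 0; have h1 := h 1; have h2 := h 2; have h3 := h 3; have h4 := h 4; have h5 := h 5
  rw [abs_le]
  fin_cases i <;> simp [xa] <;> omega

theorem box_mono {r r' : ℤ} (h : r ≤ r') : box r ≤ box r' :=
  Finsupp.supported_mono fun _ hp i => (hp i).trans h

theorem sn_box (n : ℕ) (r : ℤ) (v) (hv : v ∈ box r) : (sW ^ n) v ∈ box (2 ^ n * r + 8 * (2 ^ n - 1)) := by
  induction n with
  | zero => simpa using hv
  | succ n ih =>
    rw [pow_succ' sW, Module.End.mul_apply]
    have := sW_box _ _ ih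
    convert this using 2; ring

theorem Ph_inj (v w) (hv : v ∈ box 100000) (hw : w ∈ box 100000) (h : Ph 0 v = Ph 0 w) : v = w := by
  refine Finsupp.mapDomain_injOn {p : Fin 64 × L6 | ∀ i, |p.2 i| ≤ 100000} ?_ hv hw h
  rintro ⟨I, x⟩ hx ⟨J, y⟩ hy hxy
  simp only [Prod.map, id, Prod.mk.injEq, rowN, row0, kap] at hxy
  obtain ⟨rfl, hk⟩ := hxy
  have h : ∀ i, -100000 ≤ x i ∧ x i ≤ 100000 := fun i => abs_le.1 (hx i)
  have h' : ∀ i, -100000 ≤ y i ∧ y i ≤ 100000 := fun i => abs_le.1 (hy i)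
  have h0 := h 0; have h1 := h 1; have h2 := h 2; have h3 := h 3; have h4 := h 4; have h5 := h 5
  have g0 := h' 0; have g1 := h' 1; have g2 := h' 2; have g3 := h' 3; have g4 := h' 4; have g5 := h' 5
  have e0 : x 0 = y 0 := by omega
  have e1 : x 1 = y 1 := by omega
  have e2 : x 2 = y 2 := by omega
  have e3 : x 3 = y 3 := by omega
  have e4 : x 4 = y 4 := by omega
  have e5 : x 5 = y 5 := by omega
  congr 1
  funext i
  fin_cases i <;> assumption

theorem start_box (i : Fin 64) : Finsupp.single (i, (0 : L6)) (1 : ℤ) ∈ box 0 :=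
  Finsupp.single_mem_supported _ _ (by simp)

theorem W_comm (i : Fin 64) : sW (bW (Finsupp.single (i, 0) 1)) = bW (sW (Finsupp.single (i, 0) 1)) :=
  Ph_inj _ _ (box_mono (by norm_num) (sW_box _ _ (bW_box _ _ (start_box i))))
    (box_mono (by norm_num) (bW_box _ _ (sW_box _ _ (start_box i)))) (Ph_comm i)

theorem W_pow (i : Fin 64) : (sW ^ 12) (Finsupp.single (i, 0) 1) =
    Finsupp.single (i, 0) 1 - bW (bW (Finsupp.single (i, 0) 1)) :=
  Ph_inj _ _ (box_mono (by norm_num) (sn_box 12 _ _ (start_box i)))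
    (Submodule.sub_mem _ (box_mono (by norm_num) (start_box i))
      (box_mono (by norm_num) (bW_box _ _ (bW_box _ _ (start_box i))))) (Ph_pow i)

/-! group level -/

/-- Group data : a group with a lattice and a twisting element. -/
structure GD (G : Type) [Group G] where
  g : L6 → G
  τ : G
  g_add : ∀ u v, g (u + v) = g u * g v
  g_tau : ∀ u, g u * τ = τ * g (xa u)
  tau_pow : τ ^ 12 = 1

variable {G : Type} [Group G] (Q : GD G)

noncomputable def sV : ((Fin 64 × G) →₀ ℤ) →ₗ[ℤ] ((Fin 64 × G) →₀ ℤ) :=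
  opG (items sT) (fun γ u => γ * Q.τ * Q.g u)
noncomputable def bV : ((Fin 64 × G) →₀ ℤ) →ₗ[ℤ] ((Fin 64 × G) →₀ ℤ) :=
  opG (items bT) (fun γ u => γ * Q.g u)

noncomputable def Ps (γ : G) (a : ℕ) : ((Fin 64 × L6) →₀ ℤ) →ₗ[ℤ] ((Fin 64 × G) →₀ ℤ) :=
  mp (fun v => γ * Q.τ ^ a * Q.g v)

theorem Ps_s (γ : G) (a : ℕ) (v) : Ps Q γ (a+1) (sW v) = sV Q (Ps Q γ a v) :=
  opG_mp _ _ _ _ _ (fun v u => by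
    rw [Q.g_add, mul_assoc _ (Q.g v), Q.g_tau, pow_succ]; simp only [mul_assoc]) v
theorem Ps_b (γ : G) (a : ℕ) (v) : Ps Q γ a (bW v) = bV Q (Ps Q γ a v) :=
  opG_mp _ _ _ _ _ (fun v u => by
    rw [Q.g_add]; simp only [mul_assoc]) v
theorem Ps_sn (γ : G) (n a : ℕ) (v) : Ps Q γ (a+n) ((sW ^ n) v) = (sV Q ^ n) (Ps Q γ a v) := by
  induction n with
  | zero => rfl
  | succ n ih =>
    rw [pow_succ', pow_succ', Module.End.mul_apply, Module.End.mul_apply, ← add_assoc, Ps_s, ih]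

theorem g_zero : Q.g 0 = 1 := by
  have := Q.g_add 0 0
  simpa using this

theorem Ps_start (γ : G) (i : Fin 64) (c : ℤ) : Ps Q γ 0 (Finsupp.single (i, 0) c) = Finsupp.single (i, γ) c := by
  simp [Ps, g_zero]

theorem V_comm : sV Q * bV Q = bV Q * sV Q := by
  refine Finsupp.lhom_ext fun p c => ?_
  obtain ⟨i, γ⟩ := p
  have : (Finsupp.single (i, γ) c : (Fin 64 × G) →₀ ℤ) = c • Finsupp.single (i, γ) 1 := by simp
  rw [this, map_smul, map_smul]
  congr 1
  simp only [Module.End.mul_apply]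
  rw [← Ps_start, ← Ps_b, ← Ps_s, ← Ps_s, ← Ps_b, W_comm]

theorem V_pow : sV Q ^ 12 = 1 - bV Q * bV Q := by
  refine Finsupp.lhom_ext fun p c => ?_
  obtain ⟨i, γ⟩ := p
  have : (Finsupp.single (i, γ) c : (Fin 64 × G) →₀ ℤ) = c • Finsupp.single (i, γ) 1 := by simp
  rw [this, map_smul, map_smul]
  congr 1
  simp only [Module.End.mul_apply, LinearMap.sub_apply, Module.End.one_apply]
  have h12 : Ps Q γ (0 + 12) = Ps Q γ 0 := by simp [Ps, Q.tau_pow]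
  rw [← Ps_start, ← Ps_sn, W_pow, h12, map_sub, Ps_b, Ps_b]

end Z12

namespace Z12

/-- number of elements of the subset coded by `I` -/
def qI (I : Fin 64) : ℕ :=
  I.val % 2 + (I.val / 2 % 2 + (I.val / 4 % 2 + (I.val / 8 % 2 + (I.val / 16 % 2 + I.val / 32 % 2))))
/-- flip the `k`-th bit -/
def fl (k : Fin 6) (I : Fin 64) : Fin 64 := ⟨(I.val ^^^ 2 ^ k.val) % 64, Nat.mod_lt _ (by norm_num)⟩
def hasB (k : Fin 6) (I : Fin 64) : Bool := I.val / 2 ^ k.val % 2 == 1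
/-- signs -/
def sg (k : Fin 6) (I : Fin 64) : ℤ := if par6 (I.val % 2 ^ k.val) = 0 then 1 else -1
def sm (k : Fin 6) (I : Fin 64) : ℤ := if hasB k I then sg k I else 0
def sp (k : Fin 6) (I : Fin 64) : ℤ := if hasB k I then 0 else sg k I

theorem sign_anti : ∀ j k : Fin 6, j ≠ k → ∀ I, sp k I * sm j (fl k I) + sm j I * sp k (fl j I) = 0 := by
  decide +kernel
theorem fl_comm : ∀ j k : Fin 6, ∀ I, fl j (fl k I) = fl k (fl j I) := by
  decide +kernel
theorem fl_fl : ∀ k : Fin 6, ∀ I, fl k (fl k I) = I := by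
  decide +kernel
theorem sp_sm : ∀ k : Fin 6, ∀ I, sp k I * sm k (fl k I) = if hasB k I then 0 else 1 := by
  decide +kernel
theorem sm_sp : ∀ k : Fin 6, ∀ I, sm k I * sp k (fl k I) = if hasB k I then 1 else 0 := by
  decide +kernel
theorem sp_q : ∀ k : Fin 6, ∀ I, sp k I ≠ 0 → qI (fl k I) = qI I + 1 := by
  decide +kernel
theorem hasB_of_q : ∀ I, 1 ≤ qI I → ∃ k, hasB k I = true := by
  decide +kernel
theorem hasB_zero : ∀ k, hasB k 0 = false := by
  decide +kernel
theorem q_zero : ∀ I, qI I = 0 ↔ I = 0 := by decide +kernel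

def eK (k : Fin 6) : L6 := Pi.single k 1

def dIt (I : Fin 64) : List Item := (List.finRange 6).flatMap fun k =>
  [(fl k I, eK k, sm k I), (fl k I, 0, - sm k I)]
def rIt (I : Fin 64) : List Item := (lk rT I).map dItem

set_option maxRecDepth 100000 in
theorem bT_items : ∀ I, items bT I = dIt I ++ rIt I := by
  decide +kernel
set_option maxRecDepth 100000 in
theorem r_q : ∀ I, ∀ it ∈ rIt I, qI I + 1 ≤ qI it.1 := by
  decide +kernel
set_option maxRecDepth 100000 in
theorem b_par : ∀ I, ∀ it ∈ items bT I, (qI it.1 + qI I) % 2 = 1 := by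
  decide +kernel
set_option maxRecDepth 100000 in
theorem s_q : ∀ I, ∀ it ∈ items sT I, qI I ≤ qI it.1 ∧ (qI it.1 + qI I) % 2 = 0 := by
  decide +kernel
theorem s_zero : items sT 0 = [(0, 0, 1)] := by
  decide +kernel

end Z12

set_option linter.unusedSectionVars false
set_option linter.unusedVariables false
set_option linter.unusedSimpArgs false
namespace Z12

section ops
variable {G : Type} [Group G]

abbrev VV (G : Type) := (Fin 64 × G) →₀ ℤ

/-- first-factor operator -/
noncomputable def eop (a : Fin 64 → Fin 64) (s : Fin 64 → ℤ) : VV G →ₗ[ℤ] VV G :=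
  Finsupp.linearCombination ℤ (fun p => Finsupp.single (a p.1, p.2) (s p.1))
/-- second-factor operator -/
noncomputable def gop (h : G → List (G × ℤ)) : VV G →ₗ[ℤ] VV G :=
  Finsupp.linearCombination ℤ (fun p => ((h p.2).map fun x => Finsupp.single (p.1, x.1) x.2).sum)

theorem VV_ext {M : Type} [AddCommGroup M] {f f' : VV G →ₗ[ℤ] M}
    (h : ∀ I γ, f (Finsupp.single (I, γ) 1) = f' (Finsupp.single (I, γ) 1)) : f = f' := by
  refine Finsupp.lhom_ext fun p c => ?_
  obtain ⟨I, γ⟩ := p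
  have : (Finsupp.single (I, γ) c : VV G) = c • Finsupp.single (I, γ) 1 := by simp
  rw [this, map_smul, map_smul, h]

@[simp] theorem eop_single (a : Fin 64 → Fin 64) (s : Fin 64 → ℤ) (I : Fin 64) (γ : G) (c : ℤ) :
    eop a s (Finsupp.single (I, γ) c) = Finsupp.single (a I, γ) (c * s I) := by
  simp [eop, Finsupp.linearCombination_single]
theorem gop_single (h : G → List (G × ℤ)) (I : Fin 64) (γ : G) (c : ℤ) :
    gop h (Finsupp.single (I, γ) c) = c • ((h γ).map fun x => Finsupp.single (I, x.1) x.2).sum := by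
  simp [gop, Finsupp.linearCombination_single]

theorem eop_gop (a : Fin 64 → Fin 64) (s : Fin 64 → ℤ) (h : G → List (G × ℤ)) :
    eop a s * gop h = gop h * eop a s := by
  refine VV_ext fun I γ => ?_
  simp only [Module.End.mul_apply, eop_single, gop_single, one_smul, one_mul, map_list_sum, List.map_map]
  rw [List.smul_sum, List.map_map]
  congr 2
  funext x
  simp [mul_comm]

end ops

/-- coordinates on the group -/
structure GC {G : Type} [Group G] (Q : GD G) where
  jc : G → ZMod 12
  mc : G → L6
  jc_g : ∀ γ u, jc (γ * Q.g u) = jc γ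
  mc_g : ∀ γ u, mc (γ * Q.g u) = mc γ + u
  jc_t : ∀ γ, jc (γ * Q.τ) = jc γ + 1
  mc_t : ∀ γ, mc (γ * Q.τ) = xa (mc γ)
  jc_one : jc 1 = 0
  mc_one : mc 1 = 0
  inj : ∀ γ γ', jc γ = jc γ' → mc γ = mc γ' → γ = γ'

section
variable {G : Type} [Group G] (Q : GD G)

noncomputable def RR (u : L6) : VV G →ₗ[ℤ] VV G := gop (fun γ => [(γ * Q.g u, 1)])
theorem RR_single (u : L6) (I : Fin 64) (γ : G) (c : ℤ) :
    RR Q u (Finsupp.single (I, γ) c) = Finsupp.single (I, γ * Q.g u) c := by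
  simp [RR, gop_single]

/-- Koszul part -/
noncomputable def dV : VV G →ₗ[ℤ] VV G := opG dIt (fun γ u => γ * Q.g u)
noncomputable def rV : VV G →ₗ[ℤ] VV G := opG rIt (fun γ u => γ * Q.g u)

theorem bV_eq : bV Q = dV Q + rV Q := by
  refine VV_ext fun I γ => ?_
  simp [bV, dV, rV, opG_single, bT_items]

noncomputable def Em (k : Fin 6) : VV G →ₗ[ℤ] VV G := eop (fl k) (sm k)
noncomputable def Ep (k : Fin 6) : VV G →ₗ[ℤ] VV G := eop (fl k) (sp k)

theorem dV_eq : dV Q = ∑ k, Em k * (RR Q (eK k) - 1) := by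
  refine VV_ext fun I γ => ?_
  rw [dV, opG_single, one_smul]
  have : ∀ k : Fin 6, (Em k * (RR Q (eK k) - 1) : VV G →ₗ[ℤ] VV G) (Finsupp.single (I, γ) 1) =
      Finsupp.single (fl k I, γ * Q.g (eK k)) (sm k I) + Finsupp.single (fl k I, γ * Q.g 0) (- sm k I) := by
    intro k
    simp [Em, RR_single, g_zero, sub_eq_add_neg]
  rw [LinearMap.sum_apply]
  simp_rw [this]
  rw [dIt, List.map_flatMap]
  simp only [Fin.sum_univ_succ, List.finRange_succ, List.finRange_zero, List.map_cons, List.map_nil,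
    List.flatMap_cons, List.flatMap_nil, List.cons_append, List.nil_append, List.sum_cons, List.sum_nil,
    Finset.univ_eq_empty, Finset.sum_empty, add_assoc]

variable {Q} (K : GC Q)

def m1 (m : ℤ) (k : Fin 6) : L6 := m • eK k
/-- partial sums list -/
def slist (γ0 : ℤ → G) (m : ℤ) : List (G × ℤ) :=
  if 0 ≤ m then (List.range m.toNat).map (fun j : ℕ => (γ0 j, 1))
  else (List.range (-m).toNat).map (fun j : ℕ => (γ0 (m + j), -1))

noncomputable def sumL (I : Fin 64) (l : List (G × ℤ)) : VV G := (l.map fun x => Finsupp.single (I, x.1) x.2).sum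

theorem slist_succ (I : Fin 64) (γ0 : ℤ → G) (m : ℤ) :
    sumL I (slist γ0 (m + 1)) = sumL I (slist γ0 m) + Finsupp.single (I, γ0 m) 1 := by
  unfold slist sumL
  by_cases h : 0 ≤ m
  · obtain ⟨n, rfl⟩ := Int.eq_ofNat_of_zero_le h
    rw [if_pos (by omega), if_pos h]
    have : ((n : ℤ) + 1).toNat = n + 1 := by omega
    rw [this, List.range_succ]
    simp
  · rw [if_neg h]
    obtain ⟨n, hn⟩ : ∃ n : ℕ, m = -((n : ℤ) + 1) := ⟨(-m - 1).toNat, by omega⟩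
    subst hn
    have h1 : (-(-((n : ℤ) + 1))).toNat = n + 1 := by omega
    rw [h1, List.range_succ_eq_map]
    by_cases hn : n = 0
    · subst hn
      simp [← Finsupp.single_add]
    · rw [if_neg (by omega)]
      have h2 : (-(-((n : ℤ) + 1) + 1)).toNat = n := by omega
      rw [h2]
      simp only [List.map_cons, List.map_map, List.sum_cons, Nat.cast_zero, add_zero]
      rw [add_right_comm, ← Finsupp.single_add]
      simp only [neg_add_cancel, Finsupp.single_zero, zero_add]
      congr 2
      funext j
      simp only [Function.comp_apply]
      congr 3
      push_cast; ring

theorem slist_zero (γ0 : ℤ → G) : slist γ0 0 = [] := by simp [slist]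

noncomputable def base (k : Fin 6) (γ : G) : G := γ * Q.g (m1 (- K.mc γ k) k)

noncomputable def Sk (k : Fin 6) : VV G →ₗ[ℤ] VV G :=
  gop (fun γ => slist (fun j => γ * Q.g (m1 (j - K.mc γ k) k)) (K.mc γ k))
noncomputable def Pg (k : Fin 6) : VV G →ₗ[ℤ] VV G :=
  gop (fun γ => [(γ * Q.g (m1 (- K.mc γ k) k), 1)])

theorem Sk_single (k I) (γ : G) : Sk K k (Finsupp.single (I, γ) 1) =
    sumL I (slist (fun j => γ * Q.g (m1 (j - K.mc γ k) k)) (K.mc γ k)) := by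
  simp [Sk, gop_single, sumL]

theorem m1_add (a b : ℤ) (k : Fin 6) : m1 (a + b) k = m1 a k + m1 b k := add_smul _ _ _

theorem Sk_RR (k : Fin 6) : Sk K k * (RR Q (eK k) - 1) = 1 := by
  refine VV_ext fun I γ => ?_
  simp only [Module.End.mul_apply, LinearMap.sub_apply, Module.End.one_apply, RR_single, map_sub, Sk_single]
  rw [K.mc_g]
  have h1 : (K.mc γ + eK k) k = K.mc γ k + 1 := by simp [eK]
  rw [h1]
  have h2 : (fun j : ℤ => γ * Q.g (eK k) * Q.g (m1 (j - (K.mc γ k + 1)) k)) =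
      fun j => γ * Q.g (m1 (j - K.mc γ k) k) := by
    funext j
    rw [mul_assoc, ← Q.g_add]
    congr 2
    have : eK k = m1 1 k := by simp [m1]
    rw [this, ← m1_add]; congr 1; ring
  rw [h2, slist_succ]
  simp [m1, g_zero]

theorem RR_sumL (u : L6) (I : Fin 64) (γ0 : ℤ → G) (m : ℤ) :
    RR Q u (sumL I (slist γ0 m)) = sumL I (slist (fun j => γ0 j * Q.g u) m) := by
  unfold sumL
  rw [map_list_sum, List.map_map]
  unfold slist
  split_ifs
  · rw [List.map_map, List.map_map]; congr 2; funext j; simp [RR_single]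
  · rw [List.map_map, List.map_map]; congr 2; funext j; simp [RR_single]

theorem RR_Sk (k : Fin 6) : (RR Q (eK k) - 1) * Sk K k = 1 - Pg K k := by
  refine VV_ext fun I γ => ?_
  simp only [Module.End.mul_apply, LinearMap.sub_apply, Module.End.one_apply, Sk_single, RR_sumL]
  have h2 : (fun j : ℤ => γ * Q.g (m1 (j - K.mc γ k) k) * Q.g (eK k)) =
      fun j => (fun j : ℤ => γ * Q.g (m1 (j - K.mc γ k) k)) (j + 1) := by
    funext j
    rw [mul_assoc, ← Q.g_add]
    dsimp only
    congr 2
    have : eK k = m1 1 k := by simp [m1]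
    rw [this, ← m1_add]; congr 1; ring
  rw [h2]
  have key : ∀ (γ0 : ℤ → G) (m : ℤ), sumL I (slist (fun j => γ0 (j + 1)) m) - sumL I (slist γ0 m) =
      Finsupp.single (I, γ0 m) 1 - Finsupp.single (I, γ0 0) 1 := by
    intro γ0 m
    induction m using Int.induction_on with
    | zero => simp [slist_zero, sumL]
    | succ n ih =>
      rw [slist_succ, slist_succ, add_sub_add_comm, ih]; abel
    | pred n ih =>
      have e : (-(n : ℤ)) = (-(n:ℤ) - 1) + 1 := by ring
      rw [e, slist_succ, slist_succ, add_sub_add_comm] at ih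
      have := eq_sub_of_add_eq ih
      rw [this]; 
      abel_nf
  rw [key (fun j : ℤ => γ * Q.g (m1 (j - K.mc γ k) k))]
  simp [Pg, gop_single, m1, g_zero]

theorem RR_Sk_comm (j k : Fin 6) (h : j ≠ k) : RR Q (eK j) * Sk K k = Sk K k * RR Q (eK j) := by
  refine VV_ext fun I γ => ?_
  simp only [Module.End.mul_apply, RR_single, Sk_single, RR_sumL]
  rw [K.mc_g]
  have h1 : (K.mc γ + eK j) k = K.mc γ k := by simp [eK, Ne.symm h]
  rw [h1]
  congr 2
  funext i
  rw [mul_assoc, mul_assoc, ← Q.g_add, ← Q.g_add, add_comm]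

noncomputable def Hk (k : Fin 6) : VV G →ₗ[ℤ] VV G := Ep k * Sk K k
noncomputable def Pk (k : Fin 6) : VV G →ₗ[ℤ] VV G := eop id (fun I => if hasB k I then 0 else 1) * Pg K k

theorem Em_Ep_anti (j k : Fin 6) (h : j ≠ k) : Em j * Ep k = - (Ep k * Em j : VV G →ₗ[ℤ] VV G) := by
  refine VV_ext fun I γ => ?_
  simp only [Em, Ep, Module.End.mul_apply, LinearMap.neg_apply, eop_single, one_mul]
  rw [fl_comm k j, ← Finsupp.single_neg]
  congr 1
  have := sign_anti j k h I
  linarith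

theorem Em_Ep (k : Fin 6) : Em k * Ep k = (eop id (fun I => if hasB k I then 0 else 1) : VV G →ₗ[ℤ] VV G) := by
  refine VV_ext fun I γ => ?_
  simp only [Em, Ep, Module.End.mul_apply, eop_single, one_mul, fl_fl, sp_sm, id]
theorem Ep_Em (k : Fin 6) : Ep k * Em k = (eop id (fun I => if hasB k I then 1 else 0) : VV G →ₗ[ℤ] VV G) := by
  refine VV_ext fun I γ => ?_
  simp only [Em, Ep, Module.End.mul_apply, eop_single, one_mul, fl_fl, sm_sp, id]
theorem eop_sum (k : Fin 6) : (eop id (fun I => if hasB k I then 0 else 1) : VV G →ₗ[ℤ] VV G) +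
    eop id (fun I => if hasB k I then 1 else 0) = 1 := by
  refine VV_ext fun I γ => ?_
  simp only [LinearMap.add_apply, eop_single, Module.End.one_apply, id]
  cases hasB k I <;> simp

theorem term_comm (j k : Fin 6) : Em j * (RR Q (eK j) - 1) * Hk K k + Hk K k * (Em j * (RR Q (eK j) - 1)) =
    if j = k then 1 - Pk K k else 0 := by
  have c1 : ∀ (i j : Fin 6), (Ep i : VV G →ₗ[ℤ] VV G) * (RR Q (eK j)) = RR Q (eK j) * Ep i := fun i j => eop_gop _ _ _
  have c2 : ∀ (i j : Fin 6), (Em i : VV G →ₗ[ℤ] VV G) * (Sk K j) = Sk K j * Em i := fun i j => eop_gop _ _ _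
  have e1 : Em j * (RR Q (eK j) - 1) * Hk K k = Em j * Ep k * ((RR Q (eK j) - 1) * Sk K k) := by
    have : (RR Q (eK j) - 1) * Ep k = Ep k * (RR Q (eK j) - 1) := by
      rw [sub_mul, mul_sub, c1, one_mul, mul_one]
    rw [Hk, mul_assoc, ← mul_assoc _ (Ep k), this]; simp only [mul_assoc]
  have e2 : Hk K k * (Em j * (RR Q (eK j) - 1)) = Ep k * Em j * (Sk K k * (RR Q (eK j) - 1)) := by
    rw [Hk, mul_assoc, ← mul_assoc _ (Em j), ← c2]; simp only [mul_assoc]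
  rw [e1, e2]
  split_ifs with h
  · subst h
    rw [Sk_RR, RR_Sk, Em_Ep, Ep_Em, mul_sub, mul_one, mul_one, Pk, ← eop_sum j]
    abel
  · have : (RR Q (eK j) - 1) * Sk K k = Sk K k * (RR Q (eK j) - 1) := by
      rw [sub_mul, mul_sub, RR_Sk_comm K j k h, one_mul, mul_one]
    rw [this, Em_Ep_anti j k h, neg_mul, neg_add_cancel]

theorem dH (k : Fin 6) : dV Q * Hk K k + Hk K k * dV Q = 1 - Pk K k := by
  rw [dV_eq, Finset.sum_mul, Finset.mul_sum, ← Finset.sum_add_distrib]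
  simp_rw [term_comm]
  simp

end
end Z12

set_option linter.unusedSectionVars false
set_option linter.unusedVariables false
set_option linter.unusedSimpArgs false
namespace Z12

theorem ring_eo {R : Type*} [Ring R] (A A' B e o : R) (hee : e * e = e) (hoo : o * o = o) (heo : e * o = 0)
    (hoe : o * e = 0) (h1 : e + o = 1) (eB : e * B = B * o) (oB : o * B = B * e)
    (eA : e * A = A * e) (oA : o * A = A * o) (eA' : e * A' = A' * e) (oA' : o * A' = A' * o)
    (AB : A * B = B * A) (AB' : A' * B = B * A') (AA : A' * A = A * A') (hB : A * A' = - (B * B)) :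
    (B - A * o + A' * e) * (B + A * e - A' * o) = 0 ∧ (B + A * e - A' * o) * (B - A * o + A' * e) = 0 := by
  have t1 : A * o * B = B * A * e := by rw [mul_assoc, oB, ← mul_assoc, AB]
  have t2 : A * e * B = B * A * o := by rw [mul_assoc, eB, ← mul_assoc, AB]
  have t3 : A' * o * B = B * A' * e := by rw [mul_assoc, oB, ← mul_assoc, AB']
  have t4 : A' * e * B = B * A' * o := by rw [mul_assoc, eB, ← mul_assoc, AB']
  have u : ∀ (x y p r : R), p * y = y * p → (x * p) * (y * r) = x * y * (p * r) := by
    intro x y p r h; rw [mul_assoc, ← mul_assoc p, h]; simp only [mul_assoc]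
  have s : B * B = B * B * e + B * B * o := by rw [← mul_add, h1, mul_one]
  constructor
  · simp only [add_mul, sub_mul, mul_add, mul_sub, u _ _ _ _ eA, u _ _ _ _ oA, u _ _ _ _ eA', u _ _ _ _ oA',
      hee, hoo, heo, hoe, mul_zero, t1, t2, t3, t4, AA, hB, neg_mul]
    simp only [← mul_assoc]
    nth_rewrite 1 [s]; abel
  · simp only [add_mul, sub_mul, mul_add, mul_sub, u _ _ _ _ eA, u _ _ _ _ oA, u _ _ _ _ eA', u _ _ _ _ oA',
      hee, hoo, heo, hoe, mul_zero, t1, t2, t3, t4, AA, hB, neg_mul]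
    simp only [← mul_assoc]
    nth_rewrite 1 [s]; abel

section
variable {G : Type} [Group G] (Q : GD G)

noncomputable def pe : VV G →ₗ[ℤ] VV G := eop id (fun I => if qI I % 2 = 0 then 1 else 0)
noncomputable def po : VV G →ₗ[ℤ] VV G := eop id (fun I => if qI I % 2 = 0 then 0 else 1)
noncomputable def AV : VV G →ₗ[ℤ] VV G := sV Q - 1
noncomputable def NV : VV G →ₗ[ℤ] VV G := ∑ i ∈ Finset.range 12, sV Q ^ i

noncomputable def XX (n : ℕ) : VV G →ₗ[ℤ] VV G :=
  if n % 2 = 0 then bV Q - AV Q * po + NV Q * pe else bV Q + AV Q * pe - NV Q * po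

theorem opG_eop (T : Fin 64 → List Item) (f : G → L6 → G) (s s' : Fin 64 → ℤ)
    (h : ∀ I, ∀ it ∈ T I, s it.1 = s' I) : eop id s * opG T f = opG T f * eop id s' := by
  refine VV_ext fun I γ => ?_
  simp only [Module.End.mul_apply, eop_single, opG_single, one_smul, one_mul, map_list_sum, List.map_map]
  rw [List.smul_sum, List.map_map]
  congr 1
  refine List.map_congr_left fun it hit => ?_
  simp [h I it hit, mul_comm]

theorem pe_b : pe * bV Q = bV Q * po := opG_eop _ _ _ _ fun I it hit => by
  have := b_par I it hit
  split_ifs <;> omega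
theorem po_b : po * bV Q = bV Q * pe := opG_eop _ _ _ _ fun I it hit => by
  have := b_par I it hit
  split_ifs <;> omega
theorem pe_s : pe * sV Q = sV Q * pe := opG_eop _ _ _ _ fun I it hit => by
  have := (s_q I it hit).2
  split_ifs <;> omega
theorem po_s : po * sV Q = sV Q * po := opG_eop _ _ _ _ fun I it hit => by
  have := (s_q I it hit).2
  split_ifs <;> omega

theorem comm_A {x : VV G →ₗ[ℤ] VV G} (h : x * sV Q = sV Q * x) : x * AV Q = AV Q * x := by
  rw [AV, mul_sub, sub_mul, h, mul_one, one_mul]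
theorem comm_N {x : VV G →ₗ[ℤ] VV G} (h : x * sV Q = sV Q * x) : x * NV Q = NV Q * x := by
  rw [NV, Finset.mul_sum, Finset.sum_mul]
  exact Finset.sum_congr rfl fun i _ => (Commute.pow_right h i)

theorem A_N : AV Q * NV Q = - (bV Q * bV Q) := by
  rw [AV, NV, mul_geom_sum, V_pow]; abel

theorem pepo : (pe * pe : VV G →ₗ[ℤ] VV G) = pe ∧ (po * po : VV G →ₗ[ℤ] VV G) = po ∧
    (pe * po : VV G →ₗ[ℤ] VV G) = 0 ∧ (po * pe : VV G →ₗ[ℤ] VV G) = 0 ∧ (pe + po : VV G →ₗ[ℤ] VV G) = 1 := by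
  refine ⟨?_, ?_, ?_, ?_, ?_⟩ <;> refine VV_ext fun I γ => ?_ <;>
  simp only [Module.End.mul_apply, pe, po, eop_single, LinearMap.add_apply, Module.End.one_apply, id,
    LinearMap.zero_apply] <;>
  split_ifs <;> simp

theorem XX_XX (n : ℕ) : XX Q n * XX Q (n+1) = 0 := by
  obtain ⟨h1, h2, h3, h4, h5⟩ := pepo (G := G)
  have key := ring_eo (AV Q) (NV Q) (bV Q) pe po h1 h2 h3 h4 h5 (pe_b Q) (po_b Q)
    (comm_A Q (pe_s Q)) (comm_A Q (po_s Q)) (comm_N Q (pe_s Q)) (comm_N Q (po_s Q))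
    (comm_A Q (V_comm Q).symm).symm (comm_N Q (V_comm Q).symm).symm
    (comm_N Q (comm_A Q rfl).symm).symm (A_N Q)
  unfold XX
  by_cases h : n % 2 = 0
  · rw [if_pos h, if_neg (by omega)]; exact key.1
  · rw [if_neg h, if_pos (by omega)]; exact key.2

/-! filtration -/
def WW (G : Type) (r : ℕ) : Submodule ℤ (VV G) := Finsupp.supported ℤ ℤ {p | r ≤ qI p.1}

theorem WW_mono {r r' : ℕ} (h : r ≤ r') : WW G r' ≤ WW G r :=
  Finsupp.supported_mono fun _ hp => h.trans hp
theorem WW_zero (v : VV G) : v ∈ WW G 0 := (Finsupp.mem_supported _ _).2 fun p _ => Nat.zero_le _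

theorem WW_le (f : VV G →ₗ[ℤ] VV G) (r r' : ℕ)
    (h : ∀ I γ, r ≤ qI I → f (Finsupp.single (I, γ) 1) ∈ WW G r') (v) (hv : v ∈ WW G r) : f v ∈ WW G r' := by
  have : v = v.sum fun p c => c • Finsupp.single p (1 : ℤ) := by
    simp
  rw [this, Finsupp.sum, map_sum]
  refine Submodule.sum_mem _ fun p hp => ?_
  rw [map_smul]
  refine Submodule.smul_mem _ _ (h p.1 p.2 ((Finsupp.mem_supported ℤ v).1 hv hp))

theorem single_WW (I : Fin 64) (γ : G) (c : ℤ) (r : ℕ) (h : r ≤ qI I) : Finsupp.single (I, γ) c ∈ WW G r :=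
  Finsupp.single_mem_supported _ _ h

theorem opG_WW (T : Fin 64 → List Item) (f : G → L6 → G) (a : ℕ)
    (h : ∀ I, ∀ it ∈ T I, qI I + a ≤ qI it.1) (r : ℕ) (v) (hv : v ∈ WW G r) : opG T f v ∈ WW G (r + a) := by
  refine WW_le _ r _ (fun I γ hI => ?_) v hv
  rw [opG_single]
  refine Submodule.smul_mem _ _ (list_sum_mem fun x hx => ?_)
  obtain ⟨it, hit, rfl⟩ := List.mem_map.1 hx
  have := h I it hit
  exact single_WW _ _ _ _ (by omega)

theorem rV_WW (r : ℕ) (v) (hv : v ∈ WW G r) : rV Q v ∈ WW G (r + 1) := opG_WW _ _ 1 r_q r v hv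
theorem sV_WW (r : ℕ) (v) (hv : v ∈ WW G r) : sV Q v ∈ WW G r :=
  opG_WW _ _ 0 (fun I it hit => (s_q I it hit).1) r v hv
theorem eopid_WW (s : Fin 64 → ℤ) (r : ℕ) (v) (hv : v ∈ WW G r) : eop id s v ∈ WW G r :=
  WW_le _ r r (fun I γ h => by rw [eop_single]; exact single_WW _ _ _ _ h) v hv
theorem gop_WW (h : G → List (G × ℤ)) (r : ℕ) (v) (hv : v ∈ WW G r) : gop h v ∈ WW G r :=
  WW_le _ r r (fun I γ hI => by
    rw [gop_single]
    refine Submodule.smul_mem _ _ (list_sum_mem fun x hx => ?_)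
    obtain ⟨it, hit, rfl⟩ := List.mem_map.1 hx
    exact single_WW _ _ _ _ hI) v hv
theorem Ep_WW (k) (r : ℕ) (v) (hv : v ∈ WW G r) : Ep k v ∈ WW G (r + 1) :=
  WW_le _ r _ (fun I γ hI => by
    rw [Ep, eop_single, one_mul]
    by_cases h : sp k I = 0
    · rw [h, Finsupp.single_zero]; exact Submodule.zero_mem _
    · exact single_WW _ _ _ _ (by rw [sp_q k I h]; omega)) v hv
theorem spow_WW (n r : ℕ) (v) (hv : v ∈ WW G r) : (sV Q ^ n) v ∈ WW G r := by
  induction n with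
  | zero => exact hv
  | succ n ih => rw [pow_succ', Module.End.mul_apply]; exact sV_WW Q _ _ ih
theorem AV_WW (r : ℕ) (v) (hv : v ∈ WW G r) : AV Q v ∈ WW G r :=
  Submodule.sub_mem _ (sV_WW Q _ _ hv) hv
theorem NV_WW (r : ℕ) (v) (hv : v ∈ WW G r) : NV Q v ∈ WW G r := by
  rw [NV, LinearMap.sum_apply]
  exact Submodule.sum_mem _ fun i _ => spow_WW Q _ _ _ hv

theorem XX_d (n r : ℕ) (v) (hv : v ∈ WW G r) : XX Q n v - dV Q v ∈ WW G r := by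
  have hr := WW_mono (Nat.le_succ r) (rV_WW Q r v hv)
  have a1 := AV_WW Q _ _ (eopid_WW (fun I => if qI I % 2 = 0 then 1 else 0) r v hv)
  have a2 := AV_WW Q _ _ (eopid_WW (fun I => if qI I % 2 = 0 then 0 else 1) r v hv)
  have b1 := NV_WW Q _ _ (eopid_WW (fun I => if qI I % 2 = 0 then 1 else 0) r v hv)
  have b2 := NV_WW Q _ _ (eopid_WW (fun I => if qI I % 2 = 0 then 0 else 1) r v hv)
  unfold XX
  rw [bV_eq]
  split_ifs
  · have : (dV Q + rV Q - AV Q * po + NV Q * pe : VV G →ₗ[ℤ] VV G) v - dV Q v = rV Q v - AV Q (po v) + NV Q (pe v) := by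
      simp only [LinearMap.add_apply, LinearMap.sub_apply, Module.End.mul_apply]; abel
    rw [this]
    exact Submodule.add_mem _ (Submodule.sub_mem _ hr a2) b1
  · have : (dV Q + rV Q + AV Q * pe - NV Q * po : VV G →ₗ[ℤ] VV G) v - dV Q v = rV Q v + AV Q (pe v) - NV Q (po v) := by
      simp only [LinearMap.add_apply, LinearMap.sub_apply, Module.End.mul_apply]; abel
    rw [this]
    exact Submodule.sub_mem _ (Submodule.add_mem _ hr a1) b2

theorem dV_WW (r : ℕ) (v) (hv : v ∈ WW G (r+1)) : dV Q v ∈ WW G r := by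
  rw [dV_eq, LinearMap.sum_apply]
  refine Submodule.sum_mem _ fun k _ => ?_
  rw [Module.End.mul_apply]
  have hw : (RR Q (eK k) - 1) v ∈ WW G (r+1) := Submodule.sub_mem _ (gop_WW _ _ _ hv) hv
  refine WW_le (Em k) (r+1) r (fun I γ hI => ?_) _ hw
  rw [Em, eop_single, one_mul]
  refine single_WW _ _ _ _ ?_
  have : ∀ k : Fin 6, ∀ I, qI I ≤ qI (fl k I) + 1 := by decide +kernel
  have := this k I
  omega

theorem XX_WW (n r : ℕ) (v) (hv : v ∈ WW G (r+1)) : XX Q n v ∈ WW G r := by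
  have := Submodule.add_mem _ (WW_mono (Nat.le_succ r) (XX_d Q n (r+1) v hv)) (dV_WW Q r v hv)
  simpa using this

variable {Q} (K : GC Q)

theorem Hk_WW (k r) (v) (hv : v ∈ WW G r) : Hk K k v ∈ WW G (r+1) := by
  rw [Hk, Module.End.mul_apply]; exact Ep_WW k r _ (gop_WW _ _ _ hv)
theorem Pk_WW (k r) (v) (hv : v ∈ WW G r) : Pk K k v ∈ WW G r := by
  rw [Pk, Module.End.mul_apply]; exact eopid_WW _ r _ (gop_WW _ _ _ hv)

theorem step (n r : ℕ) (hr : r ≤ n) (k : Fin 6) (z : VV G) (hz : z ∈ WW G r) (hX : XX Q n z ∈ WW G n) :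
    (z - XX Q (n+1) (Hk K k z)) - Pk K k z ∈ WW G (r+1) := by
  have h1 := Hk_WW K k r z hz
  have h2 := XX_d Q (n+1) (r+1) _ h1
  have h3 : dV Q z ∈ WW G r := by
    have a := XX_d Q n r z hz
    have b := WW_mono hr hX
    have := Submodule.sub_mem _ b a
    simpa using this
  have h4 := Hk_WW K k r _ h3
  have h5 := LinearMap.congr_fun (dH K k) z
  simp only [LinearMap.add_apply, Module.End.mul_apply, LinearMap.sub_apply, Module.End.one_apply] at h5
  have : (z - XX Q (n+1) (Hk K k z)) - Pk K k z =
      Hk K k (dV Q z) - (XX Q (n+1) (Hk K k z) - dV Q (Hk K k z)) := by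
    have : z - Pk K k z = dV Q (Hk K k z) + Hk K k (dV Q z) := h5.symm
    rw [sub_right_comm, this]; abel
  rw [this]
  exact Submodule.sub_mem _ h4 h2

theorem steps (n r : ℕ) (hr : r ≤ n) (l : List (Fin 6)) (z : VV G) (hz : z ∈ WW G r) (hX : XX Q n z ∈ WW G n) :
    ∃ y, (z - XX Q (n+1) y) - (l.foldl (fun v k => Pk K k v) z) ∈ WW G (r+1) := by
  have key : ∀ (l : List (Fin 6)) (z w : VV G), z ∈ WW G r → XX Q n z ∈ WW G n → z - w ∈ WW G (r+1) →
      ∃ y, (z - XX Q (n+1) y) - (l.foldl (fun v k => Pk K k v) w) ∈ WW G (r+1) := by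
    intro l
    induction l with
    | nil => intro z w hz hX hw; exact ⟨0, by simpa using hw⟩
    | cons k l ih =>
      intro z w hz hX hw
      have h1 := step K n r hr k z hz hX
      have h2 := Pk_WW K k _ _ hw
      have h3 := Pk_WW K k _ _ hz
      have g1 : z - XX Q (n+1) (Hk K k z) ∈ WW G r := by
        have := Submodule.add_mem _ (WW_mono (Nat.le_succ r) h1) h3
        simpa using this
      have g2 : XX Q n (z - XX Q (n+1) (Hk K k z)) ∈ WW G n := by
        have h0 := LinearMap.congr_fun (XX_XX Q n) (Hk K k z)
        rw [Module.End.mul_apply] at h0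
        rw [map_sub, h0]; simpa using hX
      have g3 : z - XX Q (n+1) (Hk K k z) - Pk K k w ∈ WW G (r+1) := by
        have := Submodule.add_mem _ h1 h2
        rw [map_sub] at this
        convert this using 1; abel
      obtain ⟨y, hy⟩ := ih _ _ g1 g2 g3
      refine ⟨Hk K k z + y, ?_⟩
      rw [map_add, List.foldl_cons, ← sub_sub]
      exact hy
  exact key l z z hz hX (by simp)

/-- composite of the projections -/
noncomputable def PP : VV G →ₗ[ℤ] VV G := Pk K 5 * Pk K 4 * Pk K 3 * Pk K 2 * Pk K 1 * Pk K 0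

theorem PP_fold (z : VV G) : (List.finRange 6).foldl (fun v k => Pk K k v) z = PP K z := by
  simp [List.finRange_succ, PP]

theorem Pk_single (k I) (γ : G) : Pk K k (Finsupp.single (I, γ) 1) =
    if hasB k I then 0 else Finsupp.single (I, γ * Q.g (m1 (- K.mc γ k) k)) 1 := by
  rw [Pk, Module.End.mul_apply, Pg, gop_single]
  simp only [List.map_cons, List.map_nil, List.sum_cons, List.sum_nil, add_zero, one_smul, eop_single, id]
  cases hasB k I <;> simp

end
end Z12

set_option linter.unusedSectionVars false
set_option linter.unusedVariables false
set_option linter.unusedSimpArgs false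
namespace Z12

section
variable {G : Type} [Group G] {Q : GD G} (K : GC Q)

theorem PP_zero (I : Fin 64) (γ : G) (h : 1 ≤ qI I) : PP K (Finsupp.single (I, γ) 1) = 0 := by
  obtain ⟨k, hk⟩ := hasB_of_q I h
  have key : ∀ (l : List (Fin 6)) (δ : G), k ∈ l ∨ False →
      (l.foldl (fun v k => Pk K k v) (Finsupp.single (I, δ) 1)) = 0 := by
    have h0 : ∀ l : List (Fin 6), l.foldl (fun v k => Pk K k v) (0 : VV G) = 0 := by
      intro l
      induction l with
      | nil => rfl
      | cons a l ih => rw [List.foldl_cons, map_zero, ih]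
    intro l
    induction l with
    | nil => intro δ h; simp at h
    | cons a l ih =>
      intro δ h
      rw [List.foldl_cons, Pk_single]
      by_cases ha : hasB a I = true
      · rw [if_pos ha, h0]
      · rw [if_neg ha]
        refine ih _ (Or.inl ?_)
        rcases h with h | h
        · rcases List.mem_cons.1 h with h | h
          · subst h; exact absurd hk ha
          · exact h
        · exact h.elim
  rw [← PP_fold]
  exact key _ γ (Or.inl (List.mem_finRange k))

theorem PP_WW (z : VV G) (hz : z ∈ WW G 1) : PP K z = 0 := by
  have : z = z.sum fun p c => c • Finsupp.single p (1 : ℤ) := by simp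
  rw [this, Finsupp.sum, map_sum]
  refine Finset.sum_eq_zero fun p hp => ?_
  rw [map_smul, PP_zero K p.1 p.2 ((Finsupp.mem_supported ℤ z).1 hz hp), smul_zero]

/-- projection to the cyclic quotient -/
noncomputable def EE : VV G →ₗ[ℤ] (ZMod 12 → ℤ) :=
  Finsupp.linearCombination ℤ (fun p => if p.1 = 0 then Pi.single (K.jc p.2) 1 else 0)

theorem EE_single (I : Fin 64) (γ : G) (c : ℤ) : EE K (Finsupp.single (I, γ) c) =
    c • if I = 0 then Pi.single (K.jc γ) 1 else 0 := by
  simp [EE, Finsupp.linearCombination_single]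

theorem EE_WW (z : VV G) (hz : z ∈ WW G 1) : EE K z = 0 := by
  rw [EE, Finsupp.linearCombination_apply, Finsupp.sum]
  refine Finset.sum_eq_zero fun p hp => ?_
  have h1 : 1 ≤ qI p.1 := (Finsupp.mem_supported ℤ z).1 hz hp
  have : p.1 ≠ 0 := fun h => by
    have := (q_zero p.1).2 h
    omega
  rw [if_neg this, smul_zero]

def SS : (ZMod 12 → ℤ) →ₗ[ℤ] (ZMod 12 → ℤ) := LinearMap.funLeft ℤ ℤ (fun j => j - 1)
theorem SS_single (j : ZMod 12) : SS (Pi.single j 1) = Pi.single (j + 1) 1 := by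
  funext i
  simp only [SS, LinearMap.funLeft_apply, Pi.single_apply, sub_eq_iff_eq_add]

theorem EE_s (z : VV G) : EE K (sV Q z) = SS (EE K z) := by
  have : EE K ∘ₗ sV Q = SS ∘ₗ EE K := by
    refine VV_ext fun I γ => ?_
    rw [LinearMap.comp_apply, LinearMap.comp_apply]
    by_cases h : I = 0
    · subst h
      rw [sV, opG_single, s_zero]
      simp [EE_single, SS_single, g_zero, K.jc_t]
    · have hq : 1 ≤ qI I := Nat.one_le_iff_ne_zero.2 fun h' => h ((q_zero I).1 h')
      rw [EE_WW K _ (sV_WW Q 1 _ (single_WW _ _ _ _ hq)), EE_single, if_neg h]; simp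
  exact LinearMap.congr_fun this z

theorem EE_d (z : VV G) : EE K (dV Q z) = 0 := by
  rw [dV_eq, LinearMap.sum_apply, map_sum]
  refine Finset.sum_eq_zero fun k _ => ?_
  have : EE K ∘ₗ (Em k * (RR Q (eK k) - 1)) = 0 := by
    refine VV_ext fun I γ => ?_
    simp only [LinearMap.comp_apply, Module.End.mul_apply, LinearMap.sub_apply, RR_single, Module.End.one_apply,
      map_sub, Em, eop_single, EE_single, K.jc_g, sub_self, LinearMap.zero_apply]
  exact LinearMap.congr_fun this z

theorem EE_b (z : VV G) : EE K (bV Q z) = 0 := by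
  rw [bV_eq, LinearMap.add_apply, map_add, EE_d, EE_WW K _ (rV_WW Q 0 z (WW_zero z)), zero_add]

theorem EE_pe (z : VV G) : EE K (pe z) = EE K z := by
  have : EE K ∘ₗ pe = EE K := by
    refine VV_ext fun I γ => ?_
    rw [LinearMap.comp_apply, pe, eop_single, EE_single, EE_single]
    by_cases h : I = 0
    · subst h; simp [qI]
    · simp [h]
  exact LinearMap.congr_fun this z
theorem po_WW (z : VV G) : po z ∈ WW G 1 := by
  refine WW_le po 0 1 (fun I γ _ => ?_) z (WW_zero z)
  rw [po, eop_single]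
  by_cases h : qI I = 0
  · simp [h]
  · exact single_WW _ _ _ _ (by simp only [id]; omega)

def NN : (ZMod 12 → ℤ) →ₗ[ℤ] (ZMod 12 → ℤ) := ∑ i ∈ Finset.range 12, SS ^ i

theorem EE_spow (n : ℕ) (z : VV G) : EE K ((sV Q ^ n) z) = (SS ^ n) (EE K z) := by
  induction n with
  | zero => rfl
  | succ n ih => rw [pow_succ', pow_succ', Module.End.mul_apply, Module.End.mul_apply, EE_s, ih]

theorem EE_N (z : VV G) : EE K (NV Q z) = NN (EE K z) := by
  rw [NV, NN, LinearMap.sum_apply, LinearMap.sum_apply, map_sum]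
  exact Finset.sum_congr rfl fun i _ => EE_spow K i z

theorem EE_X (n : ℕ) (z : VV G) : EE K (XX Q n z) =
    if n % 2 = 0 then NN (EE K z) else SS (EE K z) - EE K z := by
  unfold XX
  split_ifs
  · simp only [LinearMap.add_apply, LinearMap.sub_apply, Module.End.mul_apply, map_add, map_sub, EE_b, EE_N, EE_pe]
    rw [EE_WW K _ (AV_WW Q 1 _ (po_WW z))]; simp
  · simp only [LinearMap.add_apply, LinearMap.sub_apply, Module.End.mul_apply, map_add, map_sub, EE_b, AV,
      Module.End.one_apply, EE_s, EE_pe]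
    rw [EE_WW K _ (NV_WW Q 1 _ (po_WW z))]; simp

theorem NN_apply (c : ZMod 12 → ℤ) (j : ZMod 12) : NN c j = c 0 + c 1 + c 2 + c 3 + c 4 + c 5 + c 6 + c 7 + c 8
    + c 9 + c 10 + c 11 := by
  have h : ∀ (n : ℕ) (j : ZMod 12), (SS ^ n) c j = c (j - n) := by
    intro n
    induction n with
    | zero => intro j; simp
    | succ n ih => intro j; rw [pow_succ', Module.End.mul_apply, SS, LinearMap.funLeft_apply]; rw [SS] at ih
                   rw [ih]; congr 1; push_cast; ring
  rw [NN, LinearMap.sum_apply, Finset.sum_apply]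
  simp_rw [h]
  have : ∑ i ∈ Finset.range 12, c (j - i) = ∑ i : ZMod 12, c (j - i) := by
    rw [Finset.sum_range]
    rfl
  rw [this]
  refine (Equiv.sum_comp (Equiv.subLeft j) c).trans ?_
  have h12 : ∀ c : Fin 12 → ℤ, ∑ i : Fin 12, c i = c 0 + c 1 + c 2 + c 3 + c 4 + c 5 + c 6 + c 7 + c 8
      + c 9 + c 10 + c 11 := by
    intro c
    simp only [Fin.sum_univ_succ, Fin.sum_univ_zero, add_zero, ← add_assoc]
    rfl
  exact h12 c

theorem cyc1 (c : ZMod 12 → ℤ) (h : NN c = 0) : ∃ w, SS w - w = c := by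
  have h0 := congrFun h 0
  rw [NN_apply, Pi.zero_apply] at h0
  refine ⟨(![-c 0, -(c 0 + c 1), -(c 0 + c 1 + c 2), -(c 0 + c 1 + c 2 + c 3), -(c 0 + c 1 + c 2 + c 3 + c 4),
    -(c 0 + c 1 + c 2 + c 3 + c 4 + c 5), -(c 0 + c 1 + c 2 + c 3 + c 4 + c 5 + c 6),
    -(c 0 + c 1 + c 2 + c 3 + c 4 + c 5 + c 6 + c 7),
    -(c 0 + c 1 + c 2 + c 3 + c 4 + c 5 + c 6 + c 7 + c 8),
    -(c 0 + c 1 + c 2 + c 3 + c 4 + c 5 + c 6 + c 7 + c 8 + c 9),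
    -(c 0 + c 1 + c 2 + c 3 + c 4 + c 5 + c 6 + c 7 + c 8 + c 9 + c 10), 0] : Fin 12 → ℤ), ?_⟩
  funext j
  change Fin 12 at j
  fin_cases j
  · change (0 : ℤ) - (-c 0) = c 0
    ring
  · change (-c 0) - (-(c 0 + c 1)) = c 1
    ring
  · change (-(c 0 + c 1)) - (-(c 0 + c 1 + c 2)) = c 2
    ring
  · change (-(c 0 + c 1 + c 2)) - (-(c 0 + c 1 + c 2 + c 3)) = c 3
    ring
  · change (-(c 0 + c 1 + c 2 + c 3)) - (-(c 0 + c 1 + c 2 + c 3 + c 4)) = c 4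
    ring
  · change (-(c 0 + c 1 + c 2 + c 3 + c 4)) - (-(c 0 + c 1 + c 2 + c 3 + c 4 + c 5)) = c 5
    ring
  · change (-(c 0 + c 1 + c 2 + c 3 + c 4 + c 5)) - (-(c 0 + c 1 + c 2 + c 3 + c 4 + c 5 + c 6)) = c 6
    ring
  · change (-(c 0 + c 1 + c 2 + c 3 + c 4 + c 5 + c 6)) - (-(c 0 + c 1 + c 2 + c 3 + c 4 + c 5 + c 6 + c 7)) = c 7
    ring
  · change (-(c 0 + c 1 + c 2 + c 3 + c 4 + c 5 + c 6 + c 7)) -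
      (-(c 0 + c 1 + c 2 + c 3 + c 4 + c 5 + c 6 + c 7 + c 8)) = c 8
    ring
  · change (-(c 0 + c 1 + c 2 + c 3 + c 4 + c 5 + c 6 + c 7 + c 8)) -
      (-(c 0 + c 1 + c 2 + c 3 + c 4 + c 5 + c 6 + c 7 + c 8 + c 9)) = c 9
    ring
  · change (-(c 0 + c 1 + c 2 + c 3 + c 4 + c 5 + c 6 + c 7 + c 8 + c 9)) -
      (-(c 0 + c 1 + c 2 + c 3 + c 4 + c 5 + c 6 + c 7 + c 8 + c 9 + c 10)) = c 10
    ring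
  · change (-(c 0 + c 1 + c 2 + c 3 + c 4 + c 5 + c 6 + c 7 + c 8 + c 9 + c 10)) - 0 = c 11
    linarith

theorem cyc2 (c : ZMod 12 → ℤ) (h : SS c - c = 0) : ∃ w, NN w = c := by
  have h1 : ∀ j, c (j - 1) = c j := fun j => by
    have := congrFun h j
    exact sub_eq_zero.1 this
  have h2 : ∀ n : ℕ, c (n : ZMod 12) = c 0 := by
    intro n
    induction n with
    | zero => simp
    | succ n ih => rw [← h1, ← ih]; congr 1; push_cast; ring
  refine ⟨Pi.single 0 (c 0), ?_⟩
  funext j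
  rw [NN_apply]
  have hj : c j = c 0 := by
    have := h2 j.val
    rwa [ZMod.natCast_zmod_val] at this
  rw [hj]
  simp only [Pi.single_apply]
  rw [if_pos trivial]
  iterate 11 rw [if_neg (by decide)]
  ring

variable (Q) in
noncomputable def secE : (ZMod 12 → ℤ) →ₗ[ℤ] VV G :=
  ∑ j : ZMod 12, (Finsupp.lsingle (0, Q.τ ^ j.val)) ∘ₗ LinearMap.proj j

theorem jc_pow (n : ℕ) : K.jc (Q.τ ^ n) = n ∧ K.mc (Q.τ ^ n) = 0 := by
  induction n with
  | zero => simp [K.jc_one, K.mc_one]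
  | succ n ih =>
    rw [pow_succ, K.jc_t, K.mc_t, ih.1, ih.2]
    refine ⟨by push_cast; rfl, ?_⟩
    funext i; fin_cases i <;> simp [xa]

theorem secE_single (j : ZMod 12) : secE Q (Pi.single j 1) = Finsupp.single (0, Q.τ ^ j.val) 1 := by
  rw [secE, LinearMap.sum_apply, Finset.sum_eq_single j]
  · simp
  · intro b _ hb; simp [Pi.single_apply, hb]
  · simp

theorem EE_sec (w : ZMod 12 → ℤ) : EE K (secE Q w) = w := by
  have : EE K ∘ₗ secE Q = LinearMap.id := by
    refine LinearMap.pi_ext' fun j => LinearMap.ext_ring ?_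
    simp only [LinearMap.comp_apply, LinearMap.coe_single, LinearMap.id_apply]
    rw [secE_single, EE_single, (jc_pow K _).1]
    simp
  exact LinearMap.congr_fun this w

theorem PP_E (z : VV G) : PP K z = secE Q (EE K z) := by
  have : PP K = secE Q ∘ₗ EE K := by
    refine VV_ext fun I γ => ?_
    by_cases h : I = 0
    · subst h
      rw [LinearMap.comp_apply, EE_single, if_pos rfl, one_smul, secE_single]
      have hP : ∀ k (γ : G), Pk K k (Finsupp.single (0, γ) 1) =
          Finsupp.single (0, γ * Q.g (m1 (- K.mc γ k) k)) 1 := fun k γ => by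
        rw [Pk_single, hasB_zero]; simp
      simp only [PP, Module.End.mul_apply, hP]
      congr 2
      apply K.inj
      · simp only [K.jc_g, (jc_pow K _).1, ZMod.natCast_zmod_val]
      · simp only [K.mc_g, (jc_pow K _).2]
        funext i
        fin_cases i <;> simp [m1, eK]
    · have hq : 1 ≤ qI I := Nat.one_le_iff_ne_zero.2 fun h' => h ((q_zero I).1 h')
      rw [PP_zero K I γ hq, LinearMap.comp_apply, EE_single, if_neg h]; simp
  exact LinearMap.congr_fun this z

theorem exact_main (n : ℕ) (z : VV G) (hX : XX Q n z ∈ WW G n) (hE : EE K (XX Q n z) = 0) :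
    ∃ y, z - XX Q (n+1) y ∈ WW G (n+1) := by
  have hXX : ∀ y, XX Q n (XX Q (n+1) y) = 0 := fun y => LinearMap.congr_fun (XX_XX Q n) y
  -- first kill the cyclic part
  have h0 : ∃ w, EE K (XX Q (n+1) (secE Q w)) = EE K z := by
    rw [EE_X] at hE
    simp_rw [EE_X, EE_sec]
    by_cases h : n % 2 = 0
    · rw [if_pos h] at hE
      simp_rw [if_neg (show ¬ (n+1) % 2 = 0 by omega)]
      exact cyc1 _ hE
    · rw [if_neg h] at hE
      simp_rw [if_pos (show (n+1) % 2 = 0 by omega)]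
      exact cyc2 _ hE
  obtain ⟨w, hw⟩ := h0
  have key : ∀ r, r ≤ n → ∃ y, z - XX Q (n+1) y ∈ WW G (r+1) := by
    intro r
    induction r with
    | zero =>
      intro hr
      have hz' : XX Q n (z - XX Q (n+1) (secE Q w)) ∈ WW G n := by rw [map_sub, hXX, sub_zero]; exact hX
      obtain ⟨y, hy⟩ := steps K n 0 hr (List.finRange 6) _ (WW_zero _) hz'
      rw [PP_fold, PP_E, map_sub, hw, sub_self, map_zero, sub_zero, sub_sub, ← map_add] at hy
      exact ⟨_, hy⟩
    | succ r ih =>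
      intro hr
      obtain ⟨y1, h1⟩ := ih (by omega)
      have hz' : XX Q n (z - XX Q (n+1) y1) ∈ WW G n := by rw [map_sub, hXX, sub_zero]; exact hX
      obtain ⟨y, hy⟩ := steps K n (r+1) hr (List.finRange 6) _ h1 hz'
      rw [PP_fold, PP_WW K _ (WW_mono (by omega) h1), sub_zero, sub_sub, ← map_add] at hy
      exact ⟨_, hy⟩
  exact key n le_rfl

end
end Z12

set_option linter.unusedSectionVars false
set_option linter.unusedVariables false
set_option linter.unusedSimpArgs false
namespace Z12

abbrev Gam : Type := Crystal.Crys 12 holM holM_pow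

def CM : Matrix (Fin 6) (Fin 6) ℤ := !![1,0,0,0,1,0; 1,1,0,0,0,1; 1,1,1,0,0,0; 0,1,1,1,0,0; 0,0,1,1,0,0; 0,0,0,1,0,0]
def CI : Matrix (Fin 6) (Fin 6) ℤ := !![0,0,1,-1,0,1; 0,0,0,1,-1,0; 0,0,0,0,1,-1; 0,0,0,0,0,1; 1,0,-1,1,0,-1; 0,1,-1,0,1,-1]
def XA : Matrix (Fin 6) (Fin 6) ℤ := !![0,0,0,-1,0,1; 1,0,0,0,0,0; 0,1,0,1,0,0; 0,0,1,0,0,0; 0,0,0,0,0,-1; 0,0,0,0,1,-1]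
theorem CM_CI : CM * CI = 1 := by decide +kernel
theorem CI_CM : CI * CM = 1 := by decide +kernel
theorem hol_CM : holM * CM = CM * XA := by decide +kernel
theorem XA_xa (u : L6) : XA *ᵥ u = xa u := by
  funext i
  fin_cases i <;> simp [XA, xa, Matrix.mulVec, dotProduct, Fin.sum_univ_six] <;> ring

theorem act_one (l : Crystal.Lat 6) :
    (Crystal.matAction 12 holM holM_pow (Multiplicative.ofAdd 1)) l = Multiplicative.ofAdd (holM *ᵥ l.toAdd) := by
  change (((Crystal.glToAut 6 _) ^ (ZMod.val (1 : ZMod 12))) : MulAut (Crystal.Lat 6)) l = _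
  have : ZMod.val (1 : ZMod 12) = 1 := rfl
  rw [this, pow_one]
  rfl

abbrev ph (z : ZMod 12) : MulAut (Crystal.Lat 6) := Crystal.matAction 12 holM holM_pow (Multiplicative.ofAdd z)

theorem ph_add (a b : ZMod 12) (l) : ph (a + b) l = ph a (ph b l) := by
  simp only [ph, ofAdd_add, map_mul, MulAut.mul_apply]

def gl (u : L6) : Crystal.Lat 6 := Multiplicative.ofAdd (CM *ᵥ u)

theorem ph_gl (u : L6) : ph 1 (gl u) = gl (xa u) := by
  rw [ph, act_one, gl, gl, toAdd_ofAdd, Matrix.mulVec_mulVec, hol_CM, ← Matrix.mulVec_mulVec, XA_xa]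

theorem gl_add (u v : L6) : gl (u + v) = gl u * gl v := by
  simp [gl, Matrix.mulVec_add]

def cl (l : Crystal.Lat 6) : L6 := CI *ᵥ l.toAdd

theorem cl_gl (u : L6) : cl (gl u) = u := by
  simp [cl, gl, CI_CM]
theorem gl_cl (l : Crystal.Lat 6) : gl (cl l) = l := by
  simp [cl, gl, CM_CI]
theorem cl_mul (a b : Crystal.Lat 6) : cl (a * b) = cl a + cl b := by
  simp [cl, Matrix.mulVec_add]

def tauG : Gam := SemidirectProduct.inr (Multiplicative.ofAdd (-1))

def QQ : GD Gam where
  g u := SemidirectProduct.inl (gl u)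
  τ := tauG
  g_add u v := by rw [gl_add, map_mul]
  g_tau u := by
    apply SemidirectProduct.ext
    · simp only [tauG, SemidirectProduct.mul_left, SemidirectProduct.left_inl, SemidirectProduct.left_inr, SemidirectProduct.right_inl,
        SemidirectProduct.right_inr, map_one, mul_one, one_mul]
      rw [← ph_gl]
      change gl u = ph (-1) (ph 1 (gl u))
      rw [← ph_add]
      simp [ph]
    · simp [tauG]
  tau_pow := by
    rw [tauG, ← map_pow]
    have : (Multiplicative.ofAdd (-1 : ZMod 12)) ^ 12 = 1 := by decide
    rw [this, map_one]

def KK : GC QQ where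
  jc γ := - γ.right.toAdd
  mc γ := cl (ph (- γ.right.toAdd) γ.left)
  jc_g γ u := by simp [QQ]
  mc_g γ u := by
    simp only [QQ, SemidirectProduct.mul_left, SemidirectProduct.mul_right, SemidirectProduct.left_inl, SemidirectProduct.right_inl, mul_one, map_mul, cl_mul]
    congr 1
    have : (ph (-γ.right.toAdd)) ((Crystal.matAction 12 holM holM_pow γ.right) (gl u)) = ph (-γ.right.toAdd) (ph γ.right.toAdd (gl u)) := rfl
    rw [this, ← ph_add]
    simp [ph, cl_gl]
  jc_t γ := by simp [QQ, tauG]; ring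
  mc_t γ := by
    simp only [QQ, tauG, SemidirectProduct.mul_left, SemidirectProduct.mul_right, SemidirectProduct.left_inr, SemidirectProduct.right_inr, mul_one, map_one, toAdd_mul, toAdd_ofAdd]
    have : -(γ.right.toAdd + (-1)) = 1 + (- γ.right.toAdd) := by ring
    rw [this, ph_add]
    rw [← gl_cl (ph (-γ.right.toAdd) γ.left), ph_gl, cl_gl, cl_gl]
  jc_one := by simp
  mc_one := by simp [cl]
  inj a b h1 h2 := by
    have h1' : a.right = b.right := by
      have := neg_injective h1
      exact this
    apply SemidirectProduct.ext
    · rw [h1'] at h2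
      have := congrArg gl h2
      rw [gl_cl, gl_cl] at this
      exact (ph _).injective this
    · exact h1'

end Z12

set_option linter.unusedSectionVars false
set_option linter.unusedVariables false
set_option linter.unusedSimpArgs false
namespace Z12
open CategoryTheory

/-- Computing the homology of a short complex of modules by a map to a group. -/
theorem homology_equiv {k : Type} [CommRing k] (S : ShortComplex (ModuleCat.{0} k)) {A : Type} [AddCommGroup A] [Module k A] (φ : S.X₂ →ₗ[k] A)
    (h0 : ∀ x, φ (S.f x) = 0) (h1 : ∀ a, ∃ x, S.g x = 0 ∧ φ x = a)
    (h2 : ∀ x, S.g x = 0 → φ x = 0 → ∃ y, S.f y = x) : Nonempty (S.homology ≃+ A) := by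
  let e1 := S.moduleCatHomologyIso.toLinearEquiv.toAddEquiv
  let ψ : LinearMap.ker S.g.hom →ₗ[k] A := φ.comp (LinearMap.ker S.g.hom).subtype
  have hs : Function.Surjective ψ := fun a => by
    obtain ⟨x, hx, hx'⟩ := h1 a
    exact ⟨⟨x, hx⟩, hx'⟩
  have hk : LinearMap.ker ψ = LinearMap.range S.moduleCatToCycles := by
    apply le_antisymm
    · rintro ⟨x, hx⟩ hx'
      obtain ⟨y, hy⟩ := h2 x hx hx'
      exact ⟨y, Subtype.ext hy⟩
    · rintro _ ⟨y, rfl⟩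
      exact h0 y
  let e2 : (LinearMap.ker S.g.hom ⧸ LinearMap.range S.moduleCatToCycles) ≃ₗ[k] A :=
    (Submodule.quotEquivOfEq _ _ hk.symm).trans (ψ.quotKerEquivOfSurjective hs)
  exact ⟨e1.trans e2.toAddEquiv⟩

section res
variable (k : Type) [CommRing k] (G : Type) [Group G]

abbrev FF (ι : Type) := (ι × G) →₀ k

noncomputable def lact (ι : Type) : Representation k G (FF k G ι) where
  toFun h := Finsupp.lmapDomain k k (fun p : ι × G => (p.1, h * p.2))
  map_one' := by
    refine Finsupp.lhom_ext fun p c => ?_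
    simp [Finsupp.lmapDomain_apply, Finsupp.mapDomain_single]
  map_mul' a b := by
    refine Finsupp.lhom_ext fun p c => ?_
    simp [Finsupp.lmapDomain_apply, Finsupp.mapDomain_single, mul_assoc]

variable {k G}
theorem lact_single {ι : Type} (h : G) (i : ι) (g : G) (c : k) :
    lact k G ι h (Finsupp.single (i, g) c) = Finsupp.single (i, h * g) c := by
  simp [lact, Finsupp.lmapDomain_apply, Finsupp.mapDomain_single]
variable (k G)

noncomputable abbrev FR (ι : Type) : Rep.{0} k G := Rep.of (lact k G ι)

noncomputable def liftI {ι : Type} (A : Rep.{0} k G) (f : ι → A) : (lact k G ι).IntertwiningMap A.ρ :=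
  (Finsupp.linearCombination k (fun p : ι × G => A.ρ p.2 (f p.1))).intertwiningMap_of_isIntertwiningMap (lact k G ι) A.ρ (by
    intro g v
    have : (Finsupp.linearCombination k (fun p : ι × G => A.ρ p.2 (f p.1))) ∘ₗ lact k G ι g =
        A.ρ g ∘ₗ (Finsupp.linearCombination k (fun p : ι × G => A.ρ p.2 (f p.1))) := by
      refine Finsupp.lhom_ext fun p c => ?_
      obtain ⟨i, h⟩ := p
      simp [lact_single]
    exact LinearMap.congr_fun this v)

noncomputable def liftR {ι : Type} (A : Rep.{0} k G) (f : ι → A) : FR k G ι ⟶ A := Rep.ofHom (liftI k G A f)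

theorem liftR_one {ι : Type} (A : Rep.{0} k G) (f : ι → A) (i : ι) :
    (liftR k G A f).hom (Finsupp.single (i, 1) 1) = f i := by
  change Finsupp.linearCombination k _ _ = _
  simp

theorem FR_ext {ι : Type} (A : Rep.{0} k G) (f g : FR k G ι ⟶ A)
    (h : ∀ i, f.hom (Finsupp.single (i, 1) 1) = g.hom (Finsupp.single (i, 1) 1)) : f = g := by
  apply Rep.hom_ext
  apply Representation.IntertwiningMap.toLinearMap_injective
  refine Finsupp.lhom_ext fun p c => ?_
  obtain ⟨i, γ⟩ := p
  have e : (Finsupp.single (i, γ) c : FF k G ι) = c • lact k G ι γ (Finsupp.single (i, 1) 1) := by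
    rw [lact_single]; simp
  rw [e, map_smul, map_smul]
  congr 1
  have h1 := Rep.hom_comm_apply f γ (Finsupp.single (i, 1) 1)
  have h2 := Rep.hom_comm_apply g γ (Finsupp.single (i, 1) 1)
  exact h1.trans ((congrArg _ (h i)).trans h2.symm)

theorem FR_proj (ι : Type) : Projective (FR k G ι) where
  factors {E X} f e he := by
    have hs := (Rep.epi_iff_surjective e).1 he
    choose s hs using hs
    refine ⟨liftR k G E (fun i => s (f.hom (Finsupp.single (i, 1) 1))), ?_⟩
    apply FR_ext
    intro i
    rw [Rep.hom_comp, Representation.IntertwiningMap.comp_apply, liftR_one, hs]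

/-- A free resolution given concretely. -/
structure RD where
  ι : ℕ → Type
  D : ∀ n, FF k G (ι (n+1)) →ₗ[k] FF k G (ι n)
  D_act : ∀ n g v, D n (lact k G _ g v) = lact k G _ g (D n v)
  DD : ∀ n v, D n (D (n+1) v) = 0
  ex : ∀ n v, D n v = 0 → ∃ w, D (n+1) w = v
  ε : FF k G (ι 0) →ₗ[k] k
  ε_act : ∀ g v, ε (lact k G _ g v) = ε v
  εD : ∀ v, ε (D 0 v) = 0
  ex0 : ∀ v, ε v = 0 → ∃ w, D 0 w = v
  ε_surj : Function.Surjective ε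

variable {k G} (R : RD k G)

noncomputable def RD.d (n : ℕ) : FR k G (R.ι (n+1)) ⟶ FR k G (R.ι n) :=
  Rep.ofHom ((R.D n).intertwiningMap_of_isIntertwiningMap _ _ (R.D_act n))

theorem RD.d_apply (n : ℕ) (v : FF k G (R.ι (n+1))) : (R.d n).hom v = R.D n v := rfl

noncomputable def RD.e : FR k G (R.ι 0) ⟶ Rep.trivial k G k :=
  Rep.ofHom (R.ε.intertwiningMap_of_isIntertwiningMap _ _ (R.ε_act))

theorem RD.e_apply (v : FF k G (R.ι 0)) : (R.e).hom v = R.ε v := rfl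

theorem RD.d_d (n : ℕ) : R.d (n+1) ≫ R.d n = 0 := by
  apply FR_ext
  intro i
  exact R.DD n _

noncomputable def RD.cx : ChainComplex (Rep.{0} k G) ℕ :=
  ChainComplex.of (fun n => FR k G (R.ι n)) R.d R.d_d

theorem RD.cx_d (n : ℕ) : R.cx.d (n+1) n = R.d n := ChainComplex.of_d (fun n => FR k G (R.ι n)) R.d n

theorem RD.d_e : R.cx.d 1 0 ≫ R.e = 0 := by
  rw [RD.cx_d]
  apply FR_ext
  intro i
  exact R.εD _

noncomputable def RD.pi : R.cx ⟶ (ChainComplex.single₀ (Rep.{0} k G)).obj (Rep.trivial k G k) :=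
  (R.cx.toSingle₀Equiv _).symm ⟨R.e, R.d_e⟩

theorem RD.qi : QuasiIso R.pi where
  quasiIsoAt m := by
    cases m with
    | zero =>
      rw [ChainComplex.quasiIsoAt₀_iff, ShortComplex.quasiIso_iff_of_zeros' _ rfl rfl rfl]
      constructor
      · apply (forget₂ _ (ModuleCat k)).reflects_exact_of_faithful
        rw [ShortComplex.moduleCat_exact_iff]
        intro x hx
        obtain ⟨w, hw⟩ := R.ex0 x (by exact hx)
        refine ⟨w, ?_⟩
        rw [← hw]
        exact congrArg (fun (y : FR k G (R.ι 1) ⟶ FR k G (R.ι 0)) => y.hom w) (R.cx_d 0)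
      · rw [Rep.epi_iff_surjective]
        exact R.ε_surj
    | succ m =>
      rw [quasiIsoAt_iff_exactAt' (hL := ChainComplex.exactAt_succ_single_obj ..),
          HomologicalComplex.exactAt_iff' _ (m + 2) (m + 1) m (by simp) (by simp)]
      apply (forget₂ _ (ModuleCat k)).reflects_exact_of_faithful
      rw [ShortComplex.moduleCat_exact_iff]
      intro x hx
      obtain ⟨w, hw⟩ := R.ex m x (((congrArg (fun (y : FR k G (R.ι (m+1)) ⟶ FR k G (R.ι m)) => y.hom x) (R.cx_d m)).symm).trans hx)
      refine ⟨w, ?_⟩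
      rw [← hw]
      exact congrArg (fun (y : FR k G (R.ι (m+2)) ⟶ FR k G (R.ι (m+1))) => y.hom w) (R.cx_d (m+1))

noncomputable def RD.pr : ProjectiveResolution (Rep.trivial k G k) where
  complex := R.cx
  projective _ := FR_proj k G _
  π := R.pi
  quasiIso := R.qi

noncomputable def RD.ev {n : ℕ} (f : R.ι n → k) : FF k G (R.ι n) →ₗ[k] k :=
  Finsupp.linearCombination k (fun p => f p.1)

noncomputable def RD.δ {n : ℕ} (f : R.ι n → k) : R.ι (n+1) → k :=
  fun i => R.ev f (R.D n (Finsupp.single (i, 1) 1))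

theorem RD.compute (n : ℕ) {A : Type} [AddCommGroup A] [Module k A] (φ : (R.ι (n+1) → k) →ₗ[k] A)
    (h0 : ∀ f : R.ι n → k, φ (R.δ f) = 0)
    (h1 : ∀ a, ∃ f, R.δ f = 0 ∧ φ f = a)
    (h2 : ∀ f, R.δ f = 0 → φ f = 0 → ∃ f', R.δ f' = f) :
    Nonempty (groupCohomology (Rep.trivial k G k) (n+1) ≃+ A) := by
  let e1 := (groupCohomologyIso (Rep.trivial k G k) (n+1) R.pr).toLinearEquiv.toAddEquiv
  let K := (R.pr.complex.linearYonedaObj k (Rep.trivial k G k))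
  let e2 := (K.homologyIsoSc' n (n+1) (n+2) (by simp) (by simp)).toLinearEquiv.toAddEquiv
  suffices Nonempty ((K.sc' n (n+1) (n+2)).homology ≃+ A) by
    obtain ⟨e3⟩ := this
    exact ⟨e1.trans (e2.trans e3)⟩
  have hf : ∀ x : FR k G (R.ι n) ⟶ Rep.trivial k G k, (K.sc' n (n+1) (n+2)).f x = (R.d n ≫ x : FR k G (R.ι (n+1)) ⟶ Rep.trivial k G k) := by
    intro x
    exact congrArg (fun y => y ≫ x) (R.cx_d _)
  have hg : ∀ x : FR k G (R.ι (n+1)) ⟶ Rep.trivial k G k, (K.sc' n (n+1) (n+2)).g x = (R.d (n+1) ≫ x : FR k G (R.ι (n+2)) ⟶ Rep.trivial k G k) := by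
    intro x
    exact congrArg (fun y => y ≫ x) (R.cx_d _)
  let res : ∀ m, (FR k G (R.ι m) ⟶ Rep.trivial k G k) →ₗ[k] (R.ι m → k) := fun m =>
    { toFun := fun x i => x.hom (Finsupp.single (i, 1) 1)
      map_smul' := fun _ _ => rfl
      map_add' := fun _ _ => rfl }
  have res_inj : ∀ m x y, res m x = res m y → x = y := fun m x y h => FR_ext k G _ _ _ (fun i => congrFun h i)
  have res_lift : ∀ m f, res m (liftR k G (Rep.trivial k G k) f) = f := fun m f => funext fun i => liftR_one k G _ f i
  have hev : ∀ m (x : FR k G (R.ι m) ⟶ Rep.trivial k G k) v, x.hom v = R.ev (res m x) v := by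
    intro m x v
    have : x = liftR k G (Rep.trivial k G k) (res m x) := res_inj _ _ _ (res_lift _ _).symm
    conv_lhs => rw [this]
    rfl
  have res_d : ∀ m (x : FR k G (R.ι m) ⟶ Rep.trivial k G k), res (m+1) (R.d m ≫ x) = R.δ (res m x) := by
    intro m x
    funext i
    exact hev m x _
  refine homology_equiv _ (φ.comp (res (n+1))) ?_ ?_ ?_
  · intro (x : FR k G (R.ι n) ⟶ Rep.trivial k G k)
    refine (congrArg (fun y => φ (res (n+1) y)) (hf x)).trans ?_
    exact (congrArg φ (res_d n x)).trans (h0 _)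
  · intro a
    obtain ⟨f, hf1, hf2⟩ := h1 a
    refine ⟨liftR k G (Rep.trivial k G k) f, ?_, ?_⟩
    · rw [hg]
      apply res_inj (n+2)
      rw [res_d, res_lift, hf1]
      rfl
    · change φ (res (n+1) _) = a
      rw [res_lift, hf2]
  · intro (x : FR k G (R.ι (n+1)) ⟶ Rep.trivial k G k) hx hx'
    have hx := (hg x).symm.trans hx
    obtain ⟨f', hf'⟩ := h2 (res (n+1) x) ((res_d (n+1) x).symm.trans (congrArg (res (n+2)) hx)) hx'
    refine ⟨liftR k G (Rep.trivial k G k) f', ?_⟩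
    rw [hf]
    apply res_inj (n+1)
    rw [res_d, res_lift, hf']

end res
end Z12

set_option linter.unusedSectionVars false
set_option linter.unusedVariables false
set_option linter.unusedSimpArgs false
namespace Z12

section
variable {G : Type} [Group G] (Q : GD G)

abbrev Idx (n : ℕ) : Type := {I : Fin 64 // qI I ≤ n}

noncomputable def inc (n : ℕ) : FF ℤ G (Idx n) →ₗ[ℤ] VV G :=
  Finsupp.linearCombination ℤ (fun p => Finsupp.single (p.1.1, p.2) 1)

noncomputable def prj (n : ℕ) : VV G →ₗ[ℤ] FF ℤ G (Idx n) :=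
  Finsupp.linearCombination ℤ (fun p => if h : qI p.1 ≤ n then Finsupp.single (⟨p.1, h⟩, p.2) 1 else 0)

theorem inc_single (n : ℕ) (i : Idx n) (γ : G) (c : ℤ) :
    inc n (Finsupp.single (i, γ) c) = Finsupp.single (i.1, γ) c := by
  simp [inc]

theorem prj_single (n : ℕ) (I : Fin 64) (γ : G) (c : ℤ) :
    prj n (Finsupp.single (I, γ) c) = if h : qI I ≤ n then Finsupp.single ((⟨I, h⟩ : Idx n), γ) c else 0 := by
  rw [prj, Finsupp.linearCombination_single]
  by_cases h : qI I ≤ n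
  · rw [dif_pos h, dif_pos h, Finsupp.smul_single, smul_eq_mul, mul_one]
  · rw [dif_neg h, dif_neg h, smul_zero]

theorem prj_inc (n : ℕ) (v : FF ℤ G (Idx n)) : prj n (inc n v) = v := by
  have : (prj n ∘ₗ inc n : FF ℤ G (Idx n) →ₗ[ℤ] FF ℤ G (Idx n)) = LinearMap.id := by
    refine Finsupp.lhom_ext fun p c => ?_
    obtain ⟨⟨I, h⟩, γ⟩ := p
    rw [LinearMap.comp_apply, inc_single, prj_single, dif_pos h]; rfl
  exact LinearMap.congr_fun this v

theorem prj_WW (n : ℕ) (v : VV G) (hv : v ∈ WW G (n+1)) : prj n v = 0 := by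
  rw [prj, Finsupp.linearCombination_apply, Finsupp.sum]
  refine Finset.sum_eq_zero fun p hp => ?_
  have h1 : n + 1 ≤ qI p.1 := (Finsupp.mem_supported ℤ v).1 hv hp
  rw [dif_neg (by omega), smul_zero]

theorem inc_prj (n : ℕ) (v : VV G) : v - inc n (prj n v) ∈ WW G (n+1) := by
  have := WW_le (LinearMap.id - inc n ∘ₗ prj n : VV G →ₗ[ℤ] VV G) 0 (n+1) (fun I γ _ => by
    rw [LinearMap.sub_apply, LinearMap.comp_apply, prj_single]
    split_ifs with h
    · rw [inc_single, LinearMap.id_apply, sub_self]; exact Submodule.zero_mem _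
    · rw [map_zero, sub_zero]; exact single_WW _ _ _ _ (by omega)) v (WW_zero v)
  exact this

theorem mem_of_prj (n : ℕ) (v : VV G) (h : prj n v = 0) : v ∈ WW G (n+1) := by
  have := inc_prj n v
  rwa [h, map_zero, sub_zero] at this

noncomputable def DD (n : ℕ) : FF ℤ G (Idx (n+1)) →ₗ[ℤ] FF ℤ G (Idx n) :=
  prj n ∘ₗ XX Q (n+1) ∘ₗ inc (n+1)

theorem DD_apply (n : ℕ) (v : FF ℤ G (Idx (n+1))) : DD Q n v = prj n (XX Q (n+1) (inc (n+1) v)) := rfl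

theorem DD_prj (n : ℕ) (w : VV G) : DD Q n (prj (n+1) w) = prj n (XX Q (n+1) w) := by
  rw [DD_apply]
  have h := prj_WW n _ (XX_WW Q (n+1) (n+1) _ (inc_prj (n+1) w))
  rw [map_sub, map_sub, sub_eq_zero] at h
  exact h.symm

theorem XX_XX_apply (n : ℕ) (v : VV G) : XX Q n (XX Q (n+1) v) = 0 := by
  have := LinearMap.congr_fun (XX_XX Q n) v
  exact this

theorem DD_DD (n : ℕ) (v) : DD Q n (DD Q (n+1) v) = 0 := by
  rw [DD_apply Q (n+1), DD_prj, XX_XX_apply, map_zero]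

theorem mp_eop (φ : G → G) (s : Fin 64 → ℤ) (v : VV G) : mp φ (eop id s v) = eop id s (mp φ v) := by
  have : (mp φ ∘ₗ eop id s : VV G →ₗ[ℤ] VV G) = eop id s ∘ₗ mp φ := by
    refine VV_ext fun I γ => ?_
    rw [LinearMap.comp_apply, LinearMap.comp_apply, mp_single, eop_single, eop_single, mp_single]
  exact LinearMap.congr_fun this v

theorem mp_XX (n : ℕ) (g : G) (v : VV G) : mp (g * ·) (XX Q n v) = XX Q n (mp (g * ·) v) := by
  have hs : ∀ v : VV G, mp (g * ·) (sV Q v) = sV Q (mp (g * ·) v) := fun v =>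
    opG_mp _ _ _ _ _ (fun s u => by simp only [mul_assoc]) v
  have hb : ∀ v : VV G, mp (g * ·) (bV Q v) = bV Q (mp (g * ·) v) := fun v =>
    opG_mp _ _ _ _ _ (fun s u => by simp only [mul_assoc]) v
  have hA : ∀ v : VV G, mp (g * ·) (AV Q v) = AV Q (mp (g * ·) v) := fun v => by
    rw [AV, LinearMap.sub_apply, LinearMap.sub_apply, map_sub, hs]; rfl
  have hp : ∀ (i : ℕ) (v : VV G), mp (g * ·) ((sV Q ^ i : VV G →ₗ[ℤ] VV G) v) = (sV Q ^ i : VV G →ₗ[ℤ] VV G) (mp (g * ·) v) := by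
    intro i
    induction i with
    | zero => intro v; rfl
    | succ i ih => intro v; rw [pow_succ, Module.End.mul_apply, Module.End.mul_apply, ih, hs]
  have hN : ∀ v : VV G, mp (g * ·) (NV Q v) = NV Q (mp (g * ·) v) := fun v => by
    rw [NV, LinearMap.sum_apply, LinearMap.sum_apply, map_sum]
    exact Finset.sum_congr rfl fun i _ => hp i v
  unfold XX
  split_ifs
  · simp only [LinearMap.add_apply, LinearMap.sub_apply, Module.End.mul_apply, map_add, map_sub, hb, hA, hN, pe, po, mp_eop]
  · simp only [LinearMap.add_apply, LinearMap.sub_apply, Module.End.mul_apply, map_add, map_sub, hb, hA, hN, pe, po, mp_eop]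

theorem inc_act (n : ℕ) (g : G) (v : FF ℤ G (Idx n)) : inc n (lact ℤ G _ g v) = mp (g * ·) (inc n v) := by
  have : (inc n ∘ₗ lact ℤ G _ g : FF ℤ G (Idx n) →ₗ[ℤ] VV G) = mp (g * ·) ∘ₗ inc n := by
    refine Finsupp.lhom_ext fun p c => ?_
    obtain ⟨i, γ⟩ := p
    rw [LinearMap.comp_apply, LinearMap.comp_apply, lact_single, inc_single, inc_single, mp_single]
  exact LinearMap.congr_fun this v

theorem prj_act (n : ℕ) (g : G) (v : VV G) : prj n (mp (g * ·) v) = lact ℤ G _ g (prj n v) := by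
  have : (prj n ∘ₗ mp (g * ·) : VV G →ₗ[ℤ] FF ℤ G (Idx n)) = lact ℤ G _ g ∘ₗ prj n := by
    refine Finsupp.lhom_ext fun p c => ?_
    obtain ⟨I, γ⟩ := p
    rw [LinearMap.comp_apply, LinearMap.comp_apply, mp_single, prj_single, prj_single]
    split_ifs with h
    · rw [lact_single]
    · rw [map_zero]
  exact LinearMap.congr_fun this v

variable {Q}

theorem DD_ex (K : GC Q) (n : ℕ) (v) (h : DD Q n v = 0) : ∃ w, DD Q (n+1) w = v := by
  have h1 := mem_of_prj n _ h
  obtain ⟨y, hy⟩ := exact_main K (n+1) (inc (n+1) v) h1 (EE_WW K _ (WW_mono (by omega) h1))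
  refine ⟨prj (n+2) y, ?_⟩
  rw [DD_prj]
  have h2 := prj_WW (n+1) _ hy
  rw [map_sub, sub_eq_zero, prj_inc] at h2
  exact h2.symm

noncomputable def eps : FF ℤ G (Idx 0) →ₗ[ℤ] ℤ := Finsupp.linearCombination ℤ (fun _ => (1 : ℤ))

theorem eps_single (i : Idx 0) (γ : G) (c : ℤ) : eps (Finsupp.single (i, γ) c) = c := by
  simp [eps]

theorem eps_EE (K : GC Q) (v : FF ℤ G (Idx 0)) (j : ZMod 12) : NN (EE K (inc 0 v)) j = eps v := by
  have : (LinearMap.proj j ∘ₗ NN ∘ₗ EE K ∘ₗ inc 0 : FF ℤ G (Idx 0) →ₗ[ℤ] ℤ) = eps := by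
    refine Finsupp.lhom_ext fun p c => ?_
    obtain ⟨⟨I, h⟩, γ⟩ := p
    have hI : I = 0 := (q_zero I).1 (by omega)
    rw [eps_single]
    simp only [LinearMap.comp_apply, inc_single, EE_single, hI, if_true, LinearMap.proj_apply, map_smul, Pi.smul_apply]
    rw [NN_apply]
    generalize K.jc γ = x
    have : ∀ x : ZMod 12, (Pi.single x (1:ℤ) : ZMod 12 → ℤ) 0 + (Pi.single x (1:ℤ) : ZMod 12 → ℤ) 1 + (Pi.single x (1:ℤ) : ZMod 12 → ℤ) 2 + (Pi.single x (1:ℤ) : ZMod 12 → ℤ) 3 + (Pi.single x (1:ℤ) : ZMod 12 → ℤ) 4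
       + (Pi.single x (1:ℤ) : ZMod 12 → ℤ) 5 + (Pi.single x (1:ℤ) : ZMod 12 → ℤ) 6 + (Pi.single x (1:ℤ) : ZMod 12 → ℤ) 7 + (Pi.single x (1:ℤ) : ZMod 12 → ℤ) 8 + (Pi.single x (1:ℤ) : ZMod 12 → ℤ) 9
       + (Pi.single x (1:ℤ) : ZMod 12 → ℤ) 10 + (Pi.single x (1:ℤ) : ZMod 12 → ℤ) 11 = 1 := by decide +kernel
    rw [this]; simp
  exact LinearMap.congr_fun this v

theorem eps_DD (K : GC Q) (v) : eps (DD Q 0 v) = 0 := by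
  rw [← eps_EE K _ 0, DD_apply]
  have h := EE_WW K _ (inc_prj 0 (XX Q (0+1) (inc (0+1) v)))
  rw [map_sub, sub_eq_zero] at h
  rw [← h]
  have h2 := EE_X K 0 (XX Q (0+1) (inc (0+1) v))
  rw [XX_XX_apply, map_zero, if_pos rfl] at h2
  rw [← h2]; rfl

theorem DD_ex0 (K : GC Q) (v) (h : eps v = 0) : ∃ w, DD Q 0 w = v := by
  obtain ⟨y, hy⟩ := exact_main K 0 (inc 0 v) (WW_zero _) (by
    rw [EE_X, if_pos rfl]
    funext j
    rw [eps_EE, h]; rfl)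
  refine ⟨prj 1 y, ?_⟩
  rw [DD_prj]
  have h2 := prj_WW 0 _ hy
  rw [map_sub, sub_eq_zero, prj_inc] at h2
  exact h2.symm

noncomputable def theRD (K : GC Q) : RD ℤ G where
  ι := Idx
  D := DD Q
  D_act n g v := by
    rw [DD_apply, DD_apply, inc_act, ← mp_XX, prj_act]
  DD := DD_DD Q
  ex := DD_ex K
  ε := eps
  ε_act g v := by
    have : (eps ∘ₗ lact ℤ G _ g : FF ℤ G (Idx 0) →ₗ[ℤ] ℤ) = eps := by
      refine Finsupp.lhom_ext fun p c => ?_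
      obtain ⟨i, γ⟩ := p
      rw [LinearMap.comp_apply, lact_single, eps_single, eps_single]
    exact LinearMap.congr_fun this v
  εD := eps_DD K
  ex0 := DD_ex0 K
  ε_surj c := ⟨Finsupp.single (⟨0, by decide⟩, 1) c, eps_single _ _ _⟩

end
end Z12

set_option linter.unusedSectionVars false
set_option linter.unusedVariables false
set_option linter.unusedSimpArgs false
namespace Z12

/-! ### sparse integer vectors -/
abbrev SV := List (ℕ × ℤ)

def forceI {β : Type} (c : ℤ) (f : ℤ → β) : β :=
  match c with
  | Int.ofNat n => force n fun n' => f (Int.ofNat n')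
  | Int.negSucc n => force n fun n' => f (Int.negSucc n')
def forceS {β : Type} (l : SV) : (SV → β) → β :=
  List.rec (fun k => k []) (fun x _ ih k => force x.1 fun a => forceI x.2 fun c => ih fun xs' => k ((a, c) :: xs')) l
def forceT {β : Type} (l : List SV) : (List SV → β) → β :=
  List.rec (fun k => k []) (fun x _ ih k => forceS x fun a => ih fun xs' => k (a :: xs')) l
def consS (k : ℕ) (c : ℤ) (l : SV) : SV :=
  match c with
  | Int.ofNat n => Nat.rec l (fun m _ => (k, Int.ofNat (Nat.succ m)) :: l) n
  | Int.negSucc n => (k, Int.negSucc n) :: l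
def addAux (x : ℕ × ℤ) (xs : SV) (r : SV → SV) (l : SV) : SV :=
  List.rec (x :: xs) (fun y ys ih =>
    Bool.rec (Bool.rec (y :: ih) (x :: r (y :: ys)) (Nat.ble x.1 y.1)) (consS x.1 (Int.add x.2 y.2) (r ys))
      (Nat.beq x.1 y.1)) l
def addS (l : SV) : SV → SV :=
  List.rec (fun ys => ys) (fun x xs ih => addAux x xs ih) l
def scS (c : ℤ) (l : SV) : SV :=
  List.rec [] (fun x _ ih => consS x.1 (Int.mul c x.2) ih) l
def rowS (T : List SV) : ℕ → SV :=
  List.rec (fun _ => []) (fun x _ ih n => Nat.rec x (fun m _ => ih m) n) T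
def apS (T : List SV) (v : SV) : SV :=
  List.rec [] (fun x _ ih => forceS (addS (scS x.2 (rowS T x.1)) ih) id) v
def nrmS (v : SV) : SV :=
  List.rec [] (fun x _ ih => forceS (addS (scS 1 [x]) ih) id) v
def qN (k : ℕ) : ℕ := k % 2 + (k / 2 % 2 + (k / 4 % 2 + (k / 8 % 2 + (k / 16 % 2 + k / 32 % 2))))
def trS (r : ℕ) (v : SV) : SV :=
  List.rec [] (fun x _ ih => Bool.rec ih (x :: ih) (Nat.ble (qN x.1) r)) v

/-- pairing of a function with a sparse vector -/
def pr (f : ℕ → ℤ) (v : SV) : ℤ := (v.map fun x => x.2 * f x.1).sum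
def pull (T : List SV) (f : ℕ → ℤ) : ℕ → ℤ := fun k => pr f (rowS T k)

@[simp] theorem pr_nil (f : ℕ → ℤ) : pr f [] = 0 := rfl
@[simp] theorem pr_cons (f : ℕ → ℤ) (x) (v : SV) : pr f (x :: v) = x.2 * f x.1 + pr f v := by simp [pr]

theorem forceIEq {β : Type} (c : ℤ) (f : ℤ → β) : forceI c f = f c := by
  cases c with
  | ofNat n => exact forceEq n (fun n' => f (Int.ofNat n'))
  | negSucc n => exact forceEq n (fun n' => f (Int.negSucc n'))
theorem forceSEq {β : Type} (l : SV) (f : SV → β) : forceS l f = f l := by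
  induction l generalizing f with
  | nil => rfl
  | cons x xs ih =>
    change force x.1 (fun a => forceI x.2 fun c => forceS xs fun xs' => f ((a, c) :: xs')) = _
    rw [forceEq, forceIEq, ih]
theorem forceTEq {β : Type} (l : List SV) (f : List SV → β) : forceT l f = f l := by
  induction l generalizing f with
  | nil => rfl
  | cons x xs ih =>
    change forceS x (fun a => forceT xs fun xs' => f (a :: xs')) = _
    rw [forceSEq, ih]

theorem pr_consS (f : ℕ → ℤ) (k : ℕ) (c : ℤ) (l : SV) : pr f (consS k c l) = c * f k + pr f l := by
  cases c with
  | ofNat n =>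
    cases n with
    | zero => simp [consS]
    | succ m => exact pr_cons f _ _
  | negSucc n => exact pr_cons f _ _

theorem pr_addAux (f : ℕ → ℤ) (x) (xs : SV) (r : SV → SV) (hr : ∀ l, pr f (r l) = pr f xs + pr f l)
    (l : SV) : pr f (addAux x xs r l) = pr f (x :: xs) + pr f l := by
  induction l with
  | nil => simp [addAux]
  | cons y ys ih =>
    have e : addAux x xs r (y :: ys) =
      Bool.rec (Bool.rec (y :: addAux x xs r ys) (x :: r (y :: ys)) (Nat.ble x.1 y.1)) (consS x.1 (Int.add x.2 y.2) (r ys))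
        (Nat.beq x.1 y.1) := rfl
    rw [e]
    cases hb : Nat.beq x.1 y.1 with
    | true =>
      have : x.1 = y.1 := Nat.eq_of_beq_eq_true hb
      have e2 : Int.add x.2 y.2 = x.2 + y.2 := rfl
      simp only [hr, pr_cons, pr_consS, ← this, e2]
      ring
    | false =>
      cases Nat.ble x.1 y.1 with
      | true => simp only [hr, pr_cons]; ring
      | false => simp only [ih, pr_cons]; ring

theorem pr_addS (f : ℕ → ℤ) (a b : SV) : pr f (addS a b) = pr f a + pr f b := by
  induction a generalizing b with
  | nil => simp [addS]
  | cons x xs ih => exact pr_addAux f x xs (addS xs) ih b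

theorem pr_scS (f : ℕ → ℤ) (c : ℤ) (v : SV) : pr f (scS c v) = c * pr f v := by
  induction v with
  | nil => simp [scS]
  | cons x xs ih =>
    have e : scS c (x :: xs) = consS x.1 (c * x.2) (scS c xs) := rfl
    rw [e, pr_consS, ih, pr_cons]; ring

theorem pr_apS (f : ℕ → ℤ) (T : List SV) (v : SV) : pr f (apS T v) = pr (pull T f) v := by
  induction v with
  | nil => rfl
  | cons x xs ih =>
    have e : apS T (x :: xs) = forceS (addS (scS x.2 (rowS T x.1)) (apS T xs)) id := rfl
    rw [e, forceSEq, id, pr_addS, pr_scS, ih, pr_cons]; rfl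

theorem pr_nrmS (f : ℕ → ℤ) (v : SV) : pr f (nrmS v) = pr f v := by
  induction v with
  | nil => rfl
  | cons x xs ih =>
    have e : nrmS (x :: xs) = forceS (addS (scS 1 [x]) (nrmS xs)) id := rfl
    rw [e, forceSEq, id, pr_addS, pr_scS, ih, pr_cons, pr_cons, pr_nil]; ring

theorem pr_trS (f : ℕ → ℤ) (r : ℕ) (v : SV) (h : ∀ k, ¬ qN k ≤ r → f k = 0) : pr f (trS r v) = pr f v := by
  induction v with
  | nil => rfl
  | cons x xs ih =>
    have e : trS r (x :: xs) = Bool.rec (trS r xs) (x :: trS r xs) (Nat.ble (qN x.1) r) := rfl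
    rw [e]
    cases hb : Nat.ble (qN x.1) r with
    | true => simp only [pr_cons, ih]
    | false =>
      have : ¬ qN x.1 ≤ r := fun h => by rw [Nat.ble_eq_true_of_le h] at hb; exact absurd hb (by simp)
      simp only [pr_cons, ih, h _ this, mul_zero, zero_add]

theorem pr_congr (f g : ℕ → ℤ) (v : SV) (h : ∀ x ∈ v, f x.1 = g x.1) : pr f v = pr g v := by
  unfold pr
  congr 1
  exact List.map_congr_left fun x hx => by rw [h x hx]

theorem pr_add (f g : ℕ → ℤ) (v : SV) : pr (fun k => f k + g k) v = pr f v + pr g v := by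
  induction v with
  | nil => rfl
  | cons x xs ih => rw [pr_cons, pr_cons, pr_cons, ih]; ring

theorem pr_mul (c : ℤ) (f : ℕ → ℤ) (v : SV) : pr (fun k => c * f k) v = c * pr f v := by
  induction v with
  | nil => simp
  | cons x xs ih => rw [pr_cons, pr_cons, ih]; ring

theorem pr_zero (f : ℕ → ℤ) (v : SV) (h : ∀ x ∈ v, f x.1 = 0) : pr f v = 0 := by
  rw [pr_congr f (fun k => 0 * 0) v (by simpa using h), pr_mul, zero_mul]

theorem pr_dvd (m : ℤ) (f : ℕ → ℤ) (v : SV) (h : ∀ x ∈ v, m ∣ x.2) : m ∣ pr f v := by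
  induction v with
  | nil => simp
  | cons x xs ih =>
    rw [pr_cons]
    exact dvd_add (Dvd.dvd.mul_right (h x (List.mem_cons_self)) _) (ih fun y hy => h y (List.mem_cons_of_mem _ hy))

/-! ### augmentation -/
def aI (T : List (List ℕ)) (I : ℕ) : SV := (lk T I).map fun n => (n / 16 % 64, ((n % 16 : ℕ) : ℤ) - 8)

section
variable {G : Type} [Group G] (Q : GD G)

noncomputable def Lf (f : ℕ → ℤ) : VV G →ₗ[ℤ] ℤ := Finsupp.linearCombination ℤ (fun p => f p.1.val)

theorem Lf_single (f : ℕ → ℤ) (I : Fin 64) (γ : G) (c : ℤ) : Lf f (Finsupp.single (I, γ) c) = c * f I.val := by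
  simp [Lf]

theorem Lf_op (f : ℕ → ℤ) (T : List (List ℕ)) (g : G → L6 → G) (I : Fin 64) (γ : G) :
    Lf f (opG (items T) g (Finsupp.single (I, γ) 1)) = pr f (aI T I.val) := by
  rw [opG_single, one_smul, map_list_sum, List.map_map, items, List.map_map, pr, aI, List.map_map]
  congr 1
  refine List.map_congr_left fun n _ => ?_
  simp only [Function.comp_apply, Lf_single]
  rfl

theorem Lf_s (S : List SV) (hS : ∀ (f : ℕ → ℤ) (I : Fin 64), pr f (rowS S I.val) = pr f (aI sT I.val)) (f : ℕ → ℤ) (v : VV G) :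
    Lf f (sV Q v) = Lf (pull S f) v := by
  have : (Lf f ∘ₗ sV Q : VV G →ₗ[ℤ] ℤ) = Lf (pull S f) := by
    refine VV_ext fun I γ => ?_
    rw [LinearMap.comp_apply, sV, Lf_op, Lf_single, one_mul, pull, hS]
  exact LinearMap.congr_fun this v

theorem Lf_pow (S : List SV) (hS : ∀ (f : ℕ → ℤ) (I : Fin 64), pr f (rowS S I.val) = pr f (aI sT I.val)) (i : ℕ) (f : ℕ → ℤ) (v : VV G) :
    Lf f ((sV Q ^ i : VV G →ₗ[ℤ] VV G) v) = Lf ((pull S)^[i] f) v := by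
  induction i generalizing v with
  | zero => rfl
  | succ i ih => rw [pow_succ, Module.End.mul_apply, ih, Lf_s Q S hS, Function.iterate_succ_apply']

end

def itN (S : List SV) (n : ℕ) : SV → SV → SV :=
  Nat.rec (fun _ acc => acc) (fun _ ih v acc => forceS (addS v acc) fun acc' => forceS (apS S v) fun v' => ih v' acc') n

theorem pr_itN (S : List SV) (f : ℕ → ℤ) (n : ℕ) (v acc : SV) :
    pr f (itN S n v acc) = pr f acc + ∑ i ∈ Finset.range n, pr ((pull S)^[i] f) v := by
  induction n generalizing v acc with
  | zero => simp [itN]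
  | succ n ih =>
    have e : itN S (n+1) v acc = forceS (addS v acc) fun acc' => forceS (apS S v) fun v' => itN S n v' acc' := rfl
    rw [e, forceSEq, forceSEq, ih, pr_addS, Finset.sum_range_succ']
    simp only [Function.iterate_zero, id, pr_apS, ← Function.iterate_succ_apply' (pull S)]
    ring

def mkS : List SV := (List.range 64).map fun i => nrmS (aI sT i)

theorem rowS_get (T : List SV) (k : ℕ) : rowS T k = T.getD k [] := by
  induction T generalizing k with
  | nil => rfl
  | cons x xs ih =>
    cases k with
    | zero => rfl
    | succ k => exact ih k

theorem mkS_spec (f : ℕ → ℤ) (I : Fin 64) : pr f (rowS mkS I.val) = pr f (aI sT I.val) := by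
  have h : rowS mkS I.val = nrmS (aI sT I.val) := by
    rw [rowS_get, mkS, List.getD_eq_getElem _ _ (by simp)]
    simp
  rw [h, pr_nrmS]

def isNil (v : SV) : Bool := List.rec true (fun _ _ _ => false) v
theorem isNil_eq (v : SV) (h : isNil v = true) : v = [] := by
  cases v with
  | nil => rfl
  | cons x xs => exact absurd h (by simp [isNil])

def decR (l : List ℕ) : SV :=
  List.rec [] (fun x _ ih => (Nat.div x 256, Int.sub (Int.ofNat (Nat.mod x 256)) 128) :: ih) l
def decT (l : List (List ℕ)) : List SV := List.rec [] (fun x _ ih => decR x :: ih) l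

def chkX (Xe Xo : List SV) : Bool :=
  forceT mkS fun S => (List.range 64).all fun I =>
    forceS (nrmS (aI bT I)) fun b => forceS (addS (rowS S I) [(I, -1)]) fun A => forceS (itN S 12 [(I, 1)] []) fun N =>
      if qN I % 2 = 0 then
        isNil (addS (scS (-1) (rowS Xe I)) (addS b N)) && isNil (addS (scS (-1) (rowS Xo I)) (addS b A))
      else
        isNil (addS (scS (-1) (rowS Xe I)) (addS b (scS (-1) A))) && isNil (addS (scS (-1) (rowS Xo I)) (addS b (scS (-1) N)))

theorem pr_of_nil (f : ℕ → ℤ) (a b : SV) (h : isNil (addS (scS (-1) a) b) = true) : pr f a = pr f b := by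
  have := congrArg (pr f) (isNil_eq _ h)
  rw [pr_addS, pr_scS, pr_nil] at this
  linarith

theorem qI_qN (I : Fin 64) : qI I = qN I.val := rfl

section
variable {G : Type} [Group G] (Q : GD G)

theorem Lf_N (f : ℕ → ℤ) (I : Fin 64) (γ : G) :
    Lf f (NV Q (Finsupp.single (I, γ) 1)) = pr f (itN mkS 12 [(I.val, 1)] []) := by
  rw [NV, LinearMap.sum_apply, map_sum, pr_itN, pr_nil, zero_add]
  refine Finset.sum_congr rfl fun i _ => ?_
  rw [Lf_pow Q mkS mkS_spec, Lf_single, pr_cons, pr_nil, add_zero]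

theorem Lf_A (f : ℕ → ℤ) (I : Fin 64) (γ : G) :
    Lf f (AV Q (Finsupp.single (I, γ) 1)) = pr f (addS (rowS mkS I.val) [(I.val, -1)]) := by
  rw [AV, LinearMap.sub_apply, map_sub, Lf_s Q mkS mkS_spec, Module.End.one_apply, Lf_single, Lf_single, pr_addS, pr_cons, pr_nil, pull]
  ring

theorem Lf_b (f : ℕ → ℤ) (I : Fin 64) (γ : G) :
    Lf f (bV Q (Finsupp.single (I, γ) 1)) = pr f (nrmS (aI bT I.val)) := by
  rw [bV, Lf_op, pr_nrmS]

theorem Lf_XX (Xe Xo : List SV) (h : chkX Xe Xo = true) (n : ℕ) (f : ℕ → ℤ) (I : Fin 64) (γ : G) :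
    Lf f (XX Q n (Finsupp.single (I, γ) 1)) = pr f (rowS (if n % 2 = 0 then Xe else Xo) I.val) := by
  unfold chkX at h
  simp only [forceTEq, forceSEq] at h
  have h := List.all_eq_true.1 h I.val (List.mem_range.2 I.2)
  unfold XX
  have hz : (Finsupp.single (I, γ) (0:ℤ) : VV G) = 0 := Finsupp.single_zero _
  by_cases hq : qI I % 2 = 0
  · rw [if_pos (by rw [← qI_qN]; exact hq), Bool.and_eq_true] at h
    by_cases hn : n % 2 = 0
    · rw [if_pos hn, if_pos hn, pr_of_nil f _ _ h.1, pr_addS, ← Lf_b Q f I γ, ← Lf_N Q f I γ]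
      simp only [LinearMap.add_apply, LinearMap.sub_apply, Module.End.mul_apply, pe, po, eop_single, hq, if_true, id,
        hz, mul_zero, zero_smul, one_smul, mul_one, map_zero, map_add, map_sub, sub_zero]
    · rw [if_neg hn, if_neg hn, pr_of_nil f _ _ h.2, pr_addS, ← Lf_b Q f I γ, ← Lf_A Q f I γ]
      simp only [LinearMap.add_apply, LinearMap.sub_apply, Module.End.mul_apply, pe, po, eop_single, hq, if_true, id,
        hz, mul_zero, zero_smul, one_smul, mul_one, map_zero, map_add, map_sub, sub_zero]
  · rw [if_neg (by rw [← qI_qN]; exact hq), Bool.and_eq_true] at h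
    by_cases hn : n % 2 = 0
    · rw [if_pos hn, if_pos hn, pr_of_nil f _ _ h.1, pr_addS, pr_scS, ← Lf_b Q f I γ, ← Lf_A Q f I γ]
      simp only [LinearMap.add_apply, LinearMap.sub_apply, Module.End.mul_apply, pe, po, eop_single, hq, if_false, id,
        hz, mul_zero, zero_smul, one_smul, mul_one, map_zero, map_add, map_sub, add_zero]
      ring
    · rw [if_neg hn, if_neg hn, pr_of_nil f _ _ h.2, pr_addS, pr_scS, ← Lf_b Q f I γ, ← Lf_N Q f I γ]
      simp only [LinearMap.add_apply, LinearMap.sub_apply, Module.End.mul_apply, pe, po, eop_single, hq, if_false, id,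
        hz, mul_zero, zero_smul, one_smul, mul_one, map_zero, map_add, map_sub, add_zero]
      ring

/-! ### extension by zero -/
def ext {n : ℕ} (f : Idx n → ℤ) : ℕ → ℤ := fun k =>
  if h : ∃ hk : k < 64, qI ⟨k, hk⟩ ≤ n then f ⟨⟨k, h.1⟩, h.2⟩ else 0

theorem ext_val {n : ℕ} (f : Idx n → ℤ) (i : Idx n) : ext f i.1.val = f i := by
  rw [ext, dif_pos ⟨i.1.2, i.2⟩]

theorem ext_zero {n : ℕ} (f : Idx n → ℤ) (k : ℕ) (h : ¬ qN k ≤ n) : ext f k = 0 := by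
  rw [ext, dif_neg]
  rintro ⟨h1, h2⟩
  exact h h2

theorem ext_eq {n : ℕ} (f : Idx n → ℤ) (g : ℕ → ℤ) (h1 : ∀ i : Idx n, f i = g i.1.val)
    (h2 : ∀ k, ¬ (k < 64 ∧ qN k ≤ n) → g k = 0) : ext f = g := by
  funext k
  by_cases h : k < 64 ∧ qN k ≤ n
  · rw [ext, dif_pos ⟨h.1, h.2⟩, h1]
  · rw [h2 k h, ext, dif_neg]
    rintro ⟨a, b⟩
    exact h ⟨a, b⟩

variable {Q}
theorem delta_eq (K : GC Q) (Xe Xo : List SV) (h : chkX Xe Xo = true) (n : ℕ) (f : Idx n → ℤ) (i : Idx (n+1)) :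
    (theRD K).δ (n := n) f i = pr (ext f) (rowS (if (n+1) % 2 = 0 then Xe else Xo) i.1.val) := by
  rw [← Lf_XX Q Xe Xo h (n+1) (ext f) i.1 1]
  have h1 : ∀ v : VV G, Finsupp.linearCombination ℤ (fun p : Idx n × G => f p.1) (prj n v) = Lf (ext f) v := by
    intro v
    have : (Finsupp.linearCombination ℤ (fun p : Idx n × G => f p.1) ∘ₗ prj n : VV G →ₗ[ℤ] ℤ) = Lf (ext f) := by
      refine VV_ext fun I γ => ?_
      rw [LinearMap.comp_apply, prj_single, Lf_single, one_mul]
      by_cases hI : qI I ≤ n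
      · rw [dif_pos hI]
        refine Eq.trans (Finsupp.linearCombination_single _ _ _) ?_
        rw [one_smul]
        exact (ext_val f ⟨I, hI⟩).symm
      · rw [dif_neg hI, map_zero, ext_zero f _ hI]
    exact LinearMap.congr_fun this v
  rw [← h1, ← inc_single (n+1) i 1 1]
  rfl
end
end Z12

set_option linter.unusedSectionVars false
set_option linter.unusedVariables false
set_option linter.unusedSimpArgs false
namespace Z12

/-- certificate for one cohomology group -/
structure Cert where
  m : List ℤ
  U : List (List ℕ)
  P : List (List ℕ)
  Q : List (List ℕ)
  Ha : List (List ℕ)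
  Hb : List (List ℕ)
  M : ℤ

def mAt (m : List ℤ) (j : ℕ) : ℤ := m.getD j 0
def scM (m : List ℤ) (v : SV) : SV := v.map fun x => (x.1, - mAt m x.1 * x.2)
def within (r : ℕ) (v : SV) : Bool := v.all fun x => Nat.blt x.1 64 && Nat.ble (qN x.1) r
def suppT (r : ℕ) (T : List SV) : Bool :=
  Nat.ble T.length 64 && (List.range 64).all fun k => Nat.ble (qN k) r || isNil (rowS T k)

def chkR (Xa Xb U P Q Ha Hb : List SV) (m : List ℤ) (M : ℤ) (r I : ℕ) : Bool :=
  (!Nat.ble (qN I) (r+2) || isNil (apS P (rowS Xb I))) &&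
  (!Nat.ble (qN I) (r+1) || (
    isNil (addS (apS Q (rowS Xa I)) (nrmS (scM m (rowS P I)))) &&
    isNil (trS (r+1) (addS (scS M (addS (apS U (rowS P I)) (apS Ha (rowS Xa I))))
      (addS (apS Xb (rowS Hb I)) [(I, -M)]))) &&
    within (r+2) (rowS Hb I)))

def chkU (Xa U P : List SV) (m : List ℤ) (r j : ℕ) : Bool :=
  ((trS r (apS Xa (rowS U j))).all fun x => decide (x.2 % mAt m j = 0)) &&
  within (r+1) (rowS U j) && isNil (addS (apS P (rowS U j)) [(j, -1)])

def chk (Xe Xo : List SV) (r : ℕ) (C : Cert) : Bool :=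
  forceT (if (r+1) % 2 = 0 then Xe else Xo) fun Xa => forceT (if (r+2) % 2 = 0 then Xe else Xo) fun Xb =>
  forceT (decT C.U) fun U => forceT (decT C.P) fun P => forceT (decT C.Q) fun Q => forceT (decT C.Ha) fun Ha =>
  forceT (decT C.Hb) fun Hb =>
    decide (C.M ≠ 0) && Nat.beq C.m.length U.length && suppT (r+1) P && suppT r Q && suppT r Ha &&
    ((List.range U.length).all fun j => chkU Xa U P C.m r j) &&
    ((List.range 64).all fun I => chkR Xa Xb U P Q Ha Hb C.m C.M r I)

def XeC : List (List ℕ) := [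
  [140], [385, 639], [641, 1151], [898, 1668, 2434, 3202], [1153, 2175], [1414, 2694], [898, 1668, 2434, 3202],
  [1921, 3711], [385, 1151, 2177], [900, 1672, 2436, 3204], [1414, 2694], [1921, 2945], [898, 1668, 2434, 3202],
  [2945, 3457, 3713], [3457, 3713], [3980], [895, 1663, 2433, 4225, 8319],
  [897, 1405, 1666, 1921, 2433, 2685, 3201, 3974], [893, 1411, 1658, 2429, 2691, 2945, 3197, 3974], [4993, 9855],
  [898, 1402, 1668, 1921, 2434, 2682, 3202, 3457, 3956], [5505, 10879], [3969, 5761, 11391], [3974],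
  [893, 1411, 1658, 2429, 2691, 2945, 3197, 3713, 3986], [3967, 6529, 9087, 9855], [6785, 9599], [3974],
  [3967, 7297, 10623, 11393], [3962], [3956], [8065, 12159], [383, 897, 1921, 3199, 3711, 4225, 8322],
  [3457, 3956], [897, 1405, 1666, 2433, 2685, 3201, 3713, 3974], [1919, 3967, 5761, 9089, 9857],
  [893, 1411, 1658, 1919, 2429, 2691, 3197, 3974], [2943, 6785, 9601, 10881], [3455, 7297, 9857, 11393], [3962],
  [898, 1402, 1668, 2434, 2682, 2943, 3202, 3956], [1919, 4993, 5761, 9089, 9857, 10625], [5505, 9601, 10881],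
  [], [3457, 3969, 6529, 7295, 10625], [3980], [3974], [8065, 12162],
  [907, 1402, 1674, 2431, 2682, 3205, 3932, 4474, 4748, 4991, 6028, 6266, 7046, 7297, 7546, 7796, 8564, 8838, 9087, 9350, 9855, 10130, 10362, 10625, 11148, 11654, 11898, 12428],
  [7551, 9087, 10113, 12673, 12927], [7807, 9599, 11137, 12929, 13439],
  [3973, 6014, 7037, 7551, 8065, 10109, 11134, 11645, 11903, 13186, 13956, 14722, 15490],
  [6017, 10113, 10623, 11649, 12161, 13441, 14463],
  [3974, 6010, 7037, 7549, 10109, 11130, 11645, 11901, 13702, 14982],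
  [3967, 6014, 7037, 7551, 10109, 11134, 11645, 11903, 12161, 13186, 13956, 14722, 15490], [12159, 14209, 15999],
  [7041, 9599, 11137, 11905, 12159, 12673, 13439, 14465],
  [3978, 6012, 7034, 7550, 10106, 11132, 11642, 11902, 12159, 13188, 13960, 14724, 15492],
  [3974, 6010, 7037, 7549, 10109, 11130, 11645, 11901, 13702, 14982], [14209, 15233],
  [3979, 6014, 7037, 7551, 8063, 10109, 11134, 11645, 11903, 12159, 13186, 13956, 14722, 15490],
  [12161, 15233, 15745, 16001], [15745, 16001], [16268]]
def XoC : List (List ℕ) := [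
  [], [], [], [895, 1665], [], [1407, 2689], [1663, 3201], [], [], [897, 1665, 2431], [1409, 2687], [],
  [2433, 3198], [], [], [], [895, 1663, 2433], [1921, 4479, 8833], [2945, 4735, 9345],
  [1916, 2948, 3452, 4988, 7300, 9084, 9852, 10628], [1921, 3457, 5247, 10369], [],
  [1924, 3716, 3969, 5756, 6532, 7292, 9092, 11388], [6015, 11905], [2945, 3713, 6271, 8575, 9345],
  [1916, 3708, 3967, 5764, 6524, 7300, 9084, 11396], [], [7039, 10111],
  [2940, 3460, 3708, 3967, 4996, 5764, 6524, 9860, 10620, 11396], [7551, 11135, 11903], [7807, 11647], [],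
  [897, 3199], [895, 3457, 4735, 8575, 8831], [1407, 3713, 5247, 8831, 9343],
  [2940, 3460, 3708, 3967, 4996, 5764, 6524, 9860, 10620, 11396], [1919, 2431, 3969, 6271, 9343, 10367], [],
  [1916, 2948, 3452, 4988, 7300, 9084, 9852, 10628], [3967, 7807, 10111, 11903],
  [1407, 2943, 3967, 4481, 5247, 8577, 9343, 10367], [1924, 2940, 3460, 4996, 7292, 9092, 9860, 10620], [],
  [6017, 10113, 11135], [1924, 3716, 3969, 5756, 6532, 7292, 9092, 11388],
  [3969, 7041, 7809, 11137, 11647, 11905], [7553, 11649, 11903], [],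
  [4991, 7297, 8575, 9087, 9855, 10113, 10625, 11903],
  [1924, 2940, 3460, 4996, 7292, 7551, 9092, 9860, 10113, 10620],
  [1924, 3716, 5756, 6532, 7292, 7807, 9092, 11137, 11388], [8065, 10111, 13183, 13953],
  [1924, 3716, 5756, 6017, 6532, 7292, 9092, 10113, 11388, 11649], [11135, 13695, 14977],
  [11647, 12161, 13951, 15489], [], [2948, 3452, 3716, 4988, 5756, 6532, 7041, 9852, 10628, 11137, 11388, 11905],
  [10111, 12159, 13185, 13953, 14719], [13697, 14975], [], [8063, 11649, 12159, 14721, 15486], [], [], []]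
def U1C : List (List ℕ) := [
  ]
def Psi1C : List (List ℕ) := [
  [], [], [], [], [], [], [], [], [], [], [], [], [], [], [], [], [], [], [], [], [], [], [], [], [], [], [], [],
  [], [], [], [], [], [], [], [], [], [], [], [], [], [], [], [], [], [], [], [], [], [], [], [], [], [], [], [],
  [], [], [], [], [], [], [], []]
def Qq1C : List (List ℕ) := [
  [], [], [], [], [], [], [], [], [], [], [], [], [], [], [], [], [], [], [], [], [], [], [], [], [], [], [], [],
  [], [], [], [], [], [], [], [], [], [], [], [], [], [], [], [], [], [], [], [], [], [], [], [], [], [], [], [],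
  [], [], [], [], [], [], [], []]
def Ha1C : List (List ℕ) := [
  [], [], [], [], [], [], [], [], [], [], [], [], [], [], [], [], [], [], [], [], [], [], [], [], [], [], [], [],
  [], [], [], [], [], [], [], [], [], [], [], [], [], [], [], [], [], [], [], [], [], [], [], [], [], [], [], [],
  [], [], [], [], [], [], [], []]
def Hb1C : List (List ℕ) := [
  [129], [1164, 2188], [372, 1164, 2188], [], [372, 628, 1164, 2188], [], [], [], [372, 628, 2188], [], [], [],
  [], [], [], [], [1156, 2180, 4232, 8324], [], [], [], [], [], [], [], [], [], [], [], [], [], [], [],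
  [1156, 2180, 4220, 8324], [], [], [], [], [], [], [], [], [], [], [], [], [], [], [], [], [], [], [], [], [],
  [], [], [], [], [], [], [], [], [], []]
def cert1 : Cert := ⟨[], U1C, Psi1C, Qq1C, Ha1C, Hb1C, 12⟩
def U2C : List (List ℕ) := [
  [897], [8833], [12417], [129], [1153, 2177, 4226, 8321]]
def Psi2C : List (List ℕ) := [
  [897], [], [], [129], [], [129, 382], [129], [], [], [130], [129, 382], [], [129], [], [], [], [], [385],
  [127, 383], [], [386], [], [], [], [127, 383], [], [], [], [], [], [], [], [1153], [], [385], [], [127, 383],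
  [], [], [], [386], [], [], [], [], [], [], [], [641], [], [], [], [], [], [], [], [], [], [], [], [], [], [],
  []]
def Qq2C : List (List ℕ) := [
  [897], [], [], [], [], [], [], [], [], [], [], [], [], [], [], [], [1153], [], [], [], [], [], [], [], [], [],
  [], [], [], [], [], [], [1153], [], [], [], [], [], [], [], [], [], [], [], [], [], [], [], [], [], [], [], [],
  [], [], [], [], [], [], [], [], [], [], []]
def Ha2C : List (List ℕ) := [
  [], [1153, 2177], [383, 1153, 2177], [], [383, 639, 1153, 2177], [], [], [], [383, 639, 2177], [], [], [], [],
  [], [], [], [], [], [], [], [], [], [], [], [], [], [], [], [], [], [], [], [4223], [], [], [], [], [], [], [],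
  [], [], [], [], [], [], [], [], [], [], [], [], [], [], [], [], [], [], [], [], [], [], [], []]
def Hb2C : List (List ℕ) := [
  [], [], [], [], [], [4481, 4735, 5249, 8577, 8830, 10369], [1663, 8319], [], [], [3201, 8318],
  [2687, 4481, 4735, 5249, 8577, 8830, 10369], [], [8319], [], [], [], [], [4479], [8575, 12417], [],
  [4479, 5247, 8833, 10367, 12415], [], [], [], [4737, 6271, 8575, 12418], [], [], [], [], [], [], [], [],
  [12415], [], [], [4737, 8575, 12417], [], [], [], [4479, 8833, 10367, 12415], [], [], [], [], [], [], [], [],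
  [], [], [], [], [], [], [], [], [], [], [], [], [], [], []]
def cert2 : Cert := ⟨[0, 0, 0, 12, 3], U2C, Psi2C, Qq2C, Ha2C, Hb2C, 1⟩
def U3C : List (List ℕ) := [
  [9089], [1666, 2434, 3201, 4481, 4734, 6273, 8578, 8831, 9343, 10369, 12414]]
def Psi3C : List (List ℕ) := [
  [], [], [], [], [], [], [], [], [], [], [], [], [], [], [], [], [], [], [], [382], [], [], [127, 386], [], [],
  [129, 382], [], [], [129], [], [], [], [], [], [], [129], [], [], [382], [], [385], [386], [], [], [127, 386],
  [], [], [], [], [386], [127, 386], [], [127, 386], [], [], [], [127], [], [], [], [], [], [], []]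
def Qq3C : List (List ℕ) := [
  [], [], [], [], [], [], [], [], [], [], [], [], [], [], [], [], [], [], [], [], [], [], [], [], [], [], [], [],
  [], [], [], [], [], [], [], [], [], [], [], [], [], [], [], [], [], [], [], [], [], [], [], [], [], [], [], [],
  [], [], [], [], [], [], [], []]
def Ha3C : List (List ℕ) := [
  [], [], [], [4737, 8575, 12417], [], [1662, 2430, 3199, 4738, 5249, 6271, 8574, 8831, 9345, 12419],
  [1662, 2431, 3199, 4737, 8575, 12417], [], [], [1662, 2430, 3199, 4738, 8574, 12418],
  [1662, 2430, 2687, 3199, 4738, 5249, 6271, 8574, 8831, 9345, 12419], [], [1663, 2431, 3199, 4737, 8575, 12417],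
  [], [], [], [], [4479], [4735], [], [1666, 2434, 3201, 4734, 5247, 6273, 8578, 9343, 12413], [], [], [],
  [6271, 12417], [], [], [], [], [], [], [], [], [12415], [], [], [], [], [], [],
  [1666, 2434, 3201, 4734, 6273, 8578, 9343, 12413], [], [], [], [], [], [], [], [], [], [], [], [], [], [], [],
  [], [], [], [], [], [], [], []]
def Hb3C : List (List ℕ) := [
  [129], [1164, 2188], [372, 1164, 2188], [902], [372, 628, 1164, 2188], [898, 1924, 3716, 4476, 8572], [],
  [1932, 3724, 8564], [372, 628, 2188], [], [], [3468, 3700], [], [8588], [3724, 8564], [],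
  [898, 1156, 1916, 2180, 4232, 8324], [], [],
  [914, 1908, 3700, 4488, 5004, 5764, 7288, 8600, 9868, 10620, 12412], [], [3452, 3716, 5508, 6788, 9596, 10888],
  [878, 1944, 3736, 4472, 4980, 5756, 7316, 8528, 9832, 10640, 12420], [], [],
  [914, 1896, 3688, 4488, 5004, 5776, 7288, 8612, 9880, 10608, 11404, 12412],
  [3464, 3704, 5508, 6788, 9608, 10876], [], [1908, 3700, 5004, 5772, 7284, 8612, 9880, 10612], [], [], [],
  [892, 1156, 1916, 2180, 4220, 8324], [], [], [], [], [3464, 3704, 5508, 6776, 9608, 10876],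
  [914, 1908, 3700, 4488, 5764, 7288, 8600, 9868, 10620, 12412], [], [],
  [878, 1932, 3724, 4472, 5756, 7292, 8564, 10628, 12420], [3452, 3716, 5496, 6788, 9596, 10888], [],
  [878, 1944, 3736, 4472, 4980, 5744, 7316, 8528, 9832, 10640, 12420], [], [], [], [],
  [878, 1932, 3464, 3716, 4472, 5508, 5756, 6776, 7292, 8564, 9608, 10628, 10876, 12420, 13452, 14476],
  [878, 1932, 3464, 3716, 4472, 5508, 5756, 6776, 7292, 8564, 9608, 10628, 10876, 12420, 12660, 13452, 14476],
  [], [878, 1932, 3724, 4472, 5756, 7292, 8564, 10628, 12420, 12660, 12916, 13452, 14476], [], [], [],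
  [12660, 12916, 14476], [], [], [], [], [], [], []]
def cert3 : Cert := ⟨[0, 0], U3C, Psi3C, Qq3C, Ha3C, Hb3C, 12⟩
def U4C : List (List ℕ) := [
  [1919, 3711, 5761, 6527, 7297, 9087, 11393], [13185], [13697], [129], [1665, 3714, 8574, 8830],
  [1153, 1919, 2177, 3711, 4223, 8321, 8577, 8833], [1922, 2942, 3714, 5503, 6786, 8574, 9598, 10881],
  [1150, 1923, 2174, 3720, 4226, 4993, 5759, 7297, 8318, 8566, 8825, 9089, 9854, 12417]]
def Psi4C : List (List ℕ) := [
  [897], [], [], [1153, 1410], [], [124, 1153], [1153, 1410], [], [], [1154, 1412], [124, 1153], [],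
  [1153, 1410], [132], [], [132], [], [1409], [132, 1151, 1405], [], [1410], [], [], [130], [132, 1151, 1405],
  [], [], [130], [], [126], [124], [], [], [], [1409], [], [132, 1151, 1405], [], [], [126], [124, 1410], [132],
  [1665], [], [129], [132], [130], [], [1415, 1921], [], [], [385], [], [641], [126, 385], [], [], [386], [641],
  [], [130, 385], [], [], []]
def Qq4C : List (List ℕ) := [
  [897], [], [], [1153, 1409], [], [1153], [], [], [], [], [], [], [1154, 1410], [], [], [], [1153, 1409], [],
  [], [1157, 1919], [], [1666], [], [], [], [], [1663], [], [1147, 1921], [], [], [], [], [], [], [1147, 1921],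
  [], [1663], [1157, 1919], [], [], [1147, 1921], [1666], [], [], [], [], [], [], [1147, 1663, 1921], [1663], [],
  [], [], [], [], [1157, 1919], [], [], [], [], [], [], []]
def Ha4C : List (List ℕ) := [
  [], [1153, 2177], [383, 1153, 2177], [], [383, 639, 1153, 2177], [], [], [1921, 3713, 8575], [383, 639, 2177],
  [], [], [1919, 2945, 3711, 8577], [1151, 1921, 2175, 4225, 8319], [8577], [3713, 8575], [], [4225], [], [],
  [4993], [], [1919, 2945, 3711, 5505, 6783, 8577, 9601], [5761], [], [], [1921, 3713, 5759, 6529, 8575, 9089],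
  [6785], [], [8577, 9857], [], [], [], [], [], [], [1921, 3713, 5759, 8575, 9089], [], [], [], [], [],
  [7295, 8577, 9857], [1919, 2945, 3711, 6783, 8577, 9601], [], [], [], [], [], [],
  [7295, 8577, 9857, 13441, 14465], [1919, 3711, 5761, 7295, 8578, 9087, 9857, 12671, 13441, 14465], [],
  [1919, 3711, 5761, 7295, 8578, 9087, 9857, 12671, 12927, 13441, 14465], [], [], [],
  [1919, 3711, 5761, 8577, 9087, 12671, 12927, 14465], [], [], [], [], [], [], []]
def Hb4C : List (List ℕ) := [
  [], [], [], [1668, 2434, 3202], [], [2430, 4738, 5250, 6270, 6530, 8574, 8830, 9346], [], [], [], [1668, 3202],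
  [2430, 2686, 4738, 5250, 6270, 6530, 8574, 8830, 9346], [], [1666],
  [1666, 2434, 3201, 4481, 4734, 6273, 6526, 8578, 8831, 9343, 10369], [], [6526], [], [4478],
  [1662, 3199, 4481, 4734, 6273, 6526, 8831, 9343, 10369], [],
  [1666, 2434, 3201, 4479, 4734, 5246, 6273, 8578, 8833, 9343, 10367], [], [],
  [6015, 6527, 7551, 7807, 10113, 11137, 11903], [1662, 3199, 4481, 6271, 6526, 8831, 9343, 10369], [], [],
  [6015, 6527, 7038, 7551, 7807, 10113, 11135, 11903, 13698, 14978], [],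
  [6015, 6529, 7551, 7809, 10111, 11135, 11905, 13698, 14978], [6014, 6530, 10110, 11134, 13698, 14978], [], [],
  [], [], [], [1662, 3199, 4481, 6273, 6526, 8831, 9343, 10369], [], [],
  [6017, 6529, 7553, 7809, 10111, 11137, 11905, 13694, 14974], [4478, 6530, 8834, 10366],
  [6526, 7550, 7806, 10114, 11902, 12418, 13698, 14978], [], [13694, 14974], [],
  [6018, 6526, 7806, 10114, 11138, 13694, 14974], [6017, 6527, 7551, 7807, 10113, 11137, 11903], [], [], [], [],
  [], [], [], [6017, 6529, 7553, 7809, 10111, 11137, 11905, 13186, 13694, 14974], [], [],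
  [6020, 7554, 11140, 11906, 13188, 13690, 13956, 14970, 15490], [14974], [],
  [6019, 6527, 7553, 7807, 10113, 11139, 11905, 13186, 13692, 13954, 14972], [], [], []]
def cert4 : Cert := ⟨[0, 0, 0, 12, 6, 3, 3, 3], U4C, Psi4C, Qq4C, Ha4C, Hb4C, 2⟩
def U5C : List (List ℕ) := [
  [5761, 6017, 7551, 7807, 10113, 11137, 11903],
  [894, 1662, 3199, 4481, 4734, 6273, 7554, 7810, 8578, 8831, 9343, 10110, 10369, 11906, 12414, 13694, 14974]]
def Psi5C : List (List ℕ) := [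
  [], [], [], [], [], [], [], [], [], [], [], [], [], [], [], [], [], [], [], [382], [], [], [129], [], [],
  [127], [], [], [127, 386], [], [], [], [], [], [], [127, 386], [], [], [382], [], [385], [386], [], [], [129],
  [], [], [], [], [386], [129], [], [129], [], [], [], [129, 382], [], [], [], [], [], [], []]
def Qq5C : List (List ℕ) := [
  [], [], [], [], [], [126, 388], [], [385], [], [], [126, 388], [], [], [], [], [130, 380], [], [130, 381], [],
  [], [], [], [], [129, 382], [130, 380], [], [], [129, 382], [], [127, 386], [126, 388], [], [], [126, 388],
  [130, 380], [], [], [], [], [127, 386], [383], [], [], [], [], [130, 380], [129, 382], [], [], [], [],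
  [129, 382], [], [], [], [], [], [130, 380], [], [], [130, 380], [], [], []]
def Ha5C : List (List ℕ) := [
  [], [], [], [], [],
  [898, 1666, 3201, 4735, 5249, 6017, 6271, 7551, 7807, 8577, 8831, 9345, 10113, 11137, 11903], [897], [], [],
  [898, 1666, 3201],
  [898, 1409, 1666, 3201, 4735, 5249, 6017, 6271, 7551, 7807, 8577, 8831, 9345, 10113, 11137, 11903], [],
  [897, 1665], [], [], [6015, 7553, 7809, 10111, 11135, 11905], [],
  [4479, 4737, 6015, 8575, 11135, 12417, 13697, 14977], [4735], [],
  [894, 1662, 3199, 5247, 6273, 7553, 7809, 9343, 10111, 11905, 12415, 13695, 14975], [], [], [6015],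
  [6015, 6271, 11135, 12417, 13697, 14977], [], [], [6015, 7039, 11135, 13697, 14977], [], [7551, 13697, 14977],
  [7551, 7807, 11903, 13697, 14977], [], [], [6017, 11137, 12415, 13695, 14975],
  [4737, 6015, 8575, 11135, 12417, 13697, 14977], [], [], [], [], [6017, 11137, 13695, 14975],
  [894, 1662, 3199, 6273, 7553, 7809, 9343, 10111, 11905, 12415, 13695, 14975], [], [], [13695, 14975], [],
  [7553, 11905, 13695, 14975], [], [], [], [], [], [6015, 11135, 13183, 13697, 14977], [], [14977], [], [], [],
  [6014, 11134, 13183, 13698, 14719, 14978], [], [], [7553, 11905, 13695, 13953, 14975], [], [], []]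
def Hb5C : List (List ℕ) := [
  [129], [1164, 2188], [372, 1164, 2188], [], [372, 628, 1164, 2188], [], [], [2956, 3444, 3724],
  [372, 628, 2188], [902], [898, 1912, 2948, 3452, 3708, 4476, 5768, 6520, 7304, 9080, 11400], [3468, 3700], [],
  [1932, 2932, 3468], [1908, 2956, 3444, 3724], [1916, 3708, 5764, 6524, 7300, 9084, 11396],
  [892, 1156, 1916, 2180, 4232, 8324], [], [],
  [890, 1980, 2924, 3476, 3752, 4488, 5000, 5712, 6580, 7240, 9136, 9864, 11340, 12412, 13688], [],
  [3452, 3716, 5508, 6788, 9596, 10888], [], [], [], [1912, 2956, 3444, 3716, 5768, 6532, 7304, 9092, 11400],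
  [3464, 3704, 5508, 6788, 9608, 10876], [],
  [902, 1876, 2952, 3448, 3676, 4472, 4996, 5816, 6480, 7348, 9044, 9860, 11440, 12420, 13704], [], [],
  [8072, 12164], [898, 1156, 1916, 2180, 4220, 8324], [], [],
  [902, 1856, 2976, 3424, 3680, 4472, 4996, 5812, 6472, 7356, 9048, 9848, 11448, 12420, 13704], [],
  [3464, 3704, 5508, 6776, 9608, 10876],
  [890, 1980, 2924, 3476, 3752, 4488, 4988, 5712, 6580, 7240, 9136, 9864, 11340, 12412, 13688], [], [],
  [902, 1876, 2952, 3448, 3676, 4472, 4996, 5804, 6480, 7336, 9044, 9860, 11440, 12420, 13704],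
  [3452, 3716, 5496, 6788, 9596, 10888], [], [1916, 3708, 5752, 6524, 7300, 9084, 11396],
  [1912, 3704, 5768, 6520, 7304, 9080, 11400, 13692], [], [8060, 12164], [],
  [902, 1884, 2952, 3676, 4472, 4996, 5508, 5796, 6488, 6776, 7328, 9052, 9608, 9860, 10876, 11432, 12420, 13452, 13708, 14476],
  [1948, 2920, 3488, 3708, 5508, 5744, 6544, 6776, 7268, 9092, 9608, 9868, 10876, 11376, 12660, 13452, 13700, 14476],
  [], [1948, 2920, 3480, 3716, 5744, 6544, 7268, 9092, 9868, 11376, 12660, 12916, 13452, 13700, 14476], [], [],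
  [8060, 12164, 15244, 15732, 16012],
  [890, 1984, 2912, 3488, 3744, 4488, 4988, 5708, 6584, 7236, 8060, 9128, 9864, 11336, 12164, 12412, 12660, 12916, 13688, 14476],
  [], [], [8068, 12156, 15756, 15988], [1918, 3710, 5762, 6526, 7298, 8060, 9086, 11394, 12158, 13190, 13690],
  [14220, 15220, 15756], [14196, 15244, 15732, 16012], []]
def cert5 : Cert := ⟨[2, 2], U5C, Psi5C, Qq5C, Ha5C, Hb5C, 12⟩
def U6C : List (List ℕ) := [
  [16257], [129], [1665, 1918, 2942, 3458, 3710, 4996, 5764, 6524, 8830, 9860, 10620, 11396],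
  [2941, 3459, 3709, 4995, 5763, 6525, 9859, 10621, 11395, 13693, 13953, 14721],
  [1153, 2177, 2943, 3457, 3711, 4223, 8321, 8833], [3454, 3714, 5503, 6786, 9598, 10881],
  [2943, 3457, 3711, 4993, 5761, 6527, 9857, 10623, 11393],
  [1150, 1914, 2174, 2926, 3474, 3693, 4226, 5021, 5786, 6501, 8318, 8825, 9090, 9882, 10596, 11419, 12417],
  [2946, 3454, 3714, 4990, 5758, 6530, 9854, 10626, 11390, 13697]]
def Psi6C : List (List ℕ) := [
  [385], [], [], [641, 1154, 1660], [], [641], [641, 1154, 1660], [], [], [642, 1156, 1656], [641], [],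
  [641, 1154, 1660], [], [], [1668], [], [1153], [639, 1149, 1672], [], [1154, 1656], [], [], [1666],
  [639, 1149, 1676], [], [], [1666], [], [1662], [1660], [], [], [1660], [1153], [], [639, 1149, 1672], [], [],
  [1662], [1154, 1656], [], [1409], [], [1665], [1668], [1666], [895, 1665, 2173], [1159, 1637, 1921], [], [],
  [1666], [], [1666, 2177], [], [], [], [897, 1667, 2179], [1666, 2177], [], [897, 1667, 2179], [], [], [129]]
def Qq6C : List (List ℕ) := [
  [385], [], [], [641, 1153, 1662], [], [641], [], [], [], [], [], [], [642, 1154, 1660], [], [], [1665],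
  [641, 1153, 1662], [], [], [645, 892, 1919, 2174], [], [1410], [1666, 2175], [], [], [2177], [1407],
  [895, 2175], [635, 900, 1661, 1921, 2179], [897], [], [894, 1665, 2173], [], [], [],
  [635, 900, 1663, 1921, 2179], [], [1407], [645, 892, 1919, 2174], [], [], [635, 900, 1663, 1921, 2178], [1410],
  [], [1667, 2175], [], [], [894, 1665, 2173], [], [635, 901, 1407, 1663, 1921, 2179], [1407], [], [], [], [],
  [894, 1665, 2173], [645, 890, 1666, 1919, 2171], [], [], [898, 1663, 2179], [], [], [], []]
def Ha6C : List (List ℕ) := [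
  [], [1153, 2177], [383, 1153, 2177], [], [383, 639, 1153, 2177], [], [], [2945, 3455, 3713], [383, 639, 2177],
  [], [], [3457, 3711], [1151, 1921, 2175, 4225, 8319], [1921, 2943, 3457], [1919, 2945, 3455, 3713], [], [4225],
  [], [], [4993], [], [3457, 3711, 5505, 6783, 9601],
  [2945, 3455, 3713, 4993, 9090, 10623, 12673, 12929, 13439, 14463], [], [],
  [4991, 6529, 9087, 10625, 12671, 12927, 13441, 14465], [6785], [],
  [1921, 2942, 3458, 3711, 4991, 5761, 9086, 9857, 10625, 12671, 12927, 13441, 14465], [], [], [8065, 13953], [],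
  [], [], [4991, 9087, 10625, 12671, 12927, 13441, 14465], [], [], [], [], [], [4991, 9087, 10625],
  [3457, 3711, 6783, 9601], [], [2945, 3455, 3713, 4993, 5759, 9090, 10623, 12673, 12929, 13439, 14463], [], [],
  [13953], [], [4991, 9087, 10625, 13441, 14465], [12929], [], [], [], [], [13953, 15233, 15743, 16001],
  [4993, 9089, 10623, 13439, 13953], [], [], [13951, 15745, 15999], [], [14209, 15231, 15745],
  [14207, 15233, 15743, 16001], []]
def Hb6C : List (List ℕ) := [
  [], [], [], [1668, 3202, 4222], [], [1668, 3202, 4222, 4482, 4734, 5250, 8578, 8828, 9086, 10370], [], [], [],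
  [1668, 3202], [1410, 1668, 3202, 4222, 4482, 4734, 5250, 8578, 8828, 9086, 10370], [], [1666], [], [], [9086],
  [], [4478], [1662, 3199, 4481, 4734, 6273, 8831, 9086, 9343, 10369], [],
  [1662, 3199, 4226, 4477, 4738, 5246, 6271, 8574, 8835, 9092, 9345, 10365], [], [],
  [6015, 7551, 7807, 9087, 10113, 11137, 11903], [4222, 4482, 4734, 8578, 8830, 9084, 9342, 10370], [], [],
  [6015, 7038, 7551, 7807, 9087, 10113, 11135, 11903, 13698, 14978],
  [1662, 3199, 4226, 4479, 4738, 6271, 7550, 7806, 8574, 8833, 9345, 10114, 10367, 11902, 12418, 13698, 14978],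
  [6015, 7551, 7809, 9089, 10111, 11135, 11905, 13698, 14978], [6014, 9090, 10110, 11134, 13698, 14978], [], [],
  [1662, 3199, 4226, 4479, 4738, 6271, 8574, 8833, 9090, 9345, 10367], [], [],
  [1662, 3199, 4481, 6273, 8831, 9086, 9343, 10369], [], [],
  [6017, 7553, 7809, 9089, 10111, 11137, 11905, 13694, 14974],
  [1662, 3199, 4226, 4477, 4738, 6271, 8574, 8835, 9092, 9345, 10365], [], [], [13694, 14974], [],
  [6018, 7806, 9086, 10114, 11138, 13694, 14974], [6017, 7551, 7807, 9087, 10113, 11137, 11903],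
  [6018, 7806, 9086, 10114, 11138, 13694, 13956, 14974, 15490], [], [], [],
  [6015, 7551, 7807, 9087, 10113, 11135, 11903, 13182, 13698, 14978], [], [], [], [], [], [], [14974], [],
  [13950, 15486], [], [], []]
def cert6 : Cert := ⟨[0, 12, 6, 6, 3, 3, 3, 3, 3], U6C, Psi6C, Qq6C, Ha6C, Hb6C, 2⟩
def U7C : List (List ℕ) := [
  [5761, 6017, 7551, 7807, 10113, 11137, 11903],
  [894, 1662, 3199, 4481, 4734, 6273, 7554, 7810, 8578, 8831, 9343, 10110, 10369, 11906, 12414, 13694, 14974]]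
def Psi7C : List (List ℕ) := [
  [], [], [], [], [], [], [], [], [], [], [], [], [], [], [], [], [], [], [], [382], [], [], [129], [], [],
  [127], [], [], [127, 386], [], [], [], [], [], [], [127, 386], [], [], [382], [], [385], [386], [], [], [129],
  [], [], [], [], [386], [129], [], [129], [], [], [], [129, 382], [], [], [], [], [], [], []]
def Qq7C : List (List ℕ) := [
  [], [], [], [], [], [126, 388], [], [385], [], [], [126, 388], [], [], [], [], [130, 380], [], [130, 381], [],
  [], [], [], [], [129, 382], [130, 380], [], [], [129, 382], [], [127, 386], [126, 388], [127, 386], [],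
  [126, 388], [130, 380], [], [], [], [], [127, 386], [383], [], [], [], [], [130, 380], [129, 382], [129, 382],
  [], [], [], [], [], [], [], [], [], [], [], [], [129, 382], [], [], []]
def Ha7C : List (List ℕ) := [
  [], [], [], [], [],
  [898, 1666, 3201, 4735, 5249, 6017, 6271, 7551, 7807, 8577, 8831, 9345, 10113, 11137, 11903], [897], [], [],
  [898, 1666, 3201],
  [898, 1409, 1666, 3201, 4735, 5249, 6017, 6271, 7551, 7807, 8577, 8831, 9345, 10113, 11137, 11903], [],
  [897, 1665], [], [], [6015, 7553, 7809, 10111, 11135, 11905], [],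
  [4479, 4737, 6015, 8575, 11135, 12417, 13697, 14977], [4735], [],
  [894, 1662, 3199, 5247, 6273, 7553, 7809, 9343, 10111, 11905, 12415, 13695, 14975], [], [], [6015],
  [6015, 6271, 11135, 12417, 13697, 14977], [], [], [6015, 7039, 11135, 13697, 14977], [], [7551, 13697, 14977],
  [7551, 7807, 11903, 13697, 14977], [6017, 11137, 13185, 13695, 14975], [], [6017, 11137, 12415, 13695, 14975],
  [4737, 6015, 8575, 11135, 12417, 13697, 14977], [], [], [], [], [6017, 11137, 13695, 14975],
  [894, 1662, 3199, 6273, 7553, 7809, 9343, 10111, 11905, 12415, 13695, 14975], [], [], [13695, 14975], [],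
  [7553, 11905, 13695, 14975], [], [6015, 11135, 13697, 14719, 14977], [], [], [], [], [], [14977], [], [], [],
  [], [], [], [6017, 7553, 11137, 11905, 13694, 13953, 14721, 14974], [], [], []]
def Hb7C : List (List ℕ) := [
  [129], [1164, 2188], [372, 1164, 2188], [], [372, 628, 1164, 2188], [], [], [2956, 3444, 3724],
  [372, 628, 2188], [902], [898, 1912, 2948, 3452, 3708, 4476, 5768, 6520, 7304, 9080, 11400], [3468, 3700], [],
  [1932, 2932, 3468], [1908, 2956, 3444, 3724], [1916, 3708, 5764, 6524, 7300, 9084, 11396],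
  [892, 1156, 1916, 2180, 4232, 8324], [], [],
  [890, 1980, 2924, 3476, 3752, 4488, 5000, 5712, 6580, 7240, 9136, 9864, 11340, 12412, 13688], [],
  [3452, 3716, 5508, 6788, 9596, 10888], [], [], [], [1912, 2956, 3444, 3716, 5768, 6532, 7304, 9092, 11400],
  [3464, 3704, 5508, 6788, 9608, 10876], [],
  [902, 1876, 2952, 3448, 3676, 4472, 4996, 5816, 6480, 7348, 9044, 9860, 11440, 12420, 13704], [], [],
  [8072, 12164], [898, 1156, 1916, 2180, 4220, 8324], [], [],
  [902, 1856, 2976, 3424, 3680, 4472, 4996, 5812, 6472, 7356, 9048, 9848, 11448, 12420, 13704], [],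
  [3464, 3704, 5508, 6776, 9608, 10876],
  [890, 1980, 2924, 3476, 3752, 4488, 4988, 5712, 6580, 7240, 9136, 9864, 11340, 12412, 13688], [], [],
  [902, 1876, 2952, 3448, 3676, 4472, 4996, 5804, 6480, 7336, 9044, 9860, 11440, 12420, 13704],
  [3452, 3716, 5496, 6788, 9596, 10888], [], [1916, 3708, 5752, 6524, 7300, 9084, 11396],
  [1912, 3704, 5768, 6520, 7304, 9080, 11400, 13692], [], [8060, 12164], [],
  [902, 1884, 2952, 3676, 4472, 4996, 5508, 5796, 6488, 6776, 7328, 9052, 9608, 9860, 10876, 11432, 12420, 13452, 13708, 14476],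
  [1948, 2920, 3488, 3708, 5508, 5744, 6544, 6776, 7268, 9092, 9608, 9868, 10876, 11376, 12660, 13452, 13700, 14476],
  [], [1948, 2920, 3480, 3716, 5744, 6544, 7268, 9092, 9868, 11376, 12660, 12916, 13452, 13700, 14476], [], [],
  [8060, 12164, 15244, 15732, 16012],
  [890, 1984, 2912, 3488, 3744, 4488, 4988, 5708, 6584, 7236, 8060, 9128, 9864, 11336, 12164, 12412, 12660, 12916, 13688, 14476],
  [], [], [8068, 12156, 15756, 15988], [1918, 3710, 5762, 6526, 7298, 8060, 9086, 11394, 12158, 13190, 13690],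
  [14220, 15220, 15756], [14196, 15244, 15732, 16012], [16257]]
def cert7 : Cert := ⟨[2, 2], U7C, Psi7C, Qq7C, Ha7C, Hb7C, 12⟩
def U8C : List (List ℕ) := [
  [129], [16257], [1665, 1918, 2942, 3458, 3710, 4996, 5764, 6524, 8830, 9860, 10620, 11396],
  [2941, 3459, 3709, 4995, 5763, 6525, 9859, 10621, 11395, 13693, 13953, 14721],
  [1153, 2177, 2943, 3457, 3711, 4223, 8321, 8833], [3454, 3714, 5503, 6786, 9598, 10881],
  [2943, 3457, 3711, 4993, 5761, 6527, 9857, 10623, 11393],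
  [1150, 1914, 2174, 2926, 3474, 3693, 4226, 5021, 5786, 6501, 8318, 8825, 9090, 9882, 10596, 11419, 12417],
  [2946, 3454, 3714, 4990, 5758, 6530, 9854, 10626, 11390, 13697]]
def Psi8C : List (List ℕ) := [
  [129], [], [], [641, 1154, 1660], [], [641], [641, 1154, 1660], [], [], [642, 1156, 1656], [641], [],
  [641, 1154, 1660], [], [], [1668], [], [1153], [639, 1149, 1672], [], [1154, 1656], [], [], [1666],
  [639, 1149, 1676], [], [], [1666], [], [1662], [1660], [], [], [1660], [1153], [], [639, 1149, 1672], [], [],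
  [1662], [1154, 1656], [], [1409], [], [1665], [1668], [1666], [895, 1665, 2173], [1159, 1637, 1921], [], [],
  [1666], [], [1666, 2177], [], [], [], [897, 1667, 2179], [1666, 2177], [], [897, 1667, 2179], [], [], [385]]
def Qq8C : List (List ℕ) := [
  [129], [], [], [641, 1153, 1662], [], [641], [], [], [], [], [], [], [642, 1154, 1660], [], [], [1665],
  [641, 1153, 1662], [], [], [645, 892, 1919, 2174], [], [1410], [1666, 2175], [], [], [2177], [1407],
  [895, 2175], [635, 900, 1661, 1921, 2179], [897], [], [894, 1665, 2173], [], [], [],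
  [635, 900, 1663, 1921, 2179], [], [1407], [645, 892, 1919, 2174], [], [], [635, 900, 1663, 1921, 2178], [1410],
  [], [1667, 2175], [], [], [894, 1665, 2173], [], [635, 901, 1407, 1663, 1921, 2179], [1407], [], [], [], [],
  [894, 1665, 2173], [645, 890, 1666, 1919, 2171], [], [], [898, 1663, 2179], [], [], [], [385]]
def Ha8C : List (List ℕ) := [
  [], [1153, 2177], [383, 1153, 2177], [], [383, 639, 1153, 2177], [], [], [2945, 3455, 3713], [383, 639, 2177],
  [], [], [3457, 3711], [1151, 1921, 2175, 4225, 8319], [1921, 2943, 3457], [1919, 2945, 3455, 3713], [], [4225],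
  [], [], [4993], [], [3457, 3711, 5505, 6783, 9601],
  [2945, 3455, 3713, 4993, 9090, 10623, 12673, 12929, 13439, 14463], [], [],
  [4991, 6529, 9087, 10625, 12671, 12927, 13441, 14465], [6785], [],
  [1921, 2942, 3458, 3711, 4991, 5761, 9086, 9857, 10625, 12671, 12927, 13441, 14465], [], [], [8065, 13953], [],
  [], [], [4991, 9087, 10625, 12671, 12927, 13441, 14465], [], [], [], [], [], [4991, 9087, 10625],
  [3457, 3711, 6783, 9601], [], [2945, 3455, 3713, 4993, 5759, 9090, 10623, 12673, 12929, 13439, 14463], [], [],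
  [13953], [], [4991, 9087, 10625, 13441, 14465], [12929], [], [], [], [], [13953, 15233, 15743, 16001],
  [4993, 9089, 10623, 13439, 13953], [], [], [13951, 15745, 15999], [], [14209, 15231, 15745],
  [14207, 15233, 15743, 16001], []]
def Hb8C : List (List ℕ) := [
  [], [], [], [1668, 3202, 4222], [], [1668, 3202, 4222, 4482, 4734, 5250, 8578, 8828, 9086, 10370], [], [], [],
  [1668, 3202], [1410, 1668, 3202, 4222, 4482, 4734, 5250, 8578, 8828, 9086, 10370], [], [1666], [], [], [9086],
  [], [4478], [1662, 3199, 4481, 4734, 6273, 8831, 9086, 9343, 10369], [],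
  [1662, 3199, 4226, 4477, 4738, 5246, 6271, 8574, 8835, 9092, 9345, 10365], [], [],
  [6015, 7551, 7807, 9087, 10113, 11137, 11903], [4222, 4482, 4734, 8578, 8830, 9084, 9342, 10370], [], [],
  [6015, 7038, 7551, 7807, 9087, 10113, 11135, 11903, 13698, 14978],
  [1662, 3199, 4226, 4479, 4738, 6271, 7550, 7806, 8574, 8833, 9345, 10114, 10367, 11902, 12418, 13698, 14978],
  [6015, 7551, 7809, 9089, 10111, 11135, 11905, 13698, 14978], [6014, 9090, 10110, 11134, 13698, 14978], [], [],
  [1662, 3199, 4226, 4479, 4738, 6271, 8574, 8833, 9090, 9345, 10367], [], [],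
  [1662, 3199, 4481, 6273, 8831, 9086, 9343, 10369], [], [],
  [6017, 7553, 7809, 9089, 10111, 11137, 11905, 13694, 14974],
  [1662, 3199, 4226, 4477, 4738, 6271, 8574, 8835, 9092, 9345, 10365], [], [], [13694, 14974], [],
  [6018, 7806, 9086, 10114, 11138, 13694, 14974], [6017, 7551, 7807, 9087, 10113, 11137, 11903],
  [6018, 7806, 9086, 10114, 11138, 13694, 13956, 14974, 15490], [], [], [],
  [6015, 7551, 7807, 9087, 10113, 11135, 11903, 13182, 13698, 14978], [], [], [], [], [], [], [14974], [],
  [13950, 15486], [], [], []]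
def cert8 : Cert := ⟨[12, 12, 6, 6, 3, 3, 3, 3, 3], U8C, Psi8C, Qq8C, Ha8C, Hb8C, 2⟩
def Xe : List SV := decT XeC
def Xo : List SV := decT XoC
set_option maxRecDepth 100000 in
theorem chkX_true : chkX Xe Xo = true := by decide +kernel
set_option maxRecDepth 100000 in
theorem chk1 : chk Xe Xo 0 cert1 = true := by decide +kernel
set_option maxRecDepth 100000 in
theorem chk2 : chk Xe Xo 1 cert2 = true := by decide +kernel
set_option maxRecDepth 100000 in
theorem chk3 : chk Xe Xo 2 cert3 = true := by decide +kernel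
set_option maxRecDepth 100000 in
theorem chk4 : chk Xe Xo 3 cert4 = true := by decide +kernel
set_option maxRecDepth 100000 in
theorem chk5 : chk Xe Xo 4 cert5 = true := by decide +kernel
set_option maxRecDepth 100000 in
theorem chk6 : chk Xe Xo 5 cert6 = true := by decide +kernel
set_option maxRecDepth 100000 in
theorem chk7 : chk Xe Xo 6 cert7 = true := by decide +kernel
set_option maxRecDepth 100000 in
theorem chk8 : chk Xe Xo 7 cert8 = true := by decide +kernel
end Z12

set_option linter.unusedSectionVars false
set_option linter.unusedVariables false
set_option linter.unusedSimpArgs false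
namespace Z12

theorem pr_scM (f : ℕ → ℤ) (m : List ℤ) (v : SV) : pr f (scM m v) = - pr (fun j => mAt m j * f j) v := by
  induction v with
  | nil => rfl
  | cons x xs ih =>
    have e : scM m (x :: xs) = (x.1, - mAt m x.1 * x.2) :: scM m xs := rfl
    rw [e, pr_cons, pr_cons, ih]; ring

theorem within_spec (r : ℕ) (v : SV) (h : within r v = true) : ∀ x ∈ v, x.1 < 64 ∧ qN x.1 ≤ r := by
  intro x hx
  have := List.all_eq_true.1 h x hx
  rw [Bool.and_eq_true] at this
  exact ⟨Nat.le_of_ble_eq_true this.1, Nat.le_of_ble_eq_true this.2⟩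

theorem suppT_spec (r : ℕ) (T : List SV) (h : suppT r T = true) (k : ℕ) (hk : ¬ (k < 64 ∧ qN k ≤ r)) : rowS T k = [] := by
  unfold suppT at h
  rw [Bool.and_eq_true] at h
  by_cases h1 : k < 64
  · have := List.all_eq_true.1 h.2 k (List.mem_range.2 h1)
    rw [Bool.or_eq_true] at this
    rcases this with h2 | h2
    · exact absurd ⟨h1, Nat.le_of_ble_eq_true h2⟩ hk
    · exact isNil_eq _ h2
  · rw [rowS_get, List.getD_eq_default]
    have := Nat.le_of_ble_eq_true h.1
    omega

theorem not_ble {a b : ℕ} {c : Bool} (h : (!Nat.ble a b || c) = true) (hab : a ≤ b) : c = true := by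
  rw [Nat.ble_eq_true_of_le hab] at h
  simpa using h

theorem ext_add {n : ℕ} (F F' : Idx n → ℤ) : ext (F + F') = fun k => ext F k + ext F' k := by
  funext k; unfold ext; split_ifs <;> simp
theorem ext_smul {n : ℕ} (c : ℤ) (F : Idx n → ℤ) : ext (c • F) = fun k => c * ext F k := by
  funext k; unfold ext; split_ifs <;> simp

section
variable {G : Type} [Group G] {Q : GD G}

theorem compute_cert (K : GC Q) (Xe Xo : List SV) (hX : chkX Xe Xo = true) (n r : ℕ) (C : Cert) (hc : chk Xe Xo r C = true)
    (hpar : n % 2 = r % 2) (hnr : n = r ∨ (6 ≤ n ∧ 6 ≤ r)) {A : Type} [AddCommGroup A] (π : (ℕ → ℤ) →+ A)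
    (hs : ∀ a, ∃ w, π w = a) (hk : ∀ w, π w = 0 ↔ ∀ j < C.m.length, mAt C.m j ∣ w j) :
    Nonempty (groupCohomology (Rep.trivial ℤ G ℤ) (n+1) ≃+ A) := by
  unfold chk at hc
  simp only [forceTEq] at hc
  have e1 : (if (r+1) % 2 = 0 then Xe else Xo) = (if (n+1) % 2 = 0 then Xe else Xo) := by
    rw [show (r+1) % 2 = (n+1) % 2 by omega]
  have e2 : (if (r+2) % 2 = 0 then Xe else Xo) = (if (n+1+1) % 2 = 0 then Xe else Xo) := by
    rw [show (r+2) % 2 = (n+1+1) % 2 by omega]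
  rw [e1, e2] at hc
  have hd1 := delta_eq K Xe Xo hX n
  have hd2 := delta_eq K Xe Xo hX (n+1)
  generalize (if (n+1) % 2 = 0 then Xe else Xo) = Xa at hc hd1
  generalize (if (n+1+1) % 2 = 0 then Xe else Xo) = Xb at hc hd2
  generalize decT C.U = U at hc
  generalize decT C.P = P at hc
  generalize decT C.Q = Qt at hc
  generalize decT C.Ha = Ha at hc
  generalize decT C.Hb = Hb at hc
  simp only [Bool.and_eq_true, decide_eq_true_eq] at hc
  obtain ⟨⟨⟨⟨⟨⟨hM, hlen⟩, hP⟩, hQ⟩, hHa⟩, hU⟩, hR⟩ := hc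
  have hlen := Nat.eq_of_beq_eq_true hlen
  have q6 : ∀ k, qN k ≤ 6 := by intro k; unfold qN; omega
  have t0 : ∀ k, qN k ≤ n ↔ qN k ≤ r := by intro k; have := q6 k; omega
  have t1 : ∀ k, qN k ≤ n+1 ↔ qN k ≤ r+1 := by intro k; have := q6 k; omega
  have t2 : ∀ k, qN k ≤ n+1+1 ↔ qN k ≤ r+2 := by intro k; have := q6 k; omega
  have hU' : ∀ j < U.length, (∀ x ∈ trS r (apS Xa (rowS U j)), mAt C.m j ∣ x.2) ∧
      (∀ x ∈ rowS U j, x.1 < 64 ∧ qN x.1 ≤ r+1) ∧ (∀ w, pr w (apS P (rowS U j)) = w j) := by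
    intro j hj
    have h := List.all_eq_true.1 hU j (List.mem_range.2 hj)
    unfold chkU at h
    simp only [Bool.and_eq_true] at h
    refine ⟨fun x hx => ?_, within_spec _ _ h.1.2, fun w => ?_⟩
    · have := List.all_eq_true.1 h.1.1 x hx
      exact Int.dvd_of_emod_eq_zero (of_decide_eq_true this)
    · have := congrArg (pr w) (isNil_eq _ h.2)
      rw [pr_addS, pr_nil, pr_cons, pr_nil] at this
      linarith
  have hU0 : ∀ j, ¬ j < U.length → rowS U j = [] := by
    intro j hj
    rw [rowS_get, List.getD_eq_default]; omega
  have hR' : ∀ I < 64, chkR Xa Xb U P Qt Ha Hb C.m C.M r I = true := fun I hI =>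
    List.all_eq_true.1 hR I (List.mem_range.2 hI)
  -- extension of a coboundary
  have hext : ∀ (f : Idx n → ℤ) (k : ℕ), k < 64 → qN k ≤ n+1 →
      ext (n := n+1) ((theRD K).δ (n := n) f) k = pr (ext f) (rowS Xa k) := by
    intro f k h1 h2
    rw [← hd1 f ⟨⟨k, h1⟩, h2⟩]
    exact ext_val (n := n+1) ((theRD K).δ (n := n) f) ⟨⟨k, h1⟩, h2⟩
  let φ : (Idx (n+1) → ℤ) →ₗ[ℤ] A :=
    { toFun := fun F => π (fun j => pr (ext F) (rowS U j))
      map_add' := fun F F' => by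
        refine Eq.trans (congrArg π ?_) (map_add π _ _)
        funext j
        rw [ext_add, pr_add]; rfl
      map_smul' := fun c F => by
        refine Eq.trans (congrArg π ?_) (map_zsmul π c _)
        funext j
        rw [ext_smul, pr_mul]; rfl }
  have hφ : ∀ F, φ F = π (fun j => pr (ext F) (rowS U j)) := fun _ => rfl
  refine RD.compute (theRD K) n (A := A) φ ?_ ?_ ?_
  · intro (f : Idx n → ℤ)
    refine (hφ _).trans ((hk _).2 fun j hj => ?_)
    rw [hlen] at hj
    obtain ⟨u1, u2, u3⟩ := hU' j hj
    have : pr (ext (n := n+1) ((theRD K).δ (n := n) f)) (rowS U j) = pr (ext f) (trS r (apS Xa (rowS U j))) := by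
      rw [pr_trS _ _ _ (fun k hk => ext_zero f k (by rw [t0]; exact hk)), pr_apS]
      exact pr_congr _ _ _ fun x hx => hext f x.1 (u2 x hx).1 ((t1 _).2 (u2 x hx).2)
    have h2 := pr_dvd (mAt C.m j) (ext f) _ u1
    rw [← this] at h2
    exact h2
  · intro a
    obtain ⟨w, hw⟩ := hs a
    have hf : ext (n := n+1) (fun i => pull P w i.1.val) = pull P w :=
      ext_eq _ _ (fun i => rfl) fun k hk => by
        rw [pull, suppT_spec _ _ hP k (by rw [← t1]; exact hk), pr_nil]
    refine ⟨fun i : Idx (n+1) => pull P w i.1.val, ?_, ?_⟩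
    · funext i
      refine (hd2 _ i).trans ?_
      rw [hf, ← pr_apS]
      have h := hR' i.1.val i.1.2
      unfold chkR at h
      rw [Bool.and_eq_true] at h
      rw [isNil_eq _ (not_ble h.1 ((t2 _).1 i.2))]
      rfl
    · refine (hφ _).trans ?_
      rw [← hw, ← sub_eq_zero, ← map_sub, hk]
      intro j hj
      rw [hlen] at hj
      have : pr (ext (n := n+1) (fun i => pull P w i.1.val)) (rowS U j) = w j := by
        rw [hf, ← pr_apS, (hU' j hj).2.2]
      rw [Pi.sub_apply, this, sub_self]
      exact dvd_zero _
  · intro (f : Idx (n+1) → ℤ) h1 h2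
    have h2 := (hk _).1 ((hφ f).symm.trans h2)
    have h3 : ∀ j, ∃ w, pr (ext f) (rowS U j) = mAt C.m j * w := by
      intro j
      by_cases hj : j < U.length
      · exact h2 j (by rw [hlen]; exact hj)
      · exact ⟨0, by rw [hU0 j hj, pr_nil, mul_zero]⟩
    choose w hw using h3
    have hz : ∀ k, k < 64 → qN k ≤ n+1+1 → pr (ext f) (rowS Xb k) = 0 := by
      intro k a b
      rw [← hd2 f ⟨⟨k, a⟩, b⟩]
      exact congrFun h1 _
    have hf : ext (n := n) (fun i => pull Qt w i.1.val + pull Ha (ext f) i.1.val) = fun k => pull Qt w k + pull Ha (ext f) k :=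
      ext_eq _ _ (fun i => rfl) fun k hk => by
        have hk' : ¬ (k < 64 ∧ qN k ≤ r) := by rw [← t0]; exact hk
        show pr w (rowS Qt k) + pr (ext f) (rowS Ha k) = 0
        rw [suppT_spec _ _ hQ k hk', suppT_spec _ _ hHa k hk', pr_nil, pr_nil, add_zero]
    refine ⟨fun i : Idx n => pull Qt w i.1.val + pull Ha (ext f) i.1.val, ?_⟩
    funext i
    refine (hd1 _ i).trans ?_
    rw [hf, pr_add, ← pr_apS, ← pr_apS]
    have h := hR' i.1.val i.1.2
    unfold chkR at h
    rw [Bool.and_eq_true] at h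
    have h := not_ble h.2 ((t1 _).1 i.2)
    rw [Bool.and_eq_true, Bool.and_eq_true] at h
    obtain ⟨⟨ha, hb⟩, hcc⟩ := h
    have ha := congrArg (pr w) (isNil_eq _ ha)
    rw [pr_addS, pr_nrmS, pr_scM, pr_nil] at ha
    have hb := congrArg (pr (ext f)) (isNil_eq _ hb)
    rw [pr_trS _ _ _ (fun k hk => ext_zero f k (by rw [t1]; exact hk))] at hb
    rw [pr_addS, pr_scS, pr_addS, pr_addS, pr_nil, pr_cons, pr_nil, pr_apS _ U, pr_apS _ Xb] at hb
    have h5 : pr (pull Xb (ext f)) (rowS Hb i.1.val) = 0 := pr_zero _ _ fun x hx =>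
      hz x.1 (within_spec _ _ hcc x hx).1 ((t2 _).2 (within_spec _ _ hcc x hx).2)
    have h6 : pull U (ext f) = fun j => mAt C.m j * w j := funext hw
    rw [h5, h6] at hb
    have h7 : ext f i.1.val = f i := ext_val f i
    have : C.M * (pr w (apS Qt (rowS Xa i.1.val)) + pr (ext f) (apS Ha (rowS Xa i.1.val))) = C.M * f i := by
      rw [← h7]
      have : pr w (apS Qt (rowS Xa i.1.val)) = pr (fun j => mAt C.m j * w j) (rowS P i.1.val) := by linarith
      rw [this]
      simp only at hb
      linarith
    exact mul_left_cancel₀ hM this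
end

theorem forall_lt_len (m : List ℤ) (p : ℕ → Prop) : (∀ j < m.length, p j) ↔ ∀ j : Fin m.length, p j.val :=
  ⟨fun h j => h j.1 j.2, fun h j hj => h ⟨j, hj⟩⟩

end Z12

set_option linter.unusedSectionVars false
set_option linter.unusedVariables false
set_option linter.unusedSimpArgs false
namespace Z12

def p1 : (ℕ → ℤ) →+ PUnit := 0
def p2 : (ℕ → ℤ) →+ ((Fin 3 → ℤ) × ZMod 12 × ZMod 3) where
  toFun w := (fun i => w i.val, (w 3 : ZMod 12), (w 4 : ZMod 3))
  map_zero' := by ext <;> simp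
  map_add' a b := by ext <;> simp
def p3 : (ℕ → ℤ) →+ (Fin 2 → ℤ) where
  toFun w := fun i => w i.val
  map_zero' := by ext; simp
  map_add' a b := by ext; simp
def p4 : (ℕ → ℤ) →+ ((Fin 3 → ℤ) × ZMod 12 × ZMod 6 × (Fin 3 → ZMod 3)) where
  toFun w := (fun i => w i.val, (w 3 : ZMod 12), (w 4 : ZMod 6), fun i => (w (5 + i.val) : ZMod 3))
  map_zero' := by ext <;> simp
  map_add' a b := by ext <;> simp
def p5 : (ℕ → ℤ) →+ (Fin 2 → ZMod 2) where
  toFun w := fun i => (w i.val : ZMod 2)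
  map_zero' := by ext; simp
  map_add' a b := by ext; simp
def p6 : (ℕ → ℤ) →+ (ℤ × ZMod 12 × (Fin 2 → ZMod 6) × (Fin 5 → ZMod 3)) where
  toFun w := (w 0, (w 1 : ZMod 12), fun i => (w (2 + i.val) : ZMod 6), fun i => (w (4 + i.val) : ZMod 3))
  map_zero' := by ext <;> simp
  map_add' a b := by ext <;> simp
def p8 : (ℕ → ℤ) →+ ((Fin 2 → ZMod 12) × (Fin 2 → ZMod 6) × (Fin 5 → ZMod 3)) where
  toFun w := (fun i => (w i.val : ZMod 12), fun i => (w (2 + i.val) : ZMod 6), fun i => (w (4 + i.val) : ZMod 3))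
  map_zero' := by ext <;> simp
  map_add' a b := by ext <;> simp

/-- integer sequence with given initial values -/
def sq (l : List ℤ) : ℕ → ℤ := fun j => l.getD j 0

theorem s2 (a : (Fin 3 → ℤ) × ZMod 12 × ZMod 3) : ∃ w, p2 w = a := by
  obtain ⟨x, y, z⟩ := a
  obtain ⟨y, rfl⟩ := ZMod.intCast_surjective y
  obtain ⟨z, rfl⟩ := ZMod.intCast_surjective z
  refine ⟨sq [x 0, x 1, x 2, y, z], Prod.ext ?_ rfl⟩
  funext i; fin_cases i <;> rfl
theorem s3 (x : Fin 2 → ℤ) : ∃ w, p3 w = x := by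
  refine ⟨sq [x 0, x 1], ?_⟩
  funext i; fin_cases i <;> rfl
theorem s4 (a : (Fin 3 → ℤ) × ZMod 12 × ZMod 6 × (Fin 3 → ZMod 3)) : ∃ w, p4 w = a := by
  obtain ⟨x, y, z, u⟩ := a
  obtain ⟨y, rfl⟩ := ZMod.intCast_surjective y
  obtain ⟨z, rfl⟩ := ZMod.intCast_surjective z
  choose v hv using fun i => ZMod.intCast_surjective (u i)
  refine ⟨sq [x 0, x 1, x 2, y, z, v 0, v 1, v 2], Prod.ext ?_ (Prod.ext rfl (Prod.ext rfl ?_))⟩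
  · funext i; fin_cases i <;> rfl
  · funext i; refine Eq.trans ?_ (hv i); fin_cases i <;> rfl
theorem s5 (x : Fin 2 → ZMod 2) : ∃ w, p5 w = x := by
  choose v hv using fun i => ZMod.intCast_surjective (x i)
  refine ⟨sq [v 0, v 1], ?_⟩
  funext i; rw [← hv]; fin_cases i <;> rfl
theorem s6 (a : ℤ × ZMod 12 × (Fin 2 → ZMod 6) × (Fin 5 → ZMod 3)) : ∃ w, p6 w = a := by
  obtain ⟨x, y, z, u⟩ := a
  obtain ⟨y, rfl⟩ := ZMod.intCast_surjective y
  choose t ht using fun i => ZMod.intCast_surjective (z i)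
  choose v hv using fun i => ZMod.intCast_surjective (u i)
  refine ⟨sq [x, y, t 0, t 1, v 0, v 1, v 2, v 3, v 4], Prod.ext rfl (Prod.ext rfl (Prod.ext ?_ ?_))⟩
  · funext i; refine Eq.trans ?_ (ht i); fin_cases i <;> rfl
  · funext i; refine Eq.trans ?_ (hv i); fin_cases i <;> rfl
theorem s8 (a : (Fin 2 → ZMod 12) × (Fin 2 → ZMod 6) × (Fin 5 → ZMod 3)) : ∃ w, p8 w = a := by
  obtain ⟨y, z, u⟩ := a
  choose s hs using fun i => ZMod.intCast_surjective (y i)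
  choose t ht using fun i => ZMod.intCast_surjective (z i)
  choose v hv using fun i => ZMod.intCast_surjective (u i)
  refine ⟨sq [s 0, s 1, t 0, t 1, v 0, v 1, v 2, v 3, v 4], Prod.ext ?_ (Prod.ext ?_ ?_)⟩
  · funext i; refine Eq.trans ?_ (hs i); fin_cases i <;> rfl
  · funext i; refine Eq.trans ?_ (ht i); fin_cases i <;> rfl
  · funext i; refine Eq.trans ?_ (hv i); fin_cases i <;> rfl

theorem ball_cons (a : ℤ) (m : List ℤ) (w : ℕ → ℤ) :
    (∀ j < (a :: m).length, mAt (a :: m) j ∣ w j) ↔ a ∣ w 0 ∧ ∀ j < m.length, mAt m j ∣ (fun j => w (j+1)) j := by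
  constructor
  · intro h
    exact ⟨h 0 (by simp), fun j hj => h (j+1) (by simpa using hj)⟩
  · rintro ⟨h0, h1⟩ j hj
    cases j with
    | zero => exact h0
    | succ j => exact h1 j (by simpa using hj)

theorem ball_nil (w : ℕ → ℤ) : (∀ j < ([] : List ℤ).length, mAt [] j ∣ w j) ↔ True := by
  simp

theorem zd (n : ℕ) (a : ℤ) : (a : ZMod n) = 0 ↔ (n : ℤ) ∣ a := ZMod.intCast_zmod_eq_zero_iff_dvd a n

theorem k2 (w) : p2 w = 0 ↔ ∀ j < cert2.m.length, mAt cert2.m j ∣ w j := by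
  simp only [cert2, ball_cons, ball_nil, p2, AddMonoidHom.coe_mk, ZeroHom.coe_mk, Prod.mk_eq_zero, funext_iff,
    Fin.forall_fin_succ, Pi.zero_apply, zd, zero_dvd_iff]
  simp [and_assoc]
theorem k3 (w) : p3 w = 0 ↔ ∀ j < cert3.m.length, mAt cert3.m j ∣ w j := by
  simp only [cert3, ball_cons, ball_nil, p3, AddMonoidHom.coe_mk, ZeroHom.coe_mk, Prod.mk_eq_zero, funext_iff,
    Fin.forall_fin_succ, Pi.zero_apply, zd, zero_dvd_iff]
  simp [and_assoc]
theorem k4 (w) : p4 w = 0 ↔ ∀ j < cert4.m.length, mAt cert4.m j ∣ w j := by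
  simp only [cert4, ball_cons, ball_nil, p4, AddMonoidHom.coe_mk, ZeroHom.coe_mk, Prod.mk_eq_zero, funext_iff,
    Fin.forall_fin_succ, Pi.zero_apply, zd, zero_dvd_iff]
  simp [and_assoc]
theorem k5 (w) : p5 w = 0 ↔ ∀ j < cert5.m.length, mAt cert5.m j ∣ w j := by
  simp only [cert5, ball_cons, ball_nil, p5, AddMonoidHom.coe_mk, ZeroHom.coe_mk, Prod.mk_eq_zero, funext_iff,
    Fin.forall_fin_succ, Pi.zero_apply, zd, zero_dvd_iff]
  simp [and_assoc]
theorem k6 (w) : p6 w = 0 ↔ ∀ j < cert6.m.length, mAt cert6.m j ∣ w j := by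
  simp only [cert6, ball_cons, ball_nil, p6, AddMonoidHom.coe_mk, ZeroHom.coe_mk, Prod.mk_eq_zero, funext_iff,
    Fin.forall_fin_succ, Pi.zero_apply, zd, zero_dvd_iff]
  simp [and_assoc]
theorem k7 (w) : p5 w = 0 ↔ ∀ j < cert7.m.length, mAt cert7.m j ∣ w j := by
  simp only [cert7, ball_cons, ball_nil, p5, AddMonoidHom.coe_mk, ZeroHom.coe_mk, Prod.mk_eq_zero, funext_iff,
    Fin.forall_fin_succ, Pi.zero_apply, zd, zero_dvd_iff]
  simp [and_assoc]
theorem k8 (w) : p8 w = 0 ↔ ∀ j < cert8.m.length, mAt cert8.m j ∣ w j := by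
  simp only [cert8, ball_cons, ball_nil, p8, AddMonoidHom.coe_mk, ZeroHom.coe_mk, Prod.mk_eq_zero, funext_iff,
    Fin.forall_fin_succ, Pi.zero_apply, zd, zero_dvd_iff]
  simp [and_assoc]

end Z12

theorem cohomology_of_Z12_orbifold_group :
    Subsingleton (H 1) ∧
    Nonempty (H 2 ≃+ ((Fin 3 → ℤ) × ZMod 12 × ZMod 3)) ∧
    Nonempty (H 3 ≃+ (Fin 2 → ℤ)) ∧
    Nonempty (H 4 ≃+ ((Fin 3 → ℤ) × ZMod 12 × ZMod 6 × (Fin 3 → ZMod 3))) ∧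
    Nonempty (H 5 ≃+ (Fin 2 → ZMod 2)) ∧
    Nonempty (H 6 ≃+ (ℤ × ZMod 12 × (Fin 2 → ZMod 6) × (Fin 5 → ZMod 3))) ∧
    (∀ i, 7 ≤ i → Odd i → Nonempty (H i ≃+ (Fin 2 → ZMod 2))) ∧
    (∀ i, 8 ≤ i → Even i →
      Nonempty (H i ≃+ ((Fin 2 → ZMod 12) × (Fin 2 → ZMod 6) × (Fin 5 → ZMod 3)))) := by
  refine ⟨?_, ?_, ?_, ?_, ?_, ?_, ?_, ?_⟩
  · obtain ⟨e⟩ := Z12.compute_cert Z12.KK Z12.Xe Z12.Xo Z12.chkX_true 0 0 Z12.cert1 Z12.chk1 rfl (Or.inl rfl) Z12.p1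
      (fun a => ⟨0, rfl⟩) (fun w => by simp [Z12.cert1, Z12.p1])
    exact e.toEquiv.subsingleton
  · exact Z12.compute_cert Z12.KK Z12.Xe Z12.Xo Z12.chkX_true 1 1 Z12.cert2 Z12.chk2 rfl (Or.inl rfl) Z12.p2 Z12.s2 Z12.k2
  · exact Z12.compute_cert Z12.KK Z12.Xe Z12.Xo Z12.chkX_true 2 2 Z12.cert3 Z12.chk3 rfl (Or.inl rfl) Z12.p3 Z12.s3 Z12.k3
  · exact Z12.compute_cert Z12.KK Z12.Xe Z12.Xo Z12.chkX_true 3 3 Z12.cert4 Z12.chk4 rfl (Or.inl rfl) Z12.p4 Z12.s4 Z12.k4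
  · exact Z12.compute_cert Z12.KK Z12.Xe Z12.Xo Z12.chkX_true 4 4 Z12.cert5 Z12.chk5 rfl (Or.inl rfl) Z12.p5 Z12.s5 Z12.k5
  · exact Z12.compute_cert Z12.KK Z12.Xe Z12.Xo Z12.chkX_true 5 5 Z12.cert6 Z12.chk6 rfl (Or.inl rfl) Z12.p6 Z12.s6 Z12.k6
  · intro i hi ho
    obtain ⟨n, rfl⟩ : ∃ n, i = n + 1 := ⟨i - 1, by omega⟩
    have ho := Nat.odd_iff.1 ho
    exact Z12.compute_cert Z12.KK Z12.Xe Z12.Xo Z12.chkX_true n 6 Z12.cert7 Z12.chk7 (by omega) (Or.inr (by omega)) Z12.p5 Z12.s5 Z12.k7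
  · intro i hi ho
    obtain ⟨n, rfl⟩ : ∃ n, i = n + 1 := ⟨i - 1, by omega⟩
    have ho := Nat.even_iff.1 ho
    exact Z12.compute_cert Z12.KK Z12.Xe Z12.Xo Z12.chkX_true n 7 Z12.cert8 Z12.chk8 (by omega) (Or.inr (by omega)) Z12.p8 Z12.s8 Z12.k8
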